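/- Let p ≥ √3 and let u be a nonzero global Schwartz solution of the defocusing generalized KdV equation ∂_t u + ∂_x^3 u = ∂_x(|u|^{p-1} u). Then for every function x : ℝ → ℝ, sup_{t ∈ ℝ} ∫_ℝ (x − x(t))² u²(t,x) dx = ∞. -/

import Mathlib

open MeasureTheory Real

namespace GKdV
open Filter Topology

/-! ### Calculus of the nonlinearity -/

lemma hasDerivAt_absF {p : ℝ} (hp : 1 < p) (x : ℝ) :
    HasDerivAt (fun y : ℝ => |y| ^ (p - 1) * y) (p * |x| ^ (p - 1)) x := by
  rcases lt_trichotomy x 0 with hx | hx | hx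
  · have h1 : HasDerivAt (fun y : ℝ => -((-y) ^ p)) (p * |x| ^ (p - 1)) x := by
      have := ((hasDerivAt_neg x).rpow_const (p := p) (Or.inl (by linarith))).neg
      refine this.congr_deriv ?_
      rw [abs_of_neg hx]; ring
    refine h1.congr_of_eventuallyEq ?_
    filter_upwards [eventually_lt_nhds hx] with y hy
    rw [abs_of_neg hy]
    have : (-y) ^ p = (-y) ^ (p - 1) * (-y) := by
      rw [← Real.rpow_add_one (by linarith)]; ring_nf
    rw [this]; ring
  · subst hx
    have h0 : p * |(0:ℝ)| ^ (p - 1) = 0 := by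
      rw [abs_zero, Real.zero_rpow (by linarith), mul_zero]
    rw [h0, hasDerivAt_iff_tendsto_slope]
    have hc : Tendsto (fun y : ℝ => |y| ^ (p - 1)) (𝓝[≠] 0) (𝓝 0) := by
      have : ContinuousAt (fun y : ℝ => |y| ^ (p - 1)) 0 :=
        (continuous_abs.continuousAt).rpow_const (Or.inr (by linarith))
      have h2 := this.tendsto
      simp only [abs_zero] at h2
      rw [Real.zero_rpow (by linarith)] at h2
      exact h2.mono_left nhdsWithin_le_nhds
    refine hc.congr' ?_
    filter_upwards [self_mem_nhdsWithin] with y hy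
    have hy' : y ≠ 0 := hy
    rw [slope_def_field]
    simp only [mul_zero, sub_zero]
    field_simp
  · have h1 : HasDerivAt (fun y : ℝ => y ^ p) (p * |x| ^ (p - 1)) x := by
      have := Real.hasDerivAt_rpow_const (x := x) (p := p) (Or.inl hx.ne')
      rwa [abs_of_pos hx]
    refine h1.congr_of_eventuallyEq ?_
    filter_upwards [eventually_gt_nhds hx] with y hy
    rw [abs_of_pos hy, ← Real.rpow_add_one hy.ne']; ring_nf

lemma absF_mul {p : ℝ} (hp : 1 < p) (y : ℝ) : y * (|y| ^ (p - 1) * y) = |y| ^ (p + 1) := by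
  have h1 : |y| ^ (p + 1) = |y| ^ (p - 1) * |y| ^ (2 : ℝ) := by
    rw [← Real.rpow_add' (abs_nonneg _) (by linarith)]; ring_nf
  have h2 : |y| ^ (2 : ℝ) = y ^ 2 := by
    rw [Real.rpow_two, sq_abs]
  rw [h1, h2]; ring

lemma hasDerivAt_absB {p : ℝ} (hp : 1 < p) (x : ℝ) :
    HasDerivAt (fun y : ℝ => |y| ^ (p + 1)) ((p + 1) * (|x| ^ (p - 1) * x)) x := by
  have := hasDerivAt_abs_rpow x (p := p + 1) (by linarith)
  refine this.congr_deriv ?_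
  rw [show p + 1 - 2 = p - 1 by ring]; ring

lemma one_lt_of_sqrt3 {p : ℝ} (hp : √3 ≤ p) : 1 < p := by
  refine lt_of_lt_of_le ?_ hp
  rw [Real.lt_sqrt] <;> norm_num

/-- All the smooth data attached to a solution of the equation. -/
structure Sol (p : ℝ) (U : ℕ → ℝ → ℝ → ℝ) (F F1 F2 : ℝ → ℝ → ℝ) : Prop where
  hp : √3 ≤ p
  cU : ∀ i, Continuous (fun q : ℝ × ℝ => U i q.1 q.2)
  dU : ∀ i t x, HasDerivAt (fun y => U i t y) (U (i + 1) t x) x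
  eF : ∀ t x, F t x = |U 0 t x| ^ (p - 1) * U 0 t x
  eF1 : ∀ t x, F1 t x = p * |U 0 t x| ^ (p - 1) * U 1 t x
  cF2 : Continuous (fun q : ℝ × ℝ => F2 q.1 q.2)
  dF1 : ∀ t x, HasDerivAt (fun y => F1 t y) (F2 t x) x
  dt0 : ∀ t x, HasDerivAt (fun s => U 0 s x) (- U 3 t x + F1 t x) t
  dt1 : ∀ t x, HasDerivAt (fun s => U 1 s x) (- U 4 t x + F2 t x) t
  dec : ∀ (i k : ℕ) t, ∃ C, ∀ x, |x| ^ k * |U i t x| ≤ C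

lemma smooth_dx {g : ℝ × ℝ → ℝ} (hg : ContDiff ℝ (⊤ : ℕ∞) g) :
    ContDiff ℝ (⊤ : ℕ∞) (fun q : ℝ × ℝ => fderiv ℝ g q (0, 1)) :=
  (hg.fderiv_right (m := (⊤ : ℕ∞)) (by simp)).clm_apply contDiff_const

lemma smooth_dt {g : ℝ × ℝ → ℝ} (hg : ContDiff ℝ (⊤ : ℕ∞) g) :
    ContDiff ℝ (⊤ : ℕ∞) (fun q : ℝ × ℝ => fderiv ℝ g q (1, 0)) :=
  (hg.fderiv_right (m := (⊤ : ℕ∞)) (by simp)).clm_apply contDiff_const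

lemma hasDerivAt_dx {g : ℝ × ℝ → ℝ} (hg : ContDiff ℝ (⊤ : ℕ∞) g) (t x : ℝ) :
    HasDerivAt (fun y => g (t, y)) (fderiv ℝ g (t, x) (0, 1)) x := by
  have h1 : HasFDerivAt g (fderiv ℝ g (t, x)) (t, x) :=
    (hg.differentiable (by simp) (t, x)).hasFDerivAt
  have h2 : HasDerivAt (fun y : ℝ => (t, y)) ((0 : ℝ), (1 : ℝ)) x :=
    (hasDerivAt_const x t).prodMk (hasDerivAt_id x)
  exact h1.comp_hasDerivAt x h2

lemma hasDerivAt_dt {g : ℝ × ℝ → ℝ} (hg : ContDiff ℝ (⊤ : ℕ∞) g) (t x : ℝ) :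
    HasDerivAt (fun s => g (s, x)) (fderiv ℝ g (t, x) (1, 0)) t := by
  have h1 : HasFDerivAt g (fderiv ℝ g (t, x)) (t, x) :=
    (hg.differentiable (by simp) (t, x)).hasFDerivAt
  have h2 : HasDerivAt (fun s : ℝ => (s, x)) ((1 : ℝ), (0 : ℝ)) t :=
    (hasDerivAt_id t).prodMk (hasDerivAt_const t x)
  exact h1.comp_hasDerivAt t h2

/-- symmetry of the mixed derivatives -/
lemma mixed {g : ℝ × ℝ → ℝ} (hg : ContDiff ℝ (⊤ : ℕ∞) g) (q : ℝ × ℝ) :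
    fderiv ℝ (fun r : ℝ × ℝ => fderiv ℝ g r (0, 1)) q (1, 0)
      = fderiv ℝ (fun r : ℝ × ℝ => fderiv ℝ g r (1, 0)) q (0, 1) := by
  have hd : DifferentiableAt ℝ (fderiv ℝ g) q :=
    (hg.fderiv_right (m := (⊤ : ℕ∞)) (by simp)).differentiable (by simp) q
  have e : ∀ v w : ℝ × ℝ, fderiv ℝ (fun r : ℝ × ℝ => fderiv ℝ g r v) q w
      = fderiv ℝ (fderiv ℝ g) q w v := by
    intro v w
    rw [fderiv_clm_apply hd (differentiableAt_const v)]
    simp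
  rw [e, e]
  have hs : IsSymmSndFDerivAt ℝ g q :=
    (hg.contDiffAt).isSymmSndFDerivAt (by simp only [minSmoothness_of_isRCLikeNormedField]; exact WithTop.coe_le_coe.mpr (le_top : (2 : ℕ∞) ≤ ⊤))
  exact hs _ _

/-- iterated `x` derivatives as functions on the plane -/
noncomputable def DX (g : ℝ × ℝ → ℝ) : ℕ → ℝ × ℝ → ℝ
  | 0 => g
  | (n + 1) => fun q => fderiv ℝ (DX g n) q (0, 1)

lemma DX_smooth {g : ℝ × ℝ → ℝ} (hg : ContDiff ℝ (⊤ : ℕ∞) g) (n : ℕ) :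
    ContDiff ℝ (⊤ : ℕ∞) (DX g n) := by
  induction n with
  | zero => exact hg
  | succ n ih => exact smooth_dx ih

lemma DX_iter {g : ℝ × ℝ → ℝ} (hg : ContDiff ℝ (⊤ : ℕ∞) g) (n : ℕ) (t : ℝ) :
    iteratedDeriv n (fun y => g (t, y)) = fun y => DX g n (t, y) := by
  induction n with
  | zero => simp [DX]
  | succ n ih =>
    rw [iteratedDeriv_succ, ih]
    funext y
    exact (hasDerivAt_dx (DX_smooth hg n) t y).deriv

theorem exists_sol
    (p : ℝ) (hp : Real.sqrt 3 ≤ p)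
    (u : ℝ → ℝ → ℝ)
    (hsmooth : ContDiff ℝ (⊤ : ℕ∞) (fun q : ℝ × ℝ => u q.1 q.2))
    (hschwartz : ∀ t : ℝ, ∃ f : SchwartzMap ℝ ℝ, ∀ x : ℝ, u t x = f x)
    (hpde : ∀ t x : ℝ,
      deriv (fun s => u s x) t + iteratedDeriv 3 (fun y => u t y) x
        = deriv (fun y => |u t y| ^ (p - 1) * u t y) x) :
    ∃ (U : ℕ → ℝ → ℝ → ℝ) (F F1 F2 : ℝ → ℝ → ℝ), U 0 = u ∧ Sol p U F F1 F2 := by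
  have hp1 := one_lt_of_sqrt3 hp
  set g : ℝ × ℝ → ℝ := fun q => u q.1 q.2 with hg
  have key : ∀ t x, fderiv ℝ g (t, x) (1, 0) + DX g 3 (t, x)
      = p * |u t x| ^ (p - 1) * DX g 1 (t, x) := by
    intro t x
    have h := hpde t x
    have e1 : deriv (fun s => u s x) t = fderiv ℝ g (t, x) (1, 0) :=
      (hasDerivAt_dt hsmooth t x).deriv
    have e2 : iteratedDeriv 3 (fun y => u t y) x = DX g 3 (t, x) :=
      congrFun (DX_iter hsmooth 3 t) x
    have e3 : deriv (fun y => |u t y| ^ (p - 1) * u t y) x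
        = p * |u t x| ^ (p - 1) * DX g 1 (t, x) :=
      ((hasDerivAt_absF hp1 (u t x)).comp x (hasDerivAt_dx hsmooth t x)).deriv
    rw [e1, e2, e3] at h
    exact h
  set H : ℝ × ℝ → ℝ := fun q => fderiv ℝ g q (1, 0) + DX g 3 q with hH
  have hHs : ContDiff ℝ (⊤ : ℕ∞) H := (smooth_dt hsmooth).add (DX_smooth hsmooth 3)
  refine ⟨fun i t x => DX g i (t, x), fun t x => |u t x| ^ (p - 1) * u t x,
    fun t x => H (t, x), fun t x => fderiv ℝ H (t, x) (0, 1), rfl, ?_⟩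
  refine ⟨hp, ?_, ?_, ?_, ?_, ?_, ?_, ?_, ?_, ?_⟩
  · intro i; exact (DX_smooth hsmooth i).continuous
  · intro i t x; exact hasDerivAt_dx (DX_smooth hsmooth i) t x
  · intro t x; rfl
  · intro t x; exact key t x
  · exact (smooth_dx hHs).continuous
  · intro t x; exact hasDerivAt_dx hHs t x
  · intro t x
    refine (hasDerivAt_dt hsmooth t x).congr_deriv ?_
    simp [hH]
  · intro t x
    refine (hasDerivAt_dt (DX_smooth hsmooth 1) t x).congr_deriv ?_
    have h1 : fderiv ℝ H (t, x) (0, 1)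
        = fderiv ℝ (fun r : ℝ × ℝ => fderiv ℝ g r (1, 0)) (t, x) (0, 1) + DX g 4 (t, x) := by
      have := fderiv_add (((smooth_dt hsmooth).differentiable (by simp)) (t, x))
        (((DX_smooth hsmooth 3).differentiable (by simp)) (t, x))
      have h2 : H = (fun q : ℝ × ℝ => fderiv ℝ g q (1, 0)) + DX g 3 := rfl
      rw [h2, this]; rfl
    rw [h1, ← mixed hsmooth]
    simp [DX]
  · intro i k t
    obtain ⟨f, hf⟩ := hschwartz t
    obtain ⟨C, hC⟩ := f.decay' k i
    refine ⟨C, fun x => ?_⟩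
    have h := hC x
    rw [norm_iteratedFDeriv_eq_norm_iteratedDeriv] at h
    have e : (f.toFun : ℝ → ℝ) = fun y => g (t, y) := by
      funext y; exact (hf y).symm
    rw [e, DX_iter hsmooth] at h
    simpa [Real.norm_eq_abs] using h

end GKdV

open MeasureTheory Real

namespace GKdV
open Filter Topology

/-! ### The slab measure and the compactly supported identity -/

/-- Lebesgue measure on `[a,b] × ℝ`. -/
noncomputable def slab (a b : ℝ) : Measure (ℝ × ℝ) :=
  (volume.restrict (Set.Icc a b)).prod volume

lemma slab_eq (a b : ℝ) :
    slab a b = (volume : Measure (ℝ × ℝ)).restrict (Set.Icc a b ×ˢ Set.univ) := by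
  rw [slab, Measure.volume_eq_prod, ← Measure.prod_restrict, Measure.restrict_univ]

lemma ae_slab (a b : ℝ) : ∀ᵐ z ∂(slab a b), z.1 ∈ Set.Icc a b := by
  rw [slab_eq]
  filter_upwards [ae_restrict_mem (measurableSet_Icc.prod MeasurableSet.univ)] with z hz
  exact hz.1

lemma integrable_slab_of_supp {a b L : ℝ} {g : ℝ → ℝ → ℝ}
    (hg : Continuous (fun q : ℝ × ℝ => g q.1 q.2)) (h0 : ∀ t x, L < |x| → g t x = 0) :
    Integrable (fun z : ℝ × ℝ => g z.1 z.2) (slab a b) := by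
  rw [slab_eq]
  have hc : IsCompact (Set.Icc a b ×ˢ Set.Icc (-L) L) := isCompact_Icc.prod isCompact_Icc
  have h1 : IntegrableOn (fun z : ℝ × ℝ => g z.1 z.2) (Set.Icc a b ×ˢ Set.Icc (-L) L) volume :=
    hg.continuousOn.integrableOn_compact hc
  refine h1.of_forall_sdiff_eq_zero (measurableSet_Icc.prod MeasurableSet.univ) ?_
  rintro ⟨t, x⟩ ⟨hz1, hz2⟩
  apply h0
  by_contra hcon
  push Not at hcon
  exact hz2 ⟨hz1.1, abs_le.mp hcon⟩

lemma integrable_of_supp {L : ℝ} {g : ℝ → ℝ}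
    (hg : Continuous g) (h0 : ∀ x, L < |x| → g x = 0) : Integrable g := by
  refine hg.integrable_of_hasCompactSupport ?_
  refine HasCompactSupport.intro (isCompact_Icc (a := -L) (b := L)) ?_
  intro x hx
  apply h0
  by_contra hcon
  push Not at hcon
  exact hx (abs_le.mp hcon)

lemma continuous_slice {g : ℝ → ℝ → ℝ} (hg : Continuous (fun q : ℝ × ℝ => g q.1 q.2)) (t : ℝ) :
    Continuous (fun x => g t x) := hg.comp (by fun_prop : Continuous fun x : ℝ => (t, x))

lemma continuous_slice' {g : ℝ → ℝ → ℝ} (hg : Continuous (fun q : ℝ × ℝ => g q.1 q.2)) (x : ℝ) :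
    Continuous (fun t => g t x) := hg.comp (by fun_prop : Continuous fun t : ℝ => (t, x))

theorem compact_id {a b L : ℝ} (hab : a ≤ b) {Q Qt S Sx : ℝ → ℝ → ℝ}
    (cQ : Continuous (fun q : ℝ × ℝ => Q q.1 q.2))
    (cQt : Continuous (fun q : ℝ × ℝ => Qt q.1 q.2))
    (cSx : Continuous (fun q : ℝ × ℝ => Sx q.1 q.2))
    (dQ : ∀ t x, HasDerivAt (fun s => Q s x) (Qt t x) t)
    (dS : ∀ t x, HasDerivAt (fun y => S t y) (Sx t x) x)
    (hQ : ∀ t x, L < |x| → Q t x = 0) (hS : ∀ t x, L < |x| → S t x = 0) :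
    (∫ x, Q b x) - ∫ x, Q a x = ∫ z, (Qt z.1 z.2 - Sx z.1 z.2) ∂(slab a b) := by
  have hQt : ∀ t x, L < |x| → Qt t x = 0 := by
    intro t x hx
    have h1 : HasDerivAt (fun s => Q s x) 0 t := by
      have : (fun s => Q s x) = fun _ => (0:ℝ) := by funext s; exact hQ s x hx
      rw [this]; exact hasDerivAt_const _ _
    exact (dQ t x).unique h1
  have hSx : ∀ t x, L < |x| → Sx t x = 0 := by
    intro t x hx
    have h1 : HasDerivAt (fun y => S t y) 0 x := by
      refine (hasDerivAt_const x (0:ℝ)).congr_of_eventuallyEq ?_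
      have : ∀ᶠ y in 𝓝 x, L < |y| := (continuous_abs.tendsto x).eventually (lt_mem_nhds hx)
      filter_upwards [this] with y hy
      exact hS t y hy
    exact (dS t x).unique h1
  have iQt := integrable_slab_of_supp (a := a) (b := b) cQt hQt
  have iSx := integrable_slab_of_supp (a := a) (b := b) cSx hSx
  rw [integral_sub iQt iSx]
  have e1 : ∫ z, Sx z.1 z.2 ∂(slab a b) = 0 := by
    rw [slab, integral_prod _ iSx]
    have : ∀ t, ∫ x, Sx t x = 0 := by
      intro t
      refine integral_eq_zero_of_hasDerivAt_of_integrable (f := fun y => S t y) (dS t) ?_ ?_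
      · exact integrable_of_supp (continuous_slice cSx t) (hSx t)
      · refine integrable_of_supp (L := L) ?_ (hS t)
        exact continuous_iff_continuousAt.mpr fun x => (dS t x).continuousAt
    simp [this]
  have e2 : ∫ z, Qt z.1 z.2 ∂(slab a b) = ∫ x, (Q b x - Q a x) := by
    rw [slab, integral_prod_symm _ iQt]
    congr 1
    funext x
    rw [integral_Icc_eq_integral_Ioc, ← intervalIntegral.integral_of_le hab]
    exact intervalIntegral.integral_eq_sub_of_hasDerivAt (fun t _ => dQ t x)
      ((continuous_slice' cQt x).intervalIntegrable _ _)
  rw [e1, e2, sub_zero, integral_sub]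
  · exact integrable_of_supp (continuous_slice cQ b) (hQ b)
  · exact integrable_of_supp (continuous_slice cQ a) (hQ a)

/-! ### Test functions -/

/-- a `C³` function with its derivatives -/
structure T3 (φ φ1 φ2 φ3 : ℝ → ℝ) : Prop where
  d0 : ∀ x, HasDerivAt φ (φ1 x) x
  d1 : ∀ x, HasDerivAt φ1 (φ2 x) x
  d2 : ∀ x, HasDerivAt φ2 (φ3 x) x
  c3 : Continuous φ3

namespace T3
variable {φ φ1 φ2 φ3 : ℝ → ℝ}
lemma c0 (h : T3 φ φ1 φ2 φ3) : Continuous φ :=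
  continuous_iff_continuousAt.mpr fun x => (h.d0 x).continuousAt
lemma c1 (h : T3 φ φ1 φ2 φ3) : Continuous φ1 :=
  continuous_iff_continuousAt.mpr fun x => (h.d1 x).continuousAt
lemma c2 (h : T3 φ φ1 φ2 φ3) : Continuous φ2 :=
  continuous_iff_continuousAt.mpr fun x => (h.d2 x).continuousAt

lemma mul {ψ ψ1 ψ2 ψ3 : ℝ → ℝ} (h : T3 φ φ1 φ2 φ3) (k : T3 ψ ψ1 ψ2 ψ3) :
    T3 (fun x => φ x * ψ x) (fun x => φ1 x * ψ x + φ x * ψ1 x)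
      (fun x => φ2 x * ψ x + 2 * (φ1 x * ψ1 x) + φ x * ψ2 x)
      (fun x => φ3 x * ψ x + 3 * (φ2 x * ψ1 x) + 3 * (φ1 x * ψ2 x) + φ x * ψ3 x) := by
  refine ⟨fun x => (h.d0 x).mul (k.d0 x), fun x => ?_, fun x => ?_, ?_⟩
  · exact (((h.d1 x).mul (k.d0 x)).add ((h.d0 x).mul (k.d1 x))).congr_deriv (by ring)
  · exact ((((h.d2 x).mul (k.d0 x)).add (((h.d1 x).mul (k.d1 x)).const_mul 2)).add
      ((h.d0 x).mul (k.d2 x))).congr_deriv (by ring)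
  · have := h.c0; have := h.c1; have := h.c2; have := h.c3
    have := k.c0; have := k.c1; have := k.c2; have := k.c3
    fun_prop

lemma dil (h : T3 φ φ1 φ2 φ3) (R : ℝ) :
    T3 (fun x => φ (x / R)) (fun x => φ1 (x / R) / R)
      (fun x => φ2 (x / R) / R ^ 2) (fun x => φ3 (x / R) / R ^ 3) := by
  have hd : ∀ x : ℝ, HasDerivAt (fun x : ℝ => x / R) (1 / R) x :=
    fun x => (hasDerivAt_id x).div_const R
  refine ⟨fun x => ?_, fun x => ?_, fun x => ?_, ?_⟩
  · exact ((h.d0 (x / R)).comp x (hd x)).congr_deriv (by ring)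
  · exact (((h.d1 (x / R)).comp x (hd x)).div_const R).congr_deriv (by ring)
  · exact (((h.d2 (x / R)).comp x (hd x)).div_const (R ^ 2)).congr_deriv (by ring)
  · have := h.c3
    fun_prop
end T3

/-- a smooth cutoff -/
structure Cut (χ χ1 χ2 χ3 : ℝ → ℝ) (C : ℝ) : Prop where
  t : T3 χ χ1 χ2 χ3
  nn : ∀ x, 0 ≤ χ x
  le1 : ∀ x, χ x ≤ 1
  one : ∀ x, |x| ≤ 1 → χ x = 1
  z0 : ∀ x, 2 ≤ |x| → χ x = 0
  z1 : ∀ x, 2 ≤ |x| → χ1 x = 0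
  z2 : ∀ x, 2 ≤ |x| → χ2 x = 0
  C1 : 1 ≤ C
  b1 : ∀ x, |χ1 x| ≤ C
  b2 : ∀ x, |χ2 x| ≤ C
  b3 : ∀ x, |χ3 x| ≤ C

lemma exists_cut : ∃ (χ χ1 χ2 χ3 : ℝ → ℝ) (C : ℝ), Cut χ χ1 χ2 χ3 C := by
  let f : ContDiffBump (0:ℝ) := ⟨1, 3/2, by norm_num, by norm_num⟩
  have hf : ContDiff ℝ (⊤ : ℕ∞) (f : ℝ → ℝ) := f.contDiff
  have hcs : HasCompactSupport (f : ℝ → ℝ) := f.hasCompactSupport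
  have h1 : ContDiff ℝ (⊤ : ℕ∞) (deriv (f : ℝ → ℝ)) := hf.deriv' 
  have h2 : ContDiff ℝ (⊤ : ℕ∞) (deriv (deriv (f : ℝ → ℝ))) := h1.deriv'
  have h3 : ContDiff ℝ (⊤ : ℕ∞) (deriv (deriv (deriv (f : ℝ → ℝ)))) := h2.deriv'
  obtain ⟨B1, hB1⟩ := hcs.deriv.exists_bound_of_continuous h1.continuous
  obtain ⟨B2, hB2⟩ := hcs.deriv.deriv.exists_bound_of_continuous h2.continuous
  obtain ⟨B3, hB3⟩ := hcs.deriv.deriv.deriv.exists_bound_of_continuous h3.continuous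
  have hz : ∀ x : ℝ, 3/2 < |x| → f x = 0 := by
    intro x hx
    apply f.zero_of_le_dist
    rw [Real.dist_eq, sub_zero]; exact hx.le
  have hop : ∀ x : ℝ, 3/2 < |x| → ∀ᶠ y in 𝓝 x, 3/2 < |y| := fun x hx =>
    (continuous_abs.tendsto x).eventually (lt_mem_nhds hx)
  have hz1 : ∀ x : ℝ, 3/2 < |x| → deriv f x = 0 := by
    intro x hx
    have : (f : ℝ → ℝ) =ᶠ[𝓝 x] fun _ => 0 := by
      filter_upwards [hop x hx] with y hy using hz y hy
    rw [this.deriv_eq]; simp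
  have hz2 : ∀ x : ℝ, 3/2 < |x| → deriv (deriv f) x = 0 := by
    intro x hx
    have : (deriv (f : ℝ → ℝ)) =ᶠ[𝓝 x] fun _ => 0 := by
      filter_upwards [hop x hx] with y hy using hz1 y hy
    rw [this.deriv_eq]; simp
  refine ⟨f, deriv f, deriv (deriv f), deriv (deriv (deriv f)),
    max 1 (max B1 (max B2 B3)), ⟨⟨?_, ?_, ?_, h3.continuous⟩, fun x => f.nonneg, fun x => f.le_one,
    ?_, ?_, ?_, ?_, le_max_left _ _, ?_, ?_, ?_⟩⟩
  · intro x; exact (hf.differentiable (by simp) x).hasDerivAt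
  · intro x; exact (h1.differentiable (by simp) x).hasDerivAt
  · intro x; exact (h2.differentiable (by simp) x).hasDerivAt
  · intro x hx
    apply f.one_of_mem_closedBall
    simpa [Real.dist_eq] using hx
  · intro x hx; exact hz x (by linarith)
  · intro x hx; exact hz1 x (by linarith)
  · intro x hx; exact hz2 x (by linarith)
  · intro x; exact (hB1 x).trans (by simp)
  · intro x; exact (hB2 x).trans (by simp)
  · intro x; exact (hB3 x).trans (by simp)

end GKdV

open MeasureTheory Real

namespace GKdV
open Filter Topology

lemma deriv_supp {φ φ1 : ℝ → ℝ} {L : ℝ} (hd : ∀ x, HasDerivAt φ (φ1 x) x)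
    (h0 : ∀ x, L < |x| → φ x = 0) : ∀ x, L < |x| → φ1 x = 0 := by
  intro x hx
  have h1 : HasDerivAt φ 0 x := by
    refine (hasDerivAt_const x (0:ℝ)).congr_of_eventuallyEq ?_
    have : ∀ᶠ y in 𝓝 x, L < |y| := (continuous_abs.tendsto x).eventually (lt_mem_nhds hx)
    filter_upwards [this] with y hy
    exact h0 y hy
  exact (hd x).unique h1

/-- bounded test functions are limits of compactly supported ones -/
lemma cut_approx {φ φ1 φ2 φ3 : ℝ → ℝ} {C : ℝ} (h : T3 φ φ1 φ2 φ3)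
    (b0 : ∀ x, |φ x| ≤ C) (b1 : ∀ x, |φ1 x| ≤ C) (b2 : ∀ x, |φ2 x| ≤ C) (b3 : ∀ x, |φ3 x| ≤ C) :
    ∃ (ψ ψ1 ψ2 ψ3 : ℕ → ℝ → ℝ) (L : ℕ → ℝ) (D : ℝ),
      (∀ n, T3 (ψ n) (ψ1 n) (ψ2 n) (ψ3 n)) ∧ (∀ n x, L n < |x| → ψ n x = 0) ∧
      (∀ n x, |ψ n x| ≤ D) ∧ (∀ n x, |ψ1 n x| ≤ D) ∧ (∀ n x, |ψ3 n x| ≤ D) ∧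
      (∀ x, Tendsto (fun n => ψ n x) atTop (𝓝 (φ x))) ∧
      (∀ x, Tendsto (fun n => ψ1 n x) atTop (𝓝 (φ1 x))) ∧
      (∀ x, Tendsto (fun n => ψ3 n x) atTop (𝓝 (φ3 x))) := by
  obtain ⟨χ, χ1, χ2, χ3, K, hχ⟩ := exists_cut
  have hK := hχ.C1
  have hC : 0 ≤ C := (abs_nonneg _).trans (b0 0)
  set r : ℕ → ℝ := fun n => (n : ℝ) + 1 with hr
  have r1 : ∀ n, 1 ≤ r n := fun n => by simp [hr]
  have hrt : Tendsto r atTop atTop := tendsto_atTop_add_const_right _ _ tendsto_natCast_atTop_atTop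
  have bχ : ∀ x, |χ x| ≤ K := fun x => by
    rw [abs_of_nonneg (hχ.nn x)]; exact (hχ.le1 x).trans hK
  -- bounds of the dilated cutoff
  have e0 : ∀ n x, |χ (x / r n)| ≤ K := fun n x => bχ _
  have gen : ∀ (k : ℕ) (n : ℕ) (y : ℝ), |y| ≤ K → |y / r n ^ k| ≤ K := by
    intro k n y hy
    rw [abs_div, abs_of_pos (a := r n ^ k) (by have := r1 n; positivity)]
    exact (div_le_self (abs_nonneg _) (one_le_pow₀ (r1 n))).trans hy
  have e1 : ∀ n x, |χ1 (x / r n) / r n| ≤ K := fun n x => by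
    simpa using gen 1 n _ (hχ.b1 (x / r n))
  have e2 : ∀ n x, |χ2 (x / r n) / r n ^ 2| ≤ K := fun n x => gen 2 n _ (hχ.b2 _)
  have e3 : ∀ n x, |χ3 (x / r n) / r n ^ 3| ≤ K := fun n x => gen 3 n _ (hχ.b3 _)
  have t0 : ∀ x, Tendsto (fun n => χ (x / r n)) atTop (𝓝 1) := by
    intro x
    have : ∀ᶠ n in atTop, χ (x / r n) = 1 := by
      filter_upwards [hrt.eventually_ge_atTop (|x|)] with n hn
      apply hχ.one
      have := r1 n
      rw [abs_div, abs_of_pos (by linarith : 0 < r n)]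
      exact div_le_one_of_le₀ hn (by linarith)
    exact (tendsto_congr' this).mpr tendsto_const_nhds
  have tgen : ∀ (k : ℕ) (f : ℕ → ℝ), k ≠ 0 → (∀ n, |f n| ≤ K) →
      Tendsto (fun n => f n / r n ^ k) atTop (𝓝 0) := by
    intro k f hk hf
    have h1 : Tendsto (fun n => K / r n ^ k) atTop (𝓝 0) :=
      Tendsto.div_atTop tendsto_const_nhds ((tendsto_pow_atTop hk).comp hrt)
    refine squeeze_zero_norm (fun n => ?_) h1
    have : 0 < r n ^ k := by have := r1 n; positivity
    rw [Real.norm_eq_abs, abs_div, abs_of_pos this]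
    gcongr
    exact hf n
  have t1 : ∀ x, Tendsto (fun n => χ1 (x / r n) / r n) atTop (𝓝 0) := fun x => by
    simpa using tgen 1 _ one_ne_zero (fun n => hχ.b1 (x / r n))
  have t2 : ∀ x, Tendsto (fun n => χ2 (x / r n) / r n ^ 2) atTop (𝓝 0) := fun x =>
    tgen 2 _ two_ne_zero (fun n => hχ.b2 (x / r n))
  have t3 : ∀ x, Tendsto (fun n => χ3 (x / r n) / r n ^ 3) atTop (𝓝 0) := fun x =>
    tgen 3 _ three_ne_zero (fun n => hχ.b3 (x / r n))
  have pb : ∀ y z : ℝ, |y| ≤ C → |z| ≤ K → |y * z| ≤ C * K := fun y z hy hz => by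
    rw [abs_mul]; exact mul_le_mul hy hz (abs_nonneg _) hC
  refine ⟨_, _, _, _, fun n => 2 * r n, 8 * (C * K), fun n => h.mul (hχ.t.dil (r n)),
    ?_, ?_, ?_, ?_, ?_, ?_, ?_⟩
  · intro n x hx
    have := r1 n
    have : χ (x / r n) = 0 := by
      apply hχ.z0
      rw [abs_div, abs_of_pos (by linarith : 0 < r n), le_div_iff₀ (by linarith)]
      exact hx.le
    simp [this]
  · intro n x
    have := pb _ _ (b0 x) (e0 n x)
    have : 0 ≤ C * K := by positivity
    linarith
  · intro n x
    have h1 := pb _ _ (b1 x) (e0 n x)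
    have h2 := pb _ _ (b0 x) (e1 n x)
    have : 0 ≤ C * K := by positivity
    rw [abs_le] at *
    constructor <;> linarith [h1.1, h1.2, h2.1, h2.2]
  · intro n x
    have h1 := pb _ _ (b3 x) (e0 n x)
    have h2 := pb _ _ (b2 x) (e1 n x)
    have h3 := pb _ _ (b1 x) (e2 n x)
    have h4 := pb _ _ (b0 x) (e3 n x)
    have : 0 ≤ C * K := by positivity
    rw [abs_le] at *
    constructor <;> linarith [h1.1, h1.2, h2.1, h2.2, h3.1, h3.2, h4.1, h4.2]
  · intro x
    simpa using (tendsto_const_nhds (x := φ x)).mul (t0 x)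
  · intro x
    simpa using ((tendsto_const_nhds (x := φ1 x)).mul (t0 x)).add
      ((tendsto_const_nhds (x := φ x)).mul (t1 x))
  · intro x
    simpa using ((((tendsto_const_nhds (x := φ3 x)).mul (t0 x)).add
      (((tendsto_const_nhds (x := φ2 x)).mul (t1 x)).const_mul 3)).add
      (((tendsto_const_nhds (x := φ1 x)).mul (t2 x)).const_mul 3)).add
      ((tendsto_const_nhds (x := φ x)).mul (t3 x))

/-! ### Forced Airy equation -/

/-- `v_t + v_xxx = G_x` -/
structure Pair (v v1 v2 v3 G G1 : ℝ → ℝ → ℝ) : Prop where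
  c0 : Continuous (fun q : ℝ × ℝ => v q.1 q.2)
  c1 : Continuous (fun q : ℝ × ℝ => v1 q.1 q.2)
  c2 : Continuous (fun q : ℝ × ℝ => v2 q.1 q.2)
  c3 : Continuous (fun q : ℝ × ℝ => v3 q.1 q.2)
  cG : Continuous (fun q : ℝ × ℝ => G q.1 q.2)
  cG1 : Continuous (fun q : ℝ × ℝ => G1 q.1 q.2)
  d0 : ∀ t x, HasDerivAt (fun y => v t y) (v1 t x) x
  d1 : ∀ t x, HasDerivAt (fun y => v1 t y) (v2 t x) x
  d2 : ∀ t x, HasDerivAt (fun y => v2 t y) (v3 t x) x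
  dG : ∀ t x, HasDerivAt (fun y => G t y) (G1 t x) x
  dt : ∀ t x, HasDerivAt (fun s => v s x) (- v3 t x + G1 t x) t

section
variable {v v1 v2 v3 G G1 : ℝ → ℝ → ℝ} {φ φ1 φ2 φ3 : ℝ → ℝ}

theorem Pair.compact (P : Pair v v1 v2 v3 G G1) (h : T3 φ φ1 φ2 φ3) {a b L : ℝ} (hab : a ≤ b)
    (hs : ∀ x, L < |x| → φ x = 0) :
    (∫ x, v b x ^ 2 * φ x) - ∫ x, v a x ^ 2 * φ x
      = ∫ z, (-3 * v1 z.1 z.2 ^ 2 * φ1 z.2 + v z.1 z.2 ^ 2 * φ3 z.2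
          - 2 * (v1 z.1 z.2 * G z.1 z.2) * φ z.2
          - 2 * (v z.1 z.2 * G z.1 z.2) * φ1 z.2) ∂(slab a b) := by
  have hs1 := deriv_supp h.d0 hs
  have hs2 := deriv_supp h.d1 hs1
  have := P.c0; have := P.c1; have := P.c2; have := P.c3; have := P.cG; have := P.cG1
  have := h.c0; have := h.c1; have := h.c2; have := h.c3
  have key := compact_id (L := L) hab
    (Q := fun t x => v t x ^ 2 * φ x)
    (Qt := fun t x => 2 * v t x * (- v3 t x + G1 t x) * φ x)
    (S := fun t x => (v1 t x ^ 2 - 2 * (v t x * v2 t x)) * φ x + 2 * (v t x * v1 t x) * φ1 x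
        - v t x ^ 2 * φ2 x + 2 * (v t x * G t x) * φ x)
    (Sx := fun t x => 2 * v t x * (- v3 t x + G1 t x) * φ x
        - (-3 * v1 t x ^ 2 * φ1 x + v t x ^ 2 * φ3 x
          - 2 * (v1 t x * G t x) * φ x - 2 * (v t x * G t x) * φ1 x))
    (by fun_prop) (by fun_prop) (by fun_prop) ?_ ?_ ?_ ?_
  · rw [key]
    congr 1; funext z; ring
  · intro t x
    exact (((P.dt t x).pow 2).mul_const (φ x)).congr_deriv (by simp)
  · intro t x
    have D0 := P.d0 t x; have D1 := P.d1 t x; have D2 := P.d2 t x; have DG := P.dG t x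
    have E0 := h.d0 x; have E1 := h.d1 x; have E2 := h.d2 x
    exact ((((((D1.pow 2).sub ((D0.mul D2).const_mul 2)).mul E0).add
      (((D0.mul D1).const_mul 2).mul E1)).sub ((D0.pow 2).mul E2)).add
      (((D0.mul DG).const_mul 2).mul E0)).congr_deriv (by simp; ring)
  · intro t x hx; simp [hs x hx]
  · intro t x hx; simp [hs x hx, hs1 x hx, hs2 x hx]

theorem Pair.glob (P : Pair v v1 v2 v3 G G1) (h : T3 φ φ1 φ2 φ3) {a b C : ℝ} (hab : a ≤ b)
    (b0 : ∀ x, |φ x| ≤ C) (b1 : ∀ x, |φ1 x| ≤ C) (b2 : ∀ x, |φ2 x| ≤ C) (b3 : ∀ x, |φ3 x| ≤ C)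
    (ia : Integrable (fun x => v a x ^ 2)) (ib : Integrable (fun x => v b x ^ 2))
    (i0 : Integrable (fun z : ℝ × ℝ => v z.1 z.2 ^ 2) (slab a b))
    (i1 : Integrable (fun z : ℝ × ℝ => v1 z.1 z.2 ^ 2) (slab a b))
    (i2 : Integrable (fun z : ℝ × ℝ => v1 z.1 z.2 * G z.1 z.2) (slab a b))
    (i3 : Integrable (fun z : ℝ × ℝ => v z.1 z.2 * G z.1 z.2) (slab a b)) :
    (∫ x, v b x ^ 2 * φ x) - ∫ x, v a x ^ 2 * φ x
      = ∫ z, (-3 * v1 z.1 z.2 ^ 2 * φ1 z.2 + v z.1 z.2 ^ 2 * φ3 z.2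
          - 2 * (v1 z.1 z.2 * G z.1 z.2) * φ z.2
          - 2 * (v z.1 z.2 * G z.1 z.2) * φ1 z.2) ∂(slab a b) := by
  obtain ⟨ψ, ψ1, ψ2, ψ3, L, D, hT, hL, B0, B1, B3, T0, T1, T3'⟩ := cut_approx h b0 b1 b2 b3
  have hD : 0 ≤ D := (abs_nonneg _).trans (B0 0 0)
  have hlim : ∀ t, Integrable (fun x => v t x ^ 2) →
      Tendsto (fun n => ∫ x, v t x ^ 2 * ψ n x) atTop (𝓝 (∫ x, v t x ^ 2 * φ x)) := by
    intro t it
    refine tendsto_integral_of_dominated_convergence (fun x => D * v t x ^ 2) ?_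
      (it.const_mul D) ?_ ?_
    · intro n
      exact (((continuous_slice P.c0 t).pow 2).mul (hT n).c0).aestronglyMeasurable
    · intro n
      refine Eventually.of_forall fun x => ?_
      rw [norm_mul, Real.norm_eq_abs, Real.norm_eq_abs, abs_of_nonneg (sq_nonneg _), mul_comm]
      exact mul_le_mul_of_nonneg_right (B0 n x) (sq_nonneg _)
    · exact Eventually.of_forall fun x => (T0 x).const_mul _
  have hl := (hlim b ib).sub (hlim a ia)
  refine tendsto_nhds_unique hl ?_
  have e : ∀ n, (∫ x, v b x ^ 2 * ψ n x) - ∫ x, v a x ^ 2 * ψ n x = _ :=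
    fun n => P.compact (hT n) hab (hL n)
  rw [funext e]
  refine tendsto_integral_of_dominated_convergence
    (fun z => D * (3 * v1 z.1 z.2 ^ 2 + v z.1 z.2 ^ 2 + 2 * |v1 z.1 z.2 * G z.1 z.2|
      + 2 * |v z.1 z.2 * G z.1 z.2|)) ?_ ?_ ?_ ?_
  · intro n
    have := P.c0; have := P.c1; have := P.cG
    have := (hT n).c0; have := (hT n).c1; have := (hT n).c3
    exact Continuous.aestronglyMeasurable (by fun_prop)
  · exact ((((i1.const_mul 3).add i0).add (i2.abs.const_mul 2)).add (i3.abs.const_mul 2)).const_mul D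
  · intro n
    refine Eventually.of_forall fun z => ?_
    have q : ∀ y w : ℝ, |w| ≤ D → |y * w| ≤ |y| * D := fun y w hw => by
      rw [abs_mul]; exact mul_le_mul_of_nonneg_left hw (abs_nonneg _)
    have h1 := q (v1 z.1 z.2 ^ 2) _ (B1 n z.2)
    have h2 := q (v z.1 z.2 ^ 2) _ (B3 n z.2)
    have h3 := q (v1 z.1 z.2 * G z.1 z.2) _ (B0 n z.2)
    have h4 := q (v z.1 z.2 * G z.1 z.2) _ (B1 n z.2)
    rw [abs_of_nonneg (sq_nonneg (v1 z.1 z.2))] at h1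
    rw [abs_of_nonneg (sq_nonneg (v z.1 z.2))] at h2
    rw [abs_le] at h1 h2 h3 h4
    rw [Real.norm_eq_abs, abs_le]
    constructor <;> linarith [h1.1, h1.2, h2.1, h2.2, h3.1, h3.2, h4.1, h4.2]
  · refine Eventually.of_forall fun z => ?_
    exact ((((T1 z.2).const_mul _).add ((T3' z.2).const_mul _)).sub
      ((T0 z.2).const_mul _)).sub ((T1 z.2).const_mul _)
end

end GKdV

open MeasureTheory Real

namespace GKdV
open Filter Topology

/-- continuous rapidly decreasing functions -/
structure Rapid (g : ℝ → ℝ) : Prop where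
  c : Continuous g
  d : ∀ k : ℕ, ∃ C, ∀ x, |x| ^ k * |g x| ≤ C

namespace Rapid
variable {g h : ℝ → ℝ}

lemma of_le (hg : Rapid g) (hc : Continuous h) (c : ℝ) (hle : ∀ x, |h x| ≤ c * |g x|) :
    Rapid h := by
  refine ⟨hc, fun k => ?_⟩
  obtain ⟨C, hC⟩ := hg.d k
  refine ⟨|c| * C, fun x => ?_⟩
  calc |x| ^ k * |h x| ≤ |x| ^ k * (c * |g x|) := by gcongr; exact hle x
    _ ≤ |x| ^ k * (|c| * |g x|) := by gcongr; exact le_abs_self c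
    _ = |c| * (|x| ^ k * |g x|) := by ring
    _ ≤ |c| * C := by gcongr; exact hC x

lemma bdd (hg : Rapid g) : ∃ C, 0 ≤ C ∧ ∀ x, |g x| ≤ C := by
  obtain ⟨C, hC⟩ := hg.d 0
  refine ⟨C, ?_, fun x => by simpa using hC x⟩
  have := hC 0
  simp at this
  exact (abs_nonneg _).trans this

lemma mulBdd (hg : Rapid g) (hc : Continuous h) {c : ℝ} (hb : ∀ x, |h x| ≤ c) :
    Rapid (fun x => h x * g x) := by
  refine hg.of_le (hc.mul hg.c) c fun x => ?_
  rw [abs_mul]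
  gcongr
  exact hb x

lemma mulBdd' (hg : Rapid g) (hc : Continuous h) {c : ℝ} (hb : ∀ x, |h x| ≤ c) :
    Rapid (fun x => g x * h x) := by
  have := hg.mulBdd hc hb
  simpa only [mul_comm] using this

lemma mul (hg : Rapid g) (hh : Rapid h) : Rapid (fun x => g x * h x) := by
  obtain ⟨C, _, hC⟩ := hg.bdd
  exact hh.mulBdd hg.c hC

lemma const_mul (hg : Rapid g) (c : ℝ) : Rapid (fun x => c * g x) :=
  hg.mulBdd continuous_const (c := |c|) (fun _ => le_rfl)

lemma neg (hg : Rapid g) : Rapid (fun x => - g x) :=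
  hg.of_le hg.c.neg 1 (fun x => by simp)

lemma sq (hg : Rapid g) : Rapid (fun x => g x ^ 2) := by
  have := hg.mul hg
  simpa only [pow_two] using this

lemma abs (hg : Rapid g) : Rapid (fun x => |g x|) :=
  hg.of_le hg.c.abs 1 (fun x => by simp)

lemma add (hg : Rapid g) (hh : Rapid h) : Rapid (fun x => g x + h x) := by
  refine ⟨hg.c.add hh.c, fun k => ?_⟩
  obtain ⟨C, hC⟩ := hg.d k
  obtain ⟨D, hD⟩ := hh.d k
  refine ⟨C + D, fun x => ?_⟩
  calc |x| ^ k * |g x + h x| ≤ |x| ^ k * (|g x| + |h x|) := by gcongr; exact abs_add_le _ _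
    _ = |x| ^ k * |g x| + |x| ^ k * |h x| := by ring
    _ ≤ C + D := add_le_add (hC x) (hD x)

lemma sub (hg : Rapid g) (hh : Rapid h) : Rapid (fun x => g x - h x) := by
  have := hg.add hh.neg
  simpa only [sub_eq_add_neg] using this

lemma mulX (hg : Rapid g) : Rapid (fun x => x * g x) := by
  refine ⟨continuous_id.mul hg.c, fun k => ?_⟩
  obtain ⟨C, hC⟩ := hg.d (k + 1)
  refine ⟨C, fun x => ?_⟩
  rw [abs_mul]
  calc _ = |x| ^ (k + 1) * |g x| := by ring
    _ ≤ C := hC x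

lemma integrable (hg : Rapid g) : Integrable g := by
  obtain ⟨C, hC⟩ := hg.d 0
  obtain ⟨D, hD⟩ := hg.d 2
  refine (integrable_inv_one_add_sq.const_mul (C + D)).mono' hg.c.aestronglyMeasurable ?_
  refine Eventually.of_forall fun x => ?_
  have h1 := hC x
  have h2 := hD x
  rw [Real.norm_eq_abs, ← div_eq_mul_inv, le_div_iff₀ (by positivity)]
  rw [sq_abs] at h2
  nlinarith

lemma shift (hg : Rapid g) (s : ℝ) : Rapid (fun x => g (x + s)) := by
  refine ⟨hg.c.comp (by fun_prop), fun k => ?_⟩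
  obtain ⟨C, hC⟩ := hg.d 0
  obtain ⟨D, hD⟩ := hg.d k
  have hC0 : 0 ≤ C := by have := hC 0; simp at this; exact (abs_nonneg _).trans this
  refine ⟨2 ^ k * (D + |s| ^ k * C), fun x => ?_⟩
  have h1 := hC (x + s)
  have h2 := hD (x + s)
  have h3 : |x| ≤ |x + s| + |s| := by
    have := abs_sub (x + s) s
    simpa using this
  have h4 : |x| ^ k ≤ 2 ^ k * (|x + s| ^ k + |s| ^ k) := by
    rcases le_total |x + s| |s| with h | h
    · calc |x| ^ k ≤ (2 * |s|) ^ k := by gcongr; linarith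
        _ = 2 ^ k * |s| ^ k := by rw [mul_pow]
        _ ≤ _ := by gcongr; have : 0 ≤ |x + s| ^ k := by positivity
                    linarith
    · calc |x| ^ k ≤ (2 * |x + s|) ^ k := by gcongr; linarith
        _ = 2 ^ k * |x + s| ^ k := by rw [mul_pow]
        _ ≤ _ := by gcongr; have : 0 ≤ |s| ^ k := by positivity
                    linarith
  simp only [pow_zero, one_mul] at h1
  calc |x| ^ k * |g (x + s)| ≤ 2 ^ k * (|x + s| ^ k + |s| ^ k) * |g (x + s)| := by gcongr
    _ = 2 ^ k * (|x + s| ^ k * |g (x + s)| + |s| ^ k * |g (x + s)|) := by ring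
    _ ≤ _ := by gcongr

end Rapid

noncomputable def bb (p : ℝ) (U : ℕ → ℝ → ℝ → ℝ) (t x : ℝ) : ℝ := |U 0 t x| ^ (p + 1)

namespace Sol
variable {p : ℝ} {U : ℕ → ℝ → ℝ → ℝ} {F F1 F2 : ℝ → ℝ → ℝ}

lemma hp1 (H : Sol p U F F1 F2) : 1 < p := one_lt_of_sqrt3 H.hp

lemma cAbs (H : Sol p U F F1 F2) {r : ℝ} (hr : 0 ≤ r) :
    Continuous (fun q : ℝ × ℝ => |U 0 q.1 q.2| ^ r) :=
  (H.cU 0).abs.rpow_const (fun _ => Or.inr hr)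

lemma cF (H : Sol p U F F1 F2) : Continuous (fun q : ℝ × ℝ => F q.1 q.2) := by
  simp only [H.eF]
  exact (H.cAbs (by linarith [H.hp1])).mul (H.cU 0)

lemma cF1 (H : Sol p U F F1 F2) : Continuous (fun q : ℝ × ℝ => F1 q.1 q.2) := by
  simp only [H.eF1]
  exact (continuous_const.mul (H.cAbs (by linarith [H.hp1]))).mul (H.cU 1)

lemma cb (H : Sol p U F F1 F2) : Continuous (fun q : ℝ × ℝ => bb p U q.1 q.2) :=
  H.cAbs (by linarith [H.hp1])

lemma dF (H : Sol p U F F1 F2) (t x : ℝ) : HasDerivAt (fun y => F t y) (F1 t x) x := by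
  have h := (hasDerivAt_absF H.hp1 (U 0 t x)).comp x (H.dU 0 t x)
  have e : (fun y => F t y) = (fun y : ℝ => |y| ^ (p - 1) * y) ∘ (fun y => U 0 t y) := by
    funext y; simp [H.eF]
  rw [e]
  exact h.congr_deriv (by rw [H.eF1])

lemma db (H : Sol p U F F1 F2) (t x : ℝ) :
    HasDerivAt (fun y => bb p U t y) ((p + 1) * (F t x * U 1 t x)) x := by
  have h := (hasDerivAt_absB H.hp1 (U 0 t x)).comp x (H.dU 0 t x)
  exact h.congr_deriv (by rw [H.eF]; ring)

lemma dbt (H : Sol p U F F1 F2) (t x : ℝ) :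
    HasDerivAt (fun s => bb p U s x) ((p + 1) * (F t x * (- U 3 t x + F1 t x))) t := by
  have h := (hasDerivAt_absB H.hp1 (U 0 t x)).comp t (H.dt0 t x)
  exact h.congr_deriv (by rw [H.eF]; ring)

lemma b_nn (_H : Sol p U F F1 F2) (t x : ℝ) : 0 ≤ bb p U t x := by unfold bb; positivity

lemma uF (H : Sol p U F F1 F2) (t x : ℝ) : U 0 t x * F t x = bb p U t x := by
  rw [H.eF, bb, absF_mul H.hp1]

lemma uF1 (H : Sol p U F F1 F2) (t x : ℝ) : U 0 t x * F1 t x = p * (F t x * U 1 t x) := by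
  rw [H.eF, H.eF1]; ring

lemma u1F1_nn (H : Sol p U F F1 F2) (t x : ℝ) : 0 ≤ U 1 t x * F1 t x := by
  rw [H.eF1]
  have : 0 < p := by linarith [H.hp1]
  have h2 : U 1 t x * (p * |U 0 t x| ^ (p - 1) * U 1 t x) = p * |U 0 t x| ^ (p - 1) * U 1 t x ^ 2 := by
    ring
  rw [h2]; positivity

lemma pair0 (H : Sol p U F F1 F2) : Pair (U 0) (U 1) (U 2) (U 3) F F1 :=
  ⟨H.cU 0, H.cU 1, H.cU 2, H.cU 3, H.cF, H.cF1, H.dU 0, H.dU 1, H.dU 2, H.dF, H.dt0⟩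

lemma pair1 (H : Sol p U F F1 F2) : Pair (U 1) (U 2) (U 3) (U 4) F1 F2 :=
  ⟨H.cU 1, H.cU 2, H.cU 3, H.cU 4, H.cF1, H.cF2, H.dU 1, H.dU 2, H.dU 3, H.dF1, H.dt1⟩

end Sol

/-- difference quotient in `x` -/
noncomputable def dq (h : ℝ) (g : ℝ → ℝ → ℝ) (t x : ℝ) : ℝ := (g t (x + h) - g t x) / h

lemma continuous_dq {g : ℝ → ℝ → ℝ} (hg : Continuous (fun q : ℝ × ℝ => g q.1 q.2)) (h : ℝ) :
    Continuous (fun q : ℝ × ℝ => dq h g q.1 q.2) := by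
  have := hg.comp (by fun_prop : Continuous fun q : ℝ × ℝ => (q.1, q.2 + h))
  exact (this.sub hg).div_const h

lemma hasDerivAt_dq {g g1 : ℝ → ℝ → ℝ} (hg : ∀ t x, HasDerivAt (fun y => g t y) (g1 t x) x)
    (h t x : ℝ) : HasDerivAt (fun y => dq h g t y) (dq h g1 t x) x :=
  (((hg t (x + h)).comp_add_const x h).sub (hg t x)).div_const h

lemma Pair.dq {v v1 v2 v3 G G1 : ℝ → ℝ → ℝ} (P : Pair v v1 v2 v3 G G1) (h : ℝ) :
    Pair (dq h v) (dq h v1) (dq h v2) (dq h v3) (dq h G) (dq h G1) := by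
  refine ⟨continuous_dq P.c0 h, continuous_dq P.c1 h, continuous_dq P.c2 h, continuous_dq P.c3 h,
    continuous_dq P.cG h, continuous_dq P.cG1 h, hasDerivAt_dq P.d0 h, hasDerivAt_dq P.d1 h,
    hasDerivAt_dq P.d2 h, hasDerivAt_dq P.dG h, fun t x => ?_⟩
  exact (((P.dt t (x + h)).sub (P.dt t x)).div_const h).congr_deriv (by
    simp only [GKdV.dq]; ring)

namespace Sol
variable {p : ℝ} {U : ℕ → ℝ → ℝ → ℝ} {F F1 F2 : ℝ → ℝ → ℝ}

lemma rU (H : Sol p U F F1 F2) (i : ℕ) (t : ℝ) : Rapid (fun x => U i t x) :=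
  ⟨continuous_slice (H.cU i) t, fun k => H.dec i k t⟩

lemma cAbsS (H : Sol p U F F1 F2) {r : ℝ} (hr : 0 ≤ r) (t : ℝ) :
    Continuous (fun x : ℝ => |U 0 t x| ^ r) :=
  (H.rU 0 t).c.abs.rpow_const (fun _ => Or.inr hr)

lemma absBdd (H : Sol p U F F1 F2) {r : ℝ} (hr : 0 ≤ r) (t : ℝ) :
    ∃ C, ∀ x, |(|U 0 t x| ^ r)| ≤ C := by
  obtain ⟨C, hC0, hC⟩ := (H.rU 0 t).bdd
  refine ⟨C ^ r, fun x => ?_⟩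
  rw [abs_of_nonneg (by positivity)]
  exact Real.rpow_le_rpow (abs_nonneg _) (hC x) hr

lemma rF (H : Sol p U F F1 F2) (t : ℝ) : Rapid (fun x => F t x) := by
  obtain ⟨C, hC⟩ := H.absBdd (r := p - 1) (by linarith [H.hp1]) t
  simp only [H.eF]
  exact (H.rU 0 t).mulBdd (H.cAbsS (by linarith [H.hp1]) t) hC

lemma rF1 (H : Sol p U F F1 F2) (t : ℝ) : Rapid (fun x => F1 t x) := by
  obtain ⟨C, hC⟩ := H.absBdd (r := p - 1) (by linarith [H.hp1]) t
  simp only [H.eF1, mul_assoc]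
  exact ((H.rU 1 t).mulBdd (H.cAbsS (by linarith [H.hp1]) t) hC).const_mul p

lemma rb (H : Sol p U F F1 F2) (t : ℝ) : Rapid (fun x => bb p U t x) := by
  simp only [← H.uF]
  exact (H.rU 0 t).mul (H.rF t)

end Sol

section compactids
variable {p : ℝ} {U : ℕ → ℝ → ℝ → ℝ} {F F1 F2 : ℝ → ℝ → ℝ} {φ φ1 φ2 φ3 : ℝ → ℝ}

theorem Sol.b_compact (H : Sol p U F F1 F2) (h : T3 φ φ1 φ2 φ3) {a b L : ℝ} (hab : a ≤ b)
    (hs : ∀ x, L < |x| → φ x = 0) :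
    (∫ x, bb p U b x / (p + 1) * φ x) - ∫ x, bb p U a x / (p + 1) * φ x
      = ∫ z, ((U 2 z.1 z.2 * F1 z.1 z.2) * φ z.2 - (U 1 z.1 z.2 * F1 z.1 z.2) * φ1 z.2
          - 1 / 2 * F z.1 z.2 ^ 2 * φ1 z.2 + bb p U z.1 z.2 / (p + 1) * φ3 z.2) ∂(slab a b) := by
  have hs1 := deriv_supp h.d0 hs
  have hs2 := deriv_supp h.d1 hs1
  have := H.cU 0; have := H.cU 1; have := H.cU 2; have := H.cU 3; have := H.cF; have := H.cF1
  have := H.cb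
  have := h.c0; have := h.c1; have := h.c2; have := h.c3
  have hp0 : p + 1 ≠ 0 := by linarith [H.hp1]
  have key := compact_id (L := L) hab
    (Q := fun t x => bb p U t x / (p + 1) * φ x)
    (Qt := fun t x => F t x * (- U 3 t x + F1 t x) * φ x)
    (S := fun t x => 1 / 2 * F t x ^ 2 * φ x - F t x * U 2 t x * φ x + F t x * U 1 t x * φ1 x
        - bb p U t x / (p + 1) * φ2 x)
    (Sx := fun t x => F t x * (- U 3 t x + F1 t x) * φ x
        - ((U 2 t x * F1 t x) * φ x - (U 1 t x * F1 t x) * φ1 x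
          - 1 / 2 * F t x ^ 2 * φ1 x + bb p U t x / (p + 1) * φ3 x))
    (by fun_prop) (by fun_prop) (by fun_prop) ?_ ?_ ?_ ?_
  · rw [key]
    congr 1; funext z; ring
  · intro t x
    exact (((H.dbt t x).div_const (p + 1)).mul_const (φ x)).congr_deriv (by field_simp)
  · intro t x
    have D1 := H.dU 1 t x; have D2 := H.dU 2 t x; have DF := H.dF t x; have DB := H.db t x
    have E0 := h.d0 x; have E1 := h.d1 x; have E2 := h.d2 x
    refine (((((DF.pow 2).const_mul (1/2)).mul E0).sub ((DF.mul D2).mul E0)).add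
      ((DF.mul D1).mul E1)).sub ((DB.div_const (p + 1)).mul E2) |>.congr_deriv ?_
    simp
    field_simp
    ring
  · intro t x hx; simp [hs x hx]
  · intro t x hx; simp [hs x hx, hs1 x hx, hs2 x hx]

/-- mass identity with compactly supported weight, flux in `j` form -/
theorem Sol.m_compact (H : Sol p U F F1 F2) (h : T3 φ φ1 φ2 φ3) {a b L : ℝ} (hab : a ≤ b)
    (hs : ∀ x, L < |x| → φ x = 0) :
    (∫ x, U 0 b x ^ 2 * φ x) - ∫ x, U 0 a x ^ 2 * φ x
      = ∫ z, (- (3 * U 1 z.1 z.2 ^ 2 + 2 * p / (p + 1) * bb p U z.1 z.2) * φ1 z.2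
          + U 0 z.1 z.2 ^ 2 * φ3 z.2) ∂(slab a b) := by
  have hs1 := deriv_supp h.d0 hs
  have hs2 := deriv_supp h.d1 hs1
  have := H.cU 0; have := H.cU 1; have := H.cU 2; have := H.cU 3; have := H.cF; have := H.cF1
  have := H.cb
  have := h.c0; have := h.c1; have := h.c2; have := h.c3
  have hp0 : p + 1 ≠ 0 := by linarith [H.hp1]
  have key := compact_id (L := L) hab
    (Q := fun t x => U 0 t x ^ 2 * φ x)
    (Qt := fun t x => 2 * U 0 t x * (- U 3 t x + F1 t x) * φ x)
    (S := fun t x => (U 1 t x ^ 2 - 2 * (U 0 t x * U 2 t x)) * φ x + 2 * (U 0 t x * U 1 t x) * φ1 x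
        - U 0 t x ^ 2 * φ2 x + 2 * p / (p + 1) * bb p U t x * φ x)
    (Sx := fun t x => 2 * U 0 t x * (- U 3 t x + F1 t x) * φ x
        - (- (3 * U 1 t x ^ 2 + 2 * p / (p + 1) * bb p U t x) * φ1 x + U 0 t x ^ 2 * φ3 x))
    (by fun_prop) (by fun_prop) (by fun_prop) ?_ ?_ ?_ ?_
  · rw [key]
    congr 1; funext z; ring
  · intro t x
    exact (((H.dt0 t x).pow 2).mul_const (φ x)).congr_deriv (by simp)
  · intro t x
    have D0 := H.dU 0 t x; have D1 := H.dU 1 t x; have D2 := H.dU 2 t x; have DB := H.db t x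
    have E0 := h.d0 x; have E1 := h.d1 x; have E2 := h.d2 x
    refine ((((((D1.pow 2).sub ((D0.mul D2).const_mul 2)).mul E0).add
      (((D0.mul D1).const_mul 2).mul E1)).sub ((D0.pow 2).mul E2)).add
      ((DB.const_mul (2 * p / (p + 1))).mul E0)).congr_deriv ?_
    have e := H.uF1 t x
    have e2 : 2 * U 0 t x * (-U 3 t x + F1 t x) * φ x
        = -2 * U 0 t x * U 3 t x * φ x + 2 * (p * (F t x * U 1 t x)) * φ x := by rw [← e]; ring
    rw [e2]
    simp
    field_simp
    ring
  · intro t x hx; simp [hs x hx]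
  · intro t x hx; simp [hs x hx, hs1 x hx, hs2 x hx]

end compactids

end GKdV

open MeasureTheory Real

namespace GKdV
open Filter Topology

lemma slab_integrable {a b C : ℝ} {g : ℝ → ℝ → ℝ}
    (hg : Continuous (fun q : ℝ × ℝ => g q.1 q.2)) (h0 : ∀ t x, 0 ≤ g t x)
    (hi : ∀ t, Integrable (fun x => g t x)) (hC : ∀ t ∈ Set.Icc a b, ∫ x, g t x ≤ C) :
    Integrable (fun z : ℝ × ℝ => g z.1 z.2) (slab a b) := by
  have hm : AEStronglyMeasurable (fun z : ℝ × ℝ => g z.1 z.2) (slab a b) :=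
    hg.aestronglyMeasurable
  unfold slab at *
  rw [integrable_prod_iff hm]
  refine ⟨Eventually.of_forall fun t => hi t, ?_⟩
  have hm2 := hm.norm.integral_prod_right'
  refine Integrable.mono' (g := fun _ => C) (integrable_const C) hm2 ?_
  filter_upwards [ae_restrict_mem measurableSet_Icc] with t ht
  have e : (fun y => ‖g (t, y).1 (t, y).2‖) = fun y => g t y := by
    funext y; simp [abs_of_nonneg (h0 t y)]
  rw [e, Real.norm_eq_abs, abs_of_nonneg (integral_nonneg (h0 t))]
  exact hC t ht

lemma slab_mono {a b : ℝ} {f g : ℝ → ℝ → ℝ}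
    (hg : Integrable (fun z : ℝ × ℝ => g z.1 z.2) (slab a b))
    (hf : Continuous (fun q : ℝ × ℝ => f q.1 q.2))
    (h : ∀ t ∈ Set.Icc a b, ∀ x, |f t x| ≤ g t x) :
    Integrable (fun z : ℝ × ℝ => f z.1 z.2) (slab a b) := by
  refine hg.mono' hf.aestronglyMeasurable ?_
  filter_upwards [ae_slab a b] with z hz
  exact h z.1 hz z.2

lemma fatou_slab {a b N : ℝ} {f : ℝ → ℝ → ℝ} {g : ℕ → ℝ → ℝ → ℝ}
    (cf : Continuous (fun q : ℝ × ℝ => f q.1 q.2))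
    (cg : ∀ n, Continuous (fun q : ℝ × ℝ => g n q.1 q.2))
    (ig : ∀ n, Integrable (fun z : ℝ × ℝ => g n z.1 z.2) (slab a b))
    (key : ∀ n, ∫ z, g n z.1 z.2 ∂(slab a b) ≤ N)
    (ng : ∀ n t x, 0 ≤ g n t x)
    (t1 : ∀ t x, Tendsto (fun n => g n t x) atTop (𝓝 (f t x))) :
    Integrable (fun z : ℝ × ℝ => f z.1 z.2) (slab a b) := by
  have nf : ∀ t x, 0 ≤ f t x := fun t x =>
    ge_of_tendsto (t1 t x) (Eventually.of_forall fun n => ng n t x)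
  refine ⟨cf.aestronglyMeasurable, ?_⟩
  rw [hasFiniteIntegral_iff_ofReal (Eventually.of_forall fun z => nf _ _)]
  have hf : ∀ z : ℝ × ℝ, ENNReal.ofReal (f z.1 z.2)
      = liminf (fun n => ENNReal.ofReal (g n z.1 z.2)) atTop := by
    intro z
    refine (Tendsto.liminf_eq ?_).symm
    exact (ENNReal.continuous_ofReal.tendsto _).comp (t1 z.1 z.2)
  simp only [hf]
  refine (lintegral_liminf_le (fun n => (cg n).measurable.ennreal_ofReal)).trans_lt ?_
  refine lt_of_le_of_lt ?_ (ENNReal.ofReal_lt_top (r := N))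
  refine liminf_le_of_le (by isBoundedDefault) ?_
  intro c hc
  obtain ⟨n, hn⟩ := hc.exists
  refine hn.trans ?_
  rw [← ofReal_integral_eq_lintegral_ofReal (ig n) (Eventually.of_forall fun z => ng n _ _)]
  exact ENNReal.ofReal_le_ofReal (key n)

/-- pass from compactly supported to bounded test functions -/
theorem glob_of_compact {Q f0 f1 f3 : ℝ → ℝ → ℝ} {φ φ1 φ2 φ3 : ℝ → ℝ} {a b C : ℝ}
    (cQ : Continuous (fun q : ℝ × ℝ => Q q.1 q.2))
    (ia : Integrable (fun x => Q a x)) (ib : Integrable (fun x => Q b x))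
    (i0 : Integrable (fun z : ℝ × ℝ => f0 z.1 z.2) (slab a b))
    (i1 : Integrable (fun z : ℝ × ℝ => f1 z.1 z.2) (slab a b))
    (i3 : Integrable (fun z : ℝ × ℝ => f3 z.1 z.2) (slab a b))
    (hc : ∀ (ψ ψ1 ψ2 ψ3 : ℝ → ℝ) (L : ℝ), T3 ψ ψ1 ψ2 ψ3 → (∀ x, L < |x| → ψ x = 0) →
      (∫ x, Q b x * ψ x) - ∫ x, Q a x * ψ x
      = ∫ z, (f0 z.1 z.2 * ψ z.2 + f1 z.1 z.2 * ψ1 z.2 + f3 z.1 z.2 * ψ3 z.2) ∂(slab a b))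
    (h : T3 φ φ1 φ2 φ3)
    (b0 : ∀ x, |φ x| ≤ C) (b1 : ∀ x, |φ1 x| ≤ C) (b2 : ∀ x, |φ2 x| ≤ C) (b3 : ∀ x, |φ3 x| ≤ C) :
    (∫ x, Q b x * φ x) - ∫ x, Q a x * φ x
      = ∫ z, (f0 z.1 z.2 * φ z.2 + f1 z.1 z.2 * φ1 z.2 + f3 z.1 z.2 * φ3 z.2) ∂(slab a b) := by
  obtain ⟨ψ, ψ1, ψ2, ψ3, L, D, hT, hL, B0, B1, B3, T0, T1, TT3⟩ := cut_approx h b0 b1 b2 b3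
  have q : ∀ y w : ℝ, |w| ≤ D → |y * w| ≤ |y| * D := fun y w hw => by
      rw [abs_mul]; exact mul_le_mul_of_nonneg_left hw (abs_nonneg _)
  have hlim : ∀ t, Integrable (fun x => Q t x) →
      Tendsto (fun n => ∫ x, Q t x * ψ n x) atTop (𝓝 (∫ x, Q t x * φ x)) := by
    intro t it
    refine tendsto_integral_of_dominated_convergence (fun x => |Q t x| * D) ?_
      (it.abs.mul_const D) ?_ ?_
    · intro n
      exact ((continuous_slice cQ t).mul (hT n).c0).aestronglyMeasurable
    · intro n
      refine Eventually.of_forall fun x => q _ _ (B0 n x)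
    · exact Eventually.of_forall fun x => (T0 x).const_mul _
  have hl := (hlim b ib).sub (hlim a ia)
  refine tendsto_nhds_unique hl ?_
  have e : ∀ n, (∫ x, Q b x * ψ n x) - ∫ x, Q a x * ψ n x = _ :=
    fun n => hc _ _ _ _ _ (hT n) (hL n)
  rw [funext e]
  refine tendsto_integral_of_dominated_convergence
    (fun z => |f0 z.1 z.2| * D + |f1 z.1 z.2| * D + |f3 z.1 z.2| * D) ?_ ?_ ?_ ?_
  · intro n
    have m0 : AEStronglyMeasurable (fun z : ℝ × ℝ => ψ n z.2) (slab a b) :=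
      ((hT n).c0.comp continuous_snd).aestronglyMeasurable
    have m1 : AEStronglyMeasurable (fun z : ℝ × ℝ => ψ1 n z.2) (slab a b) :=
      ((hT n).c1.comp continuous_snd).aestronglyMeasurable
    have m3 : AEStronglyMeasurable (fun z : ℝ × ℝ => ψ3 n z.2) (slab a b) :=
      ((hT n).c3.comp continuous_snd).aestronglyMeasurable
    exact ((i0.1.mul m0).add (i1.1.mul m1)).add (i3.1.mul m3)
  · exact ((i0.abs.mul_const D).add (i1.abs.mul_const D)).add (i3.abs.mul_const D)
  · intro n
    refine Eventually.of_forall fun z => ?_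
    rw [Real.norm_eq_abs]
    refine (abs_add_three _ _ _).trans ?_
    exact add_le_add (add_le_add (q _ _ (B0 n z.2)) (q _ _ (B1 n z.2))) (q _ _ (B3 n z.2))
  · refine Eventually.of_forall fun z => ?_
    exact (((T0 z.2).const_mul _).add ((T1 z.2).const_mul _)).add ((TT3 z.2).const_mul _)

lemma t3_primitive {g g1 g2 : ℝ → ℝ} (c : ℝ) (d0 : ∀ x, HasDerivAt g (g1 x) x)
    (d1 : ∀ x, HasDerivAt g1 (g2 x) x) (c2 : Continuous g2) :
    T3 (fun x => ∫ y in c..x, g y) g g1 g2 := by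
  have cg : Continuous g := continuous_iff_continuousAt.mpr fun x => (d0 x).continuousAt
  exact ⟨fun x => cg.integral_hasStrictDerivAt c x |>.hasDerivAt, d0, d1, c2⟩

lemma bdd_of_supp {g : ℝ → ℝ} {L : ℝ} (hg : Continuous g) (h : ∀ x, L < |x| → g x = 0) :
    ∃ C, ∀ x, |g x| ≤ C := by
  have : HasCompactSupport g := by
    refine HasCompactSupport.intro (isCompact_Icc (a := -L) (b := L)) ?_
    intro x hx
    apply h
    by_contra hcon
    push Not at hcon
    exact hx (abs_le.mp hcon)
  exact this.exists_bound_of_continuous hg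

lemma primitive_bdd {g : ℝ → ℝ} {L : ℝ} (c : ℝ) (hg : Continuous g) (h : ∀ x, L < |x| → g x = 0) :
    ∃ C, ∀ x, |∫ y in c..x, g y| ≤ C := by
  refine ⟨∫ y, |g y|, fun x => ?_⟩
  have hi := integrable_of_supp hg h
  have h1 := intervalIntegral.norm_integral_le_integral_norm_uIoc (f := g) (a := c) (b := x) (μ := volume)
  refine h1.trans ?_
  exact setIntegral_le_integral hi.norm (Eventually.of_forall fun _ => norm_nonneg _)

/-- approximations of polynomial weights of cubic growth -/
lemma weight_approx {w w1 w2 : ℝ → ℝ} {D : ℝ} (d0 : ∀ x, HasDerivAt w (w1 x) x)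
    (d1 : ∀ x, HasDerivAt w1 (w2 x) x) (c2 : Continuous w2) (hD : 0 ≤ D)
    (B0 : ∀ x, |w x| ≤ D * (1 + x ^ 2)) (B1 : ∀ x, |w1 x| ≤ D * (1 + |x|))
    (B2 : ∀ x, |w2 x| ≤ D) :
    ∃ (φ φ1 φ2 φ3 : ℕ → ℝ → ℝ) (L : ℕ → ℝ) (D' : ℝ),
      (∀ n, T3 (φ n) (φ1 n) (φ2 n) (φ3 n)) ∧ (∀ n x, L n < |x| → φ1 n x = 0) ∧
      (∀ n x, |φ n x| ≤ |x| * (D * (1 + x ^ 2))) ∧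
      (∀ x, Tendsto (fun n => φ n x) atTop (𝓝 (∫ y in (0:ℝ)..x, w y))) ∧
      (∀ n x, |φ1 n x| ≤ |w x|) ∧ (∀ n x, 0 ≤ w x → 0 ≤ φ1 n x) ∧
      (∀ x, Tendsto (fun n => φ1 n x) atTop (𝓝 (w x))) ∧
      (∀ n x, |φ3 n x| ≤ D') ∧ (∀ x, Tendsto (fun n => φ3 n x) atTop (𝓝 (w2 x))) := by
  obtain ⟨χ, χ1, χ2, χ3, K, hχ⟩ := exists_cut
  have hK := hχ.C1
  set r : ℕ → ℝ := fun n => (n : ℝ) + 1 with hr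
  have r1 : ∀ n, 1 ≤ r n := fun n => by simp [hr]
  have hrt : Tendsto r atTop atTop := tendsto_atTop_add_const_right _ _ tendsto_natCast_atTop_atTop
  have cw : Continuous w := continuous_iff_continuousAt.mpr fun x => (d0 x).continuousAt
  have cχ := hχ.t.c0
  have hdiv : ∀ n x, 2 * r n ≤ |x| → 2 ≤ |x / r n| := by
    intro n x hx
    have := r1 n
    rw [abs_div, abs_of_pos (by linarith : 0 < r n), le_div_iff₀ (by linarith)]
    exact hx
  have ev1 : ∀ x, ∀ᶠ n in atTop, |x| < r n := fun x => hrt.eventually_gt_atTop (|x|)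
  have in1 : ∀ n x, |x| ≤ r n → |x / r n| ≤ 1 := by
    intro n x hn
    have := r1 n
    rw [abs_div, abs_of_pos (by linarith : 0 < r n)]
    exact div_le_one_of_le₀ hn (by linarith)
  have hT : ∀ n, T3 (fun x => ∫ y in (0:ℝ)..x, w y * χ (y / r n)) (fun x => w x * χ (x / r n))
      (fun x => w1 x * χ (x / r n) + w x * (χ1 (x / r n) / r n))
      (fun x => w2 x * χ (x / r n) + 2 * (w1 x * (χ1 (x / r n) / r n))
        + w x * (χ2 (x / r n) / r n ^ 2)) := by
    intro n
    have k := hχ.t.dil (r n)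
    refine t3_primitive 0 (fun x => (d0 x).mul (k.d0 x)) (fun x => ?_) ?_
    · exact (((d1 x).mul (k.d0 x)).add ((d0 x).mul (k.d1 x))).congr_deriv (by ring)
    · have := k.c0; have := k.c1; have := k.c2
      have cw1 : Continuous w1 := continuous_iff_continuousAt.mpr fun x => (d1 x).continuousAt
      fun_prop
  have hle : ∀ n x, |w x * χ (x / r n)| ≤ |w x| := fun n x => by
    rw [abs_mul, abs_of_nonneg (hχ.nn _)]
    exact mul_le_of_le_one_right (abs_nonneg _) (hχ.le1 _)
  refine ⟨_, _, _, _, fun n => 2 * r n, D + 6 * D * K + 5 * D * K, hT, ?_, ?_, ?_, hle, ?_, ?_, ?_, ?_⟩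
  · intro n x hx
    rw [hχ.z0 _ (hdiv n x hx.le), mul_zero]
  · intro n x
    have h1 : ∀ y ∈ Set.uIoc 0 x, ‖w y * χ (y / r n)‖ ≤ D * (1 + x ^ 2) := by
      intro y hy
      refine (hle n y).trans ((B0 y).trans ?_)
      have : |y| ≤ |x| := by
        rcases Set.mem_uIoc.mp hy with h | h
        · rw [abs_of_pos h.1, abs_of_pos (h.1.trans_le h.2)]; exact h.2
        · rw [abs_of_nonpos h.2, abs_of_nonpos (h.1.le.trans h.2)]; linarith
      have := sq_le_sq.mpr this
      gcongr
    have := intervalIntegral.norm_integral_le_of_norm_le_const h1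
    rw [sub_zero, mul_comm] at this
    exact this
  · intro x
    refine tendsto_const_nhds.congr' ?_
    filter_upwards [ev1 x] with n hn
    refine intervalIntegral.integral_congr fun y hy => ?_
    have : |y| ≤ |x| := by
      rcases Set.mem_uIcc.mp hy with h | h
      · rw [abs_of_nonneg h.1, abs_of_nonneg (h.1.trans h.2)]; exact h.2
      · rw [abs_of_nonpos h.2, abs_of_nonpos (h.1.trans h.2)]; linarith
    simp [hχ.one _ (in1 n y (this.trans hn.le))]
  · intro n x h
    exact mul_nonneg h (hχ.nn _)
  · intro x
    refine tendsto_const_nhds.congr' ?_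
    filter_upwards [ev1 x] with n hn
    simp [hχ.one _ (in1 n x hn.le)]
  · intro n x
    have hr0 : 0 < r n := by linarith [r1 n]
    have g0 : |w2 x * χ (x / r n)| ≤ D := by
      rw [abs_mul, abs_of_nonneg (hχ.nn _)]
      exact (mul_le_of_le_one_right (abs_nonneg _) (hχ.le1 _)).trans (B2 x)
    have g1 : |w1 x * (χ1 (x / r n) / r n)| ≤ 3 * D * K := by
      rcases le_or_gt (2 * r n) |x| with h | h
      · rw [hχ.z1 _ (hdiv n x h)]; simp; positivity
      · rw [abs_mul, abs_div, abs_of_pos hr0, ← mul_div_assoc, div_le_iff₀ hr0]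
        calc |w1 x| * |χ1 (x / r n)| ≤ (D * (1 + |x|)) * K :=
              mul_le_mul (B1 x) (hχ.b1 _) (abs_nonneg _) (by positivity)
          _ ≤ (D * (r n + 2 * r n)) * K := by gcongr; exact r1 n
          _ = _ := by ring
    have g2 : |w x * (χ2 (x / r n) / r n ^ 2)| ≤ 5 * D * K := by
      rcases le_or_gt (2 * r n) |x| with h | h
      · rw [hχ.z2 _ (hdiv n x h)]; simp; positivity
      · have hr2 : 0 < r n ^ 2 := by positivity
        rw [abs_mul, abs_div, abs_of_pos hr2, ← mul_div_assoc, div_le_iff₀ hr2]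
        calc |w x| * |χ2 (x / r n)| ≤ (D * (1 + x ^ 2)) * K :=
              mul_le_mul (B0 x) (hχ.b2 _) (abs_nonneg _) (by positivity)
          _ ≤ (D * (r n ^ 2 + 4 * r n ^ 2)) * K := by
              have h1 : 1 ≤ r n ^ 2 := one_le_pow₀ (r1 n)
              have h2 : x ^ 2 ≤ 4 * r n ^ 2 := by
                have := pow_le_pow_left₀ (abs_nonneg x) h.le 2
                rw [sq_abs] at this
                linarith
              gcongr
          _ = _ := by ring
    rw [abs_le] at *
    constructor <;> linarith [g0.1, g0.2, g1.1, g1.2, g2.1, g2.2]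
  · intro x
    have hd1 : χ1 =ᶠ[𝓝 0] fun _ => 0 := by
      have h0 : χ =ᶠ[𝓝 0] fun _ => 1 := by
        have : ∀ᶠ y : ℝ in 𝓝 0, |y| < 1 :=
          (continuous_abs.tendsto 0).eventually (gt_mem_nhds (by simp))
        filter_upwards [this] with y hy
        exact hχ.one y hy.le
      filter_upwards [h0.eventuallyEq_nhds] with y hy
      exact (hχ.t.d0 y).unique ((hasDerivAt_const y (1:ℝ)).congr_of_eventuallyEq hy)
    have hd2 : χ2 =ᶠ[𝓝 0] fun _ => 0 := by
      filter_upwards [hd1.eventuallyEq_nhds] with y hy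
      exact (hχ.t.d1 y).unique ((hasDerivAt_const y (0:ℝ)).congr_of_eventuallyEq hy)
    have hx0 : Tendsto (fun n => x / r n) atTop (𝓝 0) := tendsto_const_nhds.div_atTop hrt
    refine tendsto_const_nhds.congr' ?_
    filter_upwards [ev1 x, hx0.eventually hd1, hx0.eventually hd2] with n hn k1 k2
    rw [hχ.one _ (in1 n x hn.le), k1, k2]
    simp

/-- data: flux identity valid for bounded test functions with compactly supported derivative -/
def FluxId (Q J E : ℝ → ℝ → ℝ) (a b : ℝ) : Prop :=
  ∀ (φ φ1 φ2 φ3 : ℝ → ℝ) (L : ℝ), T3 φ φ1 φ2 φ3 → (∀ x, L < |x| → φ1 x = 0) →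
    (∃ C, ∀ x, |φ x| ≤ C) →
    (∫ x, Q b x * φ x) - ∫ x, Q a x * φ x
      = ∫ z, (- J z.1 z.2 * φ1 z.2 + E z.1 z.2 * φ3 z.2) ∂(slab a b)

section flux
variable {Q J E : ℝ → ℝ → ℝ} {a b : ℝ} {w w1 w2 : ℝ → ℝ} {D : ℝ}

lemma phi_bdd {φ φ1 φ2 φ3 : ℝ → ℝ} {L : ℝ} (h : T3 φ φ1 φ2 φ3) (hs : ∀ x, L < |x| → φ1 x = 0) :
    ∃ C, ∀ x, |φ x| ≤ C := by
  obtain ⟨C, hC⟩ := primitive_bdd 0 h.c1 hs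
  refine ⟨C + |φ 0|, fun x => ?_⟩
  have := intervalIntegral.integral_eq_sub_of_hasDerivAt (a := 0) (b := x) (fun y _ => h.d0 y)
    (h.c1.intervalIntegrable _ _)
  have h2 : φ x = (∫ y in (0:ℝ)..x, φ1 y) + φ 0 := by rw [this]; ring
  rw [h2]
  exact (abs_add_le _ _).trans (by linarith [hC x])

lemma rapid_weight {q : ℝ → ℝ} (hq : Rapid q) (D : ℝ) :
    Integrable (fun x => |q x| * (|x| * (D * (1 + x ^ 2)))) := by
  have h1 := hq.mulX.abs
  have h3 := hq.mulX.mulX.mulX.abs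
  refine ((h1.add h3).const_mul D).integrable.congr (Eventually.of_forall fun x => ?_)
  simp only [abs_mul]
  have : x ^ 2 = |x| * |x| := by rw [← abs_mul, ← pow_two, abs_of_nonneg (sq_nonneg x)]
  rw [this]; ring

theorem FluxId.fatou (H : FluxId Q J E a b)
    (cJ : Continuous (fun q : ℝ × ℝ => J q.1 q.2)) (nJ : ∀ t x, 0 ≤ J t x)
    (iE : Integrable (fun z : ℝ × ℝ => E z.1 z.2) (slab a b))
    (ra : Rapid (fun x => Q a x)) (rb : Rapid (fun x => Q b x))
    (d0 : ∀ x, HasDerivAt w (w1 x) x)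
    (d1 : ∀ x, HasDerivAt w1 (w2 x) x) (c2 : Continuous w2) (hD : 0 ≤ D)
    (B0 : ∀ x, |w x| ≤ D * (1 + x ^ 2)) (B1 : ∀ x, |w1 x| ≤ D * (1 + |x|))
    (B2 : ∀ x, |w2 x| ≤ D) (hw : ∀ x, 0 ≤ w x) :
    Integrable (fun z : ℝ × ℝ => J z.1 z.2 * w z.2) (slab a b) := by
  obtain ⟨φ, φ1, φ2, φ3, L, D', hT, hL, b0, _, _, n1, t1, b3, _⟩ :=
    weight_approx d0 d1 c2 hD B0 B1 B2
  have cw : Continuous w := continuous_iff_continuousAt.mpr fun x => (d0 x).continuousAt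
  have cJw : Continuous (fun q : ℝ × ℝ => J q.1 q.2 * w q.2) := cJ.mul (cw.comp continuous_snd)
  have cJn : ∀ n, Continuous (fun q : ℝ × ℝ => J q.1 q.2 * φ1 n q.2) := fun n =>
    cJ.mul ((hT n).c1.comp continuous_snd)
  have iJ : ∀ n, Integrable (fun z : ℝ × ℝ => J z.1 z.2 * φ1 n z.2) (slab a b) := fun n =>
    integrable_slab_of_supp (g := fun t x => J t x * φ1 n x) (cJn n) (L := L n)
      (fun t x hx => by simp [hL n x hx])
  have iE3 : ∀ n, Integrable (fun z : ℝ × ℝ => E z.1 z.2 * φ3 n z.2) (slab a b) := fun n =>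
    iE.mul_bdd (c := D') ((hT n).c3.comp continuous_snd).aestronglyMeasurable
      (Eventually.of_forall fun z => b3 n z.2)
  set N := (∫ x, |Q b x| * (|x| * (D * (1 + x ^ 2)))) + (∫ x, |Q a x| * (|x| * (D * (1 + x ^ 2))))
    + ∫ z, |E z.1 z.2| * D' ∂(slab a b) with hN
  have bQ : ∀ n t, Rapid (fun x => Q t x) →
      |∫ x, Q t x * φ n x| ≤ ∫ x, |Q t x| * (|x| * (D * (1 + x ^ 2))) := by
    intro n t rt
    rw [← Real.norm_eq_abs]
    refine norm_integral_le_of_norm_le (rapid_weight rt D) (Eventually.of_forall fun x => ?_)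
    rw [norm_mul]
    exact mul_le_mul_of_nonneg_left (b0 n x) (abs_nonneg _)
  have bE : ∀ n, |∫ z, E z.1 z.2 * φ3 n z.2 ∂(slab a b)| ≤ ∫ z, |E z.1 z.2| * D' ∂(slab a b) := by
    intro n
    rw [← Real.norm_eq_abs]
    refine norm_integral_le_of_norm_le (iE.abs.mul_const D') (Eventually.of_forall fun x => ?_)
    rw [norm_mul]
    exact mul_le_mul_of_nonneg_left (b3 n _) (abs_nonneg _)
  have key : ∀ n, ∫ z, J z.1 z.2 * φ1 n z.2 ∂(slab a b) ≤ N := by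
    intro n
    have h := H _ _ _ _ _ (hT n) (hL n) (phi_bdd (hT n) (hL n))
    have e : ∫ z, (- J z.1 z.2 * φ1 n z.2 + E z.1 z.2 * φ3 n z.2) ∂(slab a b)
        = - (∫ z, J z.1 z.2 * φ1 n z.2 ∂(slab a b)) + ∫ z, E z.1 z.2 * φ3 n z.2 ∂(slab a b) := by
      have h1 := integral_sub (iE3 n) (iJ n)
      rw [neg_add_eq_sub, ← h1]
      congr 1; funext z; ring
    rw [e] at h
    have h1 := abs_le.mp (bQ n a ra)
    have h2 := abs_le.mp (bQ n b rb)
    have h3 := abs_le.mp (bE n)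
    rw [hN]
    linarith [h1.1, h1.2, h2.1, h2.2, h3.1, h3.2]
  exact fatou_slab (f := fun t x => J t x * w x) (g := fun n t x => J t x * φ1 n x) cJw cJn iJ key (fun n t x => mul_nonneg (nJ _ _) (n1 n _ (hw _)))
    (fun t x => (t1 x).const_mul _)

theorem FluxId.weight (H : FluxId Q J E a b)
    (cJ : Continuous (fun q : ℝ × ℝ => J q.1 q.2))
    (iE : Integrable (fun z : ℝ × ℝ => E z.1 z.2) (slab a b))
    (ra : Rapid (fun x => Q a x)) (rb : Rapid (fun x => Q b x))
    (d0 : ∀ x, HasDerivAt w (w1 x) x)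
    (d1 : ∀ x, HasDerivAt w1 (w2 x) x) (c2 : Continuous w2) (hD : 0 ≤ D)
    (B0 : ∀ x, |w x| ≤ D * (1 + x ^ 2)) (B1 : ∀ x, |w1 x| ≤ D * (1 + |x|))
    (B2 : ∀ x, |w2 x| ≤ D)
    (iJ : Integrable (fun z : ℝ × ℝ => J z.1 z.2 * w z.2) (slab a b)) :
    (∫ x, Q b x * ∫ y in (0:ℝ)..x, w y) - (∫ x, Q a x * ∫ y in (0:ℝ)..x, w y)
      = ∫ z, (- J z.1 z.2 * w z.2 + E z.1 z.2 * w2 z.2) ∂(slab a b) := by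
  obtain ⟨φ, φ1, φ2, φ3, L, D', hT, hL, b0, t0, b1, _, t1, b3, t3⟩ :=
    weight_approx d0 d1 c2 hD B0 B1 B2
  have cw : Continuous w := continuous_iff_continuousAt.mpr fun x => (d0 x).continuousAt
  have hlim : ∀ t, Rapid (fun x => Q t x) →
      Tendsto (fun n => ∫ x, Q t x * φ n x) atTop (𝓝 (∫ x, Q t x * ∫ y in (0:ℝ)..x, w y)) := by
    intro t it
    refine tendsto_integral_of_dominated_convergence _ ?_ (rapid_weight it D) ?_ ?_
    · intro n
      exact (it.c.mul (hT n).c0).aestronglyMeasurable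
    · intro n
      refine Eventually.of_forall fun x => ?_
      rw [norm_mul]
      exact mul_le_mul_of_nonneg_left (b0 n x) (abs_nonneg _)
    · exact Eventually.of_forall fun x => (t0 x).const_mul _
  refine tendsto_nhds_unique ((hlim b rb).sub (hlim a ra)) ?_
  have e : ∀ n, (∫ x, Q b x * φ n x) - ∫ x, Q a x * φ n x = _ :=
    fun n => H _ _ _ _ _ (hT n) (hL n) (phi_bdd (hT n) (hL n))
  rw [funext e]
  refine tendsto_integral_of_dominated_convergence
    (fun z => |J z.1 z.2 * w z.2| + |E z.1 z.2| * D') ?_ ?_ ?_ ?_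
  · intro n
    have m1 : AEStronglyMeasurable (fun z : ℝ × ℝ => - J z.1 z.2 * φ1 n z.2) (slab a b) :=
      (cJ.neg.mul ((hT n).c1.comp continuous_snd)).aestronglyMeasurable
    have m3 : AEStronglyMeasurable (fun z : ℝ × ℝ => φ3 n z.2) (slab a b) :=
      ((hT n).c3.comp continuous_snd).aestronglyMeasurable
    exact m1.add (iE.1.mul m3)
  · exact iJ.abs.add (iE.abs.mul_const D')
  · intro n
    refine Eventually.of_forall fun z => ?_
    rw [Real.norm_eq_abs]
    refine (abs_add_le _ _).trans (add_le_add ?_ ?_)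
    · rw [abs_mul, abs_neg, abs_mul]
      exact mul_le_mul_of_nonneg_left (b1 n _) (abs_nonneg _)
    · rw [abs_mul]
      exact mul_le_mul_of_nonneg_left (b3 n _) (abs_nonneg _)
  · exact Eventually.of_forall fun z => ((t1 z.2).const_mul _).add ((t3 z.2).const_mul _)
end flux

end GKdV

open MeasureTheory Real

namespace GKdV
open Filter Topology

lemma Rapid.integral_deriv_zero {g g1 : ℝ → ℝ} (hg : Rapid g) (hg1 : Rapid g1)
    (hd : ∀ x, HasDerivAt g (g1 x) x) : ∫ x, g1 x = 0 :=
  integral_eq_zero_of_hasDerivAt_of_integrable hd hg1.integrable hg.integrable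

lemma Rapid.sq_le {g g1 : ℝ → ℝ} (hg : Rapid g) (hg1 : Rapid g1)
    (hd : ∀ x, HasDerivAt g (g1 x) x) (x : ℝ) : g x ^ 2 ≤ ∫ y, (g y ^ 2 + g1 y ^ 2) := by
  have r2 : Rapid (fun y => 2 * (g y * g1 y)) := (hg.mul hg1).const_mul 2
  have hd2 : ∀ y, HasDerivAt (fun y => g y ^ 2) (2 * (g y * g1 y)) y := fun y =>
    ((hd y).pow 2).congr_deriv (by simp; ring)
  have hz : Tendsto (fun y => g y ^ 2) atBot (𝓝 0) :=
    tendsto_zero_of_hasDerivAt_of_integrableOn_Iic (a := x) (fun y _ => hd2 y)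
      r2.integrable.integrableOn hg.sq.integrable.integrableOn
  have h1 := integral_Iic_of_hasDerivAt_of_tendsto' (a := x) (fun y _ => hd2 y)
    r2.integrable.integrableOn hz
  have hi := (hg.sq.add hg1.sq).integrable
  rw [sub_zero] at h1
  rw [← h1]
  calc ∫ y in Set.Iic x, 2 * (g y * g1 y) ≤ ∫ y in Set.Iic x, (g y ^ 2 + g1 y ^ 2) := by
        refine integral_mono r2.integrable.integrableOn hi.integrableOn fun y => ?_
        simp only
        nlinarith [sq_nonneg (g y - g1 y)]
    _ ≤ _ := setIntegral_le_integral hi (Eventually.of_forall fun y => by positivity)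

section defs
variable (p : ℝ) (U : ℕ → ℝ → ℝ → ℝ) (F F1 : ℝ → ℝ → ℝ)

/-- energy density -/
noncomputable def ee (t x : ℝ) : ℝ := 1 / 2 * U 1 t x ^ 2 + bb p U t x / (p + 1)
/-- mass flux -/
noncomputable def jj (t x : ℝ) : ℝ := 3 * U 1 t x ^ 2 + 2 * p / (p + 1) * bb p U t x
/-- energy flux -/
noncomputable def KK (t x : ℝ) : ℝ :=
  3 / 2 * U 2 t x ^ 2 + 2 * (U 1 t x * F1 t x) + 1 / 2 * F t x ^ 2
/-- mass plus energy -/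
noncomputable def ff (t : ℝ) : ℝ := ∫ x, (U 0 t x ^ 2 + ee p U t x)
end defs

namespace Sol
variable {p : ℝ} {U : ℕ → ℝ → ℝ → ℝ} {F F1 F2 : ℝ → ℝ → ℝ} {a b C : ℝ}

lemma ce (H : Sol p U F F1 F2) : Continuous (fun q : ℝ × ℝ => ee p U q.1 q.2) := by
  have := H.cU 1; have := H.cb; unfold ee; fun_prop
lemma cj (H : Sol p U F F1 F2) : Continuous (fun q : ℝ × ℝ => jj p U q.1 q.2) := by
  have := H.cU 1; have := H.cb; unfold jj; fun_prop
lemma cK (H : Sol p U F F1 F2) : Continuous (fun q : ℝ × ℝ => KK U F F1 q.1 q.2) := by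
  have := H.cU 1; have := H.cU 2; have := H.cF; have := H.cF1; unfold KK; fun_prop

lemma e_nn (H : Sol p U F F1 F2) (t x : ℝ) : 0 ≤ ee p U t x := by
  have := H.b_nn t x; have := H.hp1
  unfold ee; positivity
lemma j_nn (H : Sol p U F F1 F2) (t x : ℝ) : 0 ≤ jj p U t x := by
  have := H.b_nn t x; have := H.hp1
  unfold jj; positivity
lemma K_nn (H : Sol p U F F1 F2) (t x : ℝ) : 0 ≤ KK U F F1 t x := by
  have := H.u1F1_nn t x
  unfold KK; positivity

lemma re (H : Sol p U F F1 F2) (t : ℝ) : Rapid (fun x => ee p U t x) := by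
  have h := ((H.rU 1 t).sq.const_mul (1/2)).add ((H.rb t).const_mul (p + 1)⁻¹)
  have e : (fun x => ee p U t x) = fun x => 1 / 2 * U 1 t x ^ 2 + (p + 1)⁻¹ * bb p U t x := by
    funext x; unfold ee; ring
  rw [e]; exact h
lemma rj (H : Sol p U F F1 F2) (t : ℝ) : Rapid (fun x => jj p U t x) :=
  ((H.rU 1 t).sq.const_mul 3).add ((H.rb t).const_mul (2 * p / (p + 1)))
lemma rK (H : Sol p U F F1 F2) (t : ℝ) : Rapid (fun x => KK U F F1 t x) :=
  (((H.rU 2 t).sq.const_mul (3/2)).add (((H.rU 1 t).mul (H.rF1 t)).const_mul 2)).add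
    ((H.rF t).sq.const_mul (1/2))

lemma rff (H : Sol p U F F1 F2) (t : ℝ) : Rapid (fun x => U 0 t x ^ 2 + ee p U t x) :=
  (H.rU 0 t).sq.add (H.re t)

/-- pointwise bounds -/
lemma exists_lam (H : Sol p U F F1 F2) (hB : ∀ t ∈ Set.Icc a b, ff p U t ≤ C) :
    ∃ Λ, 0 ≤ Λ ∧ (∀ t ∈ Set.Icc a b, ∀ x, |F t x| ≤ Λ * |U 0 t x|) ∧
      (∀ t ∈ Set.Icc a b, ∀ x, |F1 t x| ≤ Λ * |U 1 t x|) ∧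
      (∀ t ∈ Set.Icc a b, ∀ x, bb p U t x ≤ Λ * U 0 t x ^ 2) := by
  have hp := H.hp1
  have hN : ∀ t ∈ Set.Icc a b, ∀ x, |U 0 t x| ≤ √(2 * C) := by
    intro t ht x
    apply Real.abs_le_sqrt
    refine ((H.rU 0 t).sq_le (H.rU 1 t) (H.dU 0 t) x).trans ?_
    calc ∫ y, (U 0 t y ^ 2 + U 1 t y ^ 2) ≤ ∫ y, 2 * (U 0 t y ^ 2 + ee p U t y) := by
          refine integral_mono ((H.rU 0 t).sq.add (H.rU 1 t).sq).integrable
            ((H.rff t).const_mul 2).integrable fun y => ?_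
          have h1 : 0 ≤ bb p U t y / (p + 1) := div_nonneg (H.b_nn t y) (by linarith)
          simp only [ee]
          nlinarith [sq_nonneg (U 0 t y)]
      _ = 2 * ff p U t := by rw [integral_const_mul]; rfl
      _ ≤ 2 * C := by linarith [hB t ht]
  set Λ := (√(2 * C)) ^ (p - 1) with hΛ
  have hΛ0 : 0 ≤ Λ := by positivity
  have hA : ∀ t ∈ Set.Icc a b, ∀ x, |U 0 t x| ^ (p - 1) ≤ Λ := fun t ht x =>
    Real.rpow_le_rpow (abs_nonneg _) (hN t ht x) (by linarith)
  have hF : ∀ t ∈ Set.Icc a b, ∀ x, |F t x| ≤ Λ * |U 0 t x| := by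
    intro t ht x
    rw [H.eF, abs_mul, abs_of_nonneg (a := |U 0 t x| ^ (p - 1)) (by positivity)]
    gcongr
    exact hA t ht x
  have hl : Λ ≤ p * Λ := by nlinarith
  refine ⟨p * Λ, by positivity, ?_, ?_, ?_⟩
  · intro t ht x
    exact (hF t ht x).trans (by gcongr)
  · intro t ht x
    rw [H.eF1, abs_mul, abs_mul, abs_of_nonneg (a := |U 0 t x| ^ (p - 1)) (by positivity),
      abs_of_pos (by linarith : 0 < p)]
    have := hA t ht x
    gcongr
  · intro t ht x
    rw [← H.uF]
    refine (le_abs_self _).trans ?_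
    rw [abs_mul, ← sq_abs]
    have h1 := (hF t ht x).trans (mul_le_mul_of_nonneg_right hl (abs_nonneg (U 0 t x)))
    calc |U 0 t x| * |F t x| ≤ |U 0 t x| * (p * Λ * |U 0 t x|) := by gcongr
      _ = _ := by ring

lemma i_ff (H : Sol p U F F1 F2) (hB : ∀ t ∈ Set.Icc a b, ff p U t ≤ C) :
    Integrable (fun z : ℝ × ℝ => U 0 z.1 z.2 ^ 2 + ee p U z.1 z.2) (slab a b) :=
  slab_integrable (g := fun t x => U 0 t x ^ 2 + ee p U t x) (((H.cU 0).pow 2).add H.ce)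
    (fun t x => add_nonneg (sq_nonneg _) (H.e_nn t x)) (fun t => (H.rff t).integrable) hB

lemma i_rho (H : Sol p U F F1 F2) (hB : ∀ t ∈ Set.Icc a b, ff p U t ≤ C) :
    Integrable (fun z : ℝ × ℝ => U 0 z.1 z.2 ^ 2) (slab a b) :=
  slab_mono (f := fun t x => U 0 t x ^ 2) (g := fun t x => U 0 t x ^ 2 + ee p U t x)
    (H.i_ff hB) ((H.cU 0).pow 2)
    (fun t _ x => by rw [abs_of_nonneg (sq_nonneg _)]; linarith [H.e_nn t x])

lemma i_e (H : Sol p U F F1 F2) (hB : ∀ t ∈ Set.Icc a b, ff p U t ≤ C) :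
    Integrable (fun z : ℝ × ℝ => ee p U z.1 z.2) (slab a b) :=
  slab_mono (f := fun t x => ee p U t x) (g := fun t x => U 0 t x ^ 2 + ee p U t x)
    (H.i_ff hB) H.ce
    (fun t _ x => by rw [abs_of_nonneg (H.e_nn t x)]; nlinarith [sq_nonneg (U 0 t x)])

lemma i_b (H : Sol p U F F1 F2) (hB : ∀ t ∈ Set.Icc a b, ff p U t ≤ C) :
    Integrable (fun z : ℝ × ℝ => bb p U z.1 z.2) (slab a b) := by
  have h := (H.i_e hB).const_mul (p + 1)
  refine slab_mono (f := fun t x => bb p U t x) (g := fun t x => (p + 1) * ee p U t x)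
    h H.cb (fun t _ x => ?_)
  have hp : 0 < p + 1 := by linarith [H.hp1]
  rw [abs_of_nonneg (H.b_nn t x)]
  have e : (p + 1) * ee p U t x = (p + 1) * (1 / 2 * U 1 t x ^ 2) + bb p U t x := by
    unfold ee; field_simp
  rw [e]
  have : 0 ≤ (p + 1) * (1 / 2 * U 1 t x ^ 2) := by positivity
  linarith

lemma i_u1 (H : Sol p U F F1 F2) (hB : ∀ t ∈ Set.Icc a b, ff p U t ≤ C) :
    Integrable (fun z : ℝ × ℝ => U 1 z.1 z.2 ^ 2) (slab a b) := by
  have h := (H.i_e hB).const_mul 2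
  refine slab_mono (f := fun t x => U 1 t x ^ 2) (g := fun t x => 2 * ee p U t x)
    h ((H.cU 1).pow 2) (fun t _ x => ?_)
  rw [abs_of_nonneg (sq_nonneg _)]
  have : 0 ≤ bb p U t x / (p + 1) := div_nonneg (H.b_nn t x) (by linarith [H.hp1])
  unfold ee; linarith

lemma i_j (H : Sol p U F F1 F2) (hB : ∀ t ∈ Set.Icc a b, ff p U t ≤ C) :
    Integrable (fun z : ℝ × ℝ => jj p U z.1 z.2) (slab a b) :=
  ((H.i_u1 hB).const_mul 3).add ((H.i_b hB).const_mul (2 * p / (p + 1)))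

lemma bdd_all {φ φ1 φ2 φ3 : ℝ → ℝ} {L : ℝ} (h : T3 φ φ1 φ2 φ3) (hs : ∀ x, L < |x| → φ1 x = 0)
    (hb : ∃ C, ∀ x, |φ x| ≤ C) : ∃ C, (∀ x, |φ x| ≤ C) ∧ (∀ x, |φ1 x| ≤ C) ∧ (∀ x, |φ2 x| ≤ C) ∧
      (∀ x, |φ3 x| ≤ C) := by
  obtain ⟨C0, h0⟩ := hb
  obtain ⟨C1, h1⟩ := bdd_of_supp h.c1 hs
  have hs2 := deriv_supp h.d1 hs
  obtain ⟨C2, h2⟩ := bdd_of_supp h.c2 hs2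
  obtain ⟨C3, h3⟩ := bdd_of_supp h.c3 (deriv_supp h.d2 hs2)
  refine ⟨max (max C0 C1) (max C2 C3), fun x => ?_, fun x => ?_, fun x => ?_, fun x => ?_⟩
  · exact (h0 x).trans (by simp)
  · exact (h1 x).trans (by simp)
  · exact (h2 x).trans (by simp)
  · exact (h3 x).trans (by simp)

theorem m_flux (H : Sol p U F F1 F2) (hab : a ≤ b) (hB : ∀ t ∈ Set.Icc a b, ff p U t ≤ C) :
    FluxId (fun t x => U 0 t x ^ 2) (jj p U) (fun t x => U 0 t x ^ 2) a b := by
  intro φ φ1 φ2 φ3 L hT hs hb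
  obtain ⟨D, k0, k1, k2, k3⟩ := bdd_all hT hs hb
  have := glob_of_compact (Q := fun t x => U 0 t x ^ 2) (f0 := fun _ _ => 0)
    (f1 := fun t x => - jj p U t x) (f3 := fun t x => U 0 t x ^ 2) (a := a) (b := b)
    ((H.cU 0).pow 2) (H.rU 0 a).sq.integrable (H.rU 0 b).sq.integrable (integrable_zero _ _ _)
    (H.i_j hB).neg (H.i_rho hB) (fun ψ ψ1 ψ2 ψ3 L hT hL => by
      have := H.m_compact hT hab hL
      rw [this]
      congr 1; funext z; unfold jj; ring) hT k0 k1 k2 k3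
  rw [this]
  congr 1; funext z; ring

lemma one_weight : (∀ x : ℝ, HasDerivAt (fun x : ℝ => 1 + x ^ 2) (2 * x) x) ∧
    (∀ x : ℝ, HasDerivAt (fun x : ℝ => 2 * x) 2 x) := by
  refine ⟨fun x => ?_, fun x => ?_⟩
  · exact ((hasDerivAt_pow 2 x).const_add 1).congr_deriv (by simp)
  · exact ((hasDerivAt_id x).const_mul 2).congr_deriv (by simp)

theorem i_jw (H : Sol p U F F1 F2) (hab : a ≤ b) (hB : ∀ t ∈ Set.Icc a b, ff p U t ≤ C) :
    Integrable (fun z : ℝ × ℝ => jj p U z.1 z.2 * (1 + z.2 ^ 2)) (slab a b) := by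
  refine (H.m_flux hab hB).fatou (w := fun x => 1 + x ^ 2) (w1 := fun x => 2 * x)
    (w2 := fun _ => 2) (D := 2) H.cj H.j_nn (H.i_rho hB) (H.rU 0 a).sq (H.rU 0 b).sq
    one_weight.1 one_weight.2 continuous_const (by norm_num) ?_ ?_ ?_ ?_
  · intro x; rw [abs_of_nonneg (by positivity)]; nlinarith [sq_nonneg x]
  · intro x; rw [abs_mul]; simp
  · intro x; simp
  · intro x; positivity

theorem e_compact (H : Sol p U F F1 F2) {φ φ1 φ2 φ3 : ℝ → ℝ} (h : T3 φ φ1 φ2 φ3) {L : ℝ}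
    (hab : a ≤ b) (hs : ∀ x, L < |x| → φ x = 0) :
    (∫ x, ee p U b x * φ x) - ∫ x, ee p U a x * φ x
      = ∫ z, (- KK U F F1 z.1 z.2 * φ1 z.2 + ee p U z.1 z.2 * φ3 z.2) ∂(slab a b) := by
  have h1 := H.pair1.compact h hab hs
  have h2 := H.b_compact h hab hs
  have hs1 := deriv_supp h.d0 hs
  have hs3 := deriv_supp h.d2 (deriv_supp h.d1 hs1)
  obtain ⟨D, hD⟩ := bdd_of_supp h.c0 hs
  have iu : ∀ t, Integrable (fun x => U 1 t x ^ 2 * φ x) := fun t =>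
    ((H.rU 1 t).sq.mulBdd' h.c0 hD).integrable
  have ib : ∀ t, Integrable (fun x => bb p U t x / (p + 1) * φ x) := fun t => by
    have := (((H.rb t).mulBdd' h.c0 hD).const_mul (p + 1)⁻¹).integrable
    refine this.congr (Eventually.of_forall fun x => ?_)
    simp only; ring
  have e : ∀ t, ∫ x, ee p U t x * φ x
      = 1 / 2 * (∫ x, U 1 t x ^ 2 * φ x) + ∫ x, bb p U t x / (p + 1) * φ x := by
    intro t
    rw [← integral_const_mul, ← integral_add ((iu t).const_mul _) (ib t)]
    congr 1; funext x; unfold ee; ring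
  rw [e, e]
  have h3 : 1 / 2 * (∫ x, U 1 b x ^ 2 * φ x) + (∫ x, bb p U b x / (p + 1) * φ x)
      - (1 / 2 * (∫ x, U 1 a x ^ 2 * φ x) + ∫ x, bb p U a x / (p + 1) * φ x)
      = 1 / 2 * ((∫ x, U 1 b x ^ 2 * φ x) - ∫ x, U 1 a x ^ 2 * φ x)
       + ((∫ x, bb p U b x / (p + 1) * φ x) - ∫ x, bb p U a x / (p + 1) * φ x) := by ring
  rw [h3, h1, h2, ← integral_const_mul, ← integral_add]
  · congr 1; funext z; unfold KK ee; ring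
  · have := H.cU 1; have := H.cU 2; have := H.cF1; have := h.c0; have := h.c1; have := h.c3
    exact integrable_slab_of_supp (L := L) (g := fun t x => 1 / 2 * (-3 * U 2 t x ^ 2 * φ1 x
      + U 1 t x ^ 2 * φ3 x - 2 * (U 2 t x * F1 t x) * φ x - 2 * (U 1 t x * F1 t x) * φ1 x))
      (by fun_prop) (fun t x hx => by simp [hs x hx, hs1 x hx, hs3 x hx])
  · have := H.cU 1; have := H.cU 2; have := H.cF1; have := H.cF; have := H.cb
    have := h.c0; have := h.c1; have := h.c3
    exact integrable_slab_of_supp (L := L) (g := fun t x => (U 2 t x * F1 t x) * φ x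
      - (U 1 t x * F1 t x) * φ1 x - 1 / 2 * F t x ^ 2 * φ1 x + bb p U t x / (p + 1) * φ3 x)
      (by fun_prop) (fun t x hx => by simp [hs x hx, hs1 x hx, hs3 x hx])

end Sol
end GKdV

open MeasureTheory Real

namespace GKdV
open Filter Topology

/-- integrable weight -/
noncomputable def WW (x : ℝ) : ℝ := (1 + x ^ 2)⁻¹

lemma WW_pos (x : ℝ) : 0 < WW x := by unfold WW; positivity
lemma WW_le (x : ℝ) : WW x ≤ 1 := by
  unfold WW; apply inv_le_one_of_one_le₀; nlinarith [sq_nonneg x]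
lemma WW_mul (x : ℝ) : (1 + x ^ 2) * WW x = 1 := by unfold WW; field_simp
lemma WW_d0 (x : ℝ) : HasDerivAt WW (-2 * x * WW x ^ 2) x := by
  have h : HasDerivAt (fun x : ℝ => 1 + x ^ 2) (2 * x) x := Sol.one_weight.1 x
  exact (h.fun_inv (by positivity)).congr_deriv (by unfold WW; field_simp)
lemma WW_d1 (x : ℝ) :
    HasDerivAt (fun x => -2 * x * WW x ^ 2) (-2 * WW x ^ 2 + 8 * x ^ 2 * WW x ^ 3) x := by
  have h : HasDerivAt (fun x : ℝ => -2 * x) (-2) x :=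
    ((hasDerivAt_id x).const_mul (-2)).congr_deriv (by simp)
  exact (h.mul ((WW_d0 x).pow 2)).congr_deriv (by simp; ring)
lemma WW_c : Continuous WW := continuous_iff_continuousAt.mpr fun x => (WW_d0 x).continuousAt
lemma WW_b1 (x : ℝ) : |-2 * x * WW x ^ 2| ≤ 1 := by
  have h1 := WW_pos x; have h2 := WW_le x; have h3 := WW_mul x
  have h4 : |x| * WW x ≤ 1 / 2 := by
    have : 2 * |x| ≤ 1 + x ^ 2 := by nlinarith [sq_nonneg (|x| - 1), sq_abs x]
    nlinarith
  rw [abs_mul, abs_mul, abs_of_pos (pow_pos h1 2)]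
  simp only [abs_neg, abs_two]
  have h5 : 0 ≤ |x| * WW x := by positivity
  nlinarith
lemma WW_b2 (x : ℝ) : |-2 * WW x ^ 2 + 8 * x ^ 2 * WW x ^ 3| ≤ 10 := by
  have h1 := WW_pos x; have h2 := WW_le x; have h3 := WW_mul x
  have h4 : x ^ 2 * WW x ≤ 1 := by nlinarith
  have h5 : 0 ≤ x ^ 2 * WW x := by positivity
  have h6 : WW x ^ 2 ≤ 1 := pow_le_one₀ h1.le h2
  have h7 : 0 ≤ WW x ^ 2 := by positivity
  have e : 8 * x ^ 2 * WW x ^ 3 = 8 * ((x ^ 2 * WW x) * WW x ^ 2) := by ring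
  have h8 : (x ^ 2 * WW x) * WW x ^ 2 ≤ 1 := mul_le_one₀ h4 h7 h6
  have h9 : 0 ≤ (x ^ 2 * WW x) * WW x ^ 2 := by positivity
  rw [e, abs_le]
  constructor <;> linarith

lemma local_weight : ∃ (χ : ℝ → ℝ) (ω φ φ1 φ2 φ3 : ℕ → ℝ → ℝ) (c L : ℕ → ℝ) (D : ℝ),
    Continuous χ ∧ (∀ x, 0 ≤ χ x) ∧ (∀ x, 2 < |x| → χ x = 0) ∧
    (∀ n, T3 (φ n) (φ1 n) (φ2 n) (φ3 n)) ∧ (∀ n x, L n < |x| → φ n x = 0) ∧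
    (∀ n x, φ1 n x = ω n x - c n * χ x) ∧ (∀ n, 0 ≤ c n ∧ c n ≤ D) ∧
    (∀ n, Continuous (ω n)) ∧ (∀ n x, L n < |x| → ω n x = 0) ∧
    (∀ n x, 0 ≤ ω n x) ∧ (∀ x, Tendsto (fun n => ω n x) atTop (𝓝 (WW x))) ∧
    (∀ n x, |φ n x| ≤ D) ∧ (∀ n x, |φ3 n x| ≤ D) := by
  obtain ⟨χ, χ1, χ2, χ3, K, hχ⟩ := exists_cut
  have hK := hχ.C1
  set r : ℕ → ℝ := fun n => (n : ℝ) + 1 with hr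
  have r1 : ∀ n, 1 ≤ r n := fun n => by simp [hr]
  have hrt : Tendsto r atTop atTop := tendsto_atTop_add_const_right _ _ tendsto_natCast_atTop_atTop
  have cχ := hχ.t.c0
  have hdiv : ∀ n x, 2 * r n ≤ |x| → 2 ≤ |x / r n| := by
    intro n x hx
    have := r1 n
    rw [abs_div, abs_of_pos (by linarith : 0 < r n), le_div_iff₀ (by linarith)]
    exact hx
  have in1 : ∀ n x, |x| ≤ r n → |x / r n| ≤ 1 := by
    intro n x hn
    have := r1 n
    rw [abs_div, abs_of_pos (by linarith : 0 < r n)]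
    exact div_le_one_of_le₀ hn (by linarith)
  have iχ : Integrable χ := integrable_of_supp cχ (L := 2) (fun x hx => hχ.z0 x hx.le)
  set m := ∫ x, χ x with hm
  have m1 : 0 < m := by
    rw [hm, integral_pos_iff_support_of_nonneg hχ.nn iχ]
    refine cχ.isOpen_support.measure_pos _ ⟨0, ?_⟩
    simp [hχ.one 0 (by simp)]
  set ω : ℕ → ℝ → ℝ := fun n x => WW x * χ (x / r n) with hω
  have cω : ∀ n, Continuous (ω n) := fun n => WW_c.mul (cχ.comp (by fun_prop))
  have zω : ∀ n x, 2 * r n ≤ |x| → ω n x = 0 := fun n x hx => by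
    simp [hω, hχ.z0 _ (hdiv n x hx)]
  have nω : ∀ n x, 0 ≤ ω n x := fun n x => mul_nonneg (WW_pos x).le (hχ.nn _)
  have iω : ∀ n, Integrable (ω n) := fun n =>
    integrable_of_supp (cω n) (L := 2 * r n) (fun x hx => zω n x hx.le)
  have iW : Integrable WW := integrable_inv_one_add_sq
  set I := ∫ x, WW x with hI
  have I0 : 0 ≤ I := integral_nonneg fun x => (WW_pos x).le
  have leI : ∀ n, ∫ x, ω n x ≤ I := fun n => integral_mono (iω n) iW fun x =>
    mul_le_of_le_one_right (WW_pos x).le (hχ.le1 _)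
  have nnI : ∀ n, 0 ≤ ∫ x, ω n x := fun n => integral_nonneg (nω n)
  set c : ℕ → ℝ := fun n => (∫ x, ω n x) / m with hc
  have c0 : ∀ n, 0 ≤ c n := fun n => div_nonneg (nnI n) m1.le
  have c1 : ∀ n, c n ≤ I / m := fun n => div_le_div_of_nonneg_right (leI n) m1.le
  set g : ℕ → ℝ → ℝ := fun n x => ω n x - c n * χ x with hg
  have zg : ∀ n x, 2 * r n ≤ |x| → g n x = 0 := fun n x hx => by
    have : 2 ≤ |x| := by linarith [r1 n]
    simp [hg, zω n x hx, hχ.z0 x this]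
  have ig : ∀ n, Integrable (g n) := fun n => (iω n).sub (iχ.const_mul _)
  have cg : ∀ n, Continuous (g n) := fun n => (cω n).sub (cχ.const_mul _)
  have g0 : ∀ n, ∫ x, g n x = 0 := fun n => by
    have h1 : ∫ x, g n x = (∫ x, ω n x) - c n * m := by
      rw [hm, ← integral_const_mul]
      exact integral_sub (iω n) (iχ.const_mul _)
    rw [h1, hc]
    simp only
    field_simp
    ring
  have gabs : ∀ n, ∫ x, |g n x| ≤ 2 * I := fun n => by
    have h1 : ∫ x, |g n x| ≤ ∫ x, (ω n x + c n * χ x) := by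
      refine integral_mono (ig n).abs ((iω n).add (iχ.const_mul _)) fun x => ?_
      have e1 := nω n x
      have e2 := mul_nonneg (c0 n) (hχ.nn x)
      simp only [hg]
      rw [abs_le]; constructor <;> linarith
    have h2 : ∫ x, (ω n x + c n * χ x) = (∫ x, ω n x) + c n * m := by
      rw [hm, ← integral_const_mul]
      exact integral_add (iω n) (iχ.const_mul _)
    have h3 : c n * m = ∫ x, ω n x := by rw [hc]; simp only; field_simp
    rw [h2, h3] at h1
    linarith [leI n]
  have hT : ∀ n, T3 (fun x => ∫ y in (-(2 * r n))..x, g n y) (g n)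
      (fun x => (-2 * x * WW x ^ 2) * χ (x / r n) + WW x * (χ1 (x / r n) / r n) - c n * χ1 x)
      (fun x => (-2 * WW x ^ 2 + 8 * x ^ 2 * WW x ^ 3) * χ (x / r n)
        + 2 * ((-2 * x * WW x ^ 2) * (χ1 (x / r n) / r n))
        + WW x * (χ2 (x / r n) / r n ^ 2) - c n * χ2 x) := by
    intro n
    have k := hχ.t.dil (r n)
    refine t3_primitive _ (fun x => ?_) (fun x => ?_) ?_
    · exact ((WW_d0 x).mul (k.d0 x)).sub ((hχ.t.d0 x).const_mul (c n))
    · exact ((((WW_d1 x).mul (k.d0 x)).add ((WW_d0 x).mul (k.d1 x))).sub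
        ((hχ.t.d1 x).const_mul (c n))).congr_deriv (by ring)
    · have := k.c0; have := k.c1; have := k.c2; have := WW_c; have := hχ.t.c2
      fun_prop
  refine ⟨χ, ω, _, _, _, _, c, fun n => 2 * r n, 2 * I + I / m + (10 + 3 * K + I / m * K),
    cχ, hχ.nn, fun x hx => hχ.z0 x hx.le, hT, ?_, fun n x => rfl, fun n => ⟨c0 n, ?_⟩, cω, fun n x hx => zω n x hx.le,
    nω, ?_, ?_, ?_⟩
  · intro n x hx
    rcases lt_abs.mp hx with h | h
    · rw [intervalIntegral.integral_eq_integral_of_support_subset, g0]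
      intro y hy
      have : |y| < 2 * r n := by
        by_contra hcon
        exact hy (zg n y (not_lt.mp hcon))
      rw [abs_lt] at this
      exact ⟨this.1, by linarith [this.2]⟩
    · have : ∫ y in (-(2 * r n))..x, g n y = ∫ y in (-(2 * r n))..x, (0:ℝ) := by
        refine intervalIntegral.integral_congr fun y hy => ?_
        rw [Set.uIcc_of_ge (by linarith)] at hy
        refine zg n y ?_
        rw [le_abs]; right; linarith [hy.2]
      rw [this]; simp
  · refine (c1 n).trans ?_
    have : 0 ≤ I / m := by positivity
    have : 0 ≤ I / m * K := by positivity
    linarith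
  · intro x
    refine tendsto_const_nhds.congr' ?_
    filter_upwards [hrt.eventually_gt_atTop (|x|)] with n hn
    simp [hω, hχ.one _ (in1 n x hn.le)]
  · intro n x
    have h1 := intervalIntegral.norm_integral_le_integral_norm_uIoc (f := g n) (a := -(2 * r n))
      (b := x) (μ := volume)
    have h2 := setIntegral_le_integral (s := Set.uIoc (-(2 * r n)) x) (ig n).norm
      (Eventually.of_forall fun _ => norm_nonneg _)
    have h3 : ∫ x, ‖g n x‖ ≤ 2 * I := gabs n
    have : 0 ≤ I / m := by positivity
    have : 0 ≤ I / m * K := by positivity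
    rw [← Real.norm_eq_abs]
    linarith
  · intro n x
    have hr0 : 0 < r n := by linarith [r1 n]
    have p0 : |χ (x / r n)| ≤ 1 := by rw [abs_of_nonneg (hχ.nn _)]; exact hχ.le1 _
    have p1 : |χ1 (x / r n) / r n| ≤ K := by
      rw [abs_div, abs_of_pos hr0]
      exact (div_le_self (abs_nonneg _) (r1 n)).trans (hχ.b1 _)
    have p2 : |χ2 (x / r n) / r n ^ 2| ≤ K := by
      rw [abs_div, abs_of_pos (by positivity : 0 < r n ^ 2)]
      exact (div_le_self (abs_nonneg _) (one_le_pow₀ (r1 n))).trans (hχ.b2 _)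
    have q0 : |(-2 * WW x ^ 2 + 8 * x ^ 2 * WW x ^ 3) * χ (x / r n)| ≤ 10 := by
      rw [abs_mul]
      calc _ ≤ (10:ℝ) * 1 := mul_le_mul (WW_b2 x) p0 (abs_nonneg _) (by norm_num)
        _ = 10 := by norm_num
    have q1 : |(-2 * x * WW x ^ 2) * (χ1 (x / r n) / r n)| ≤ K := by
      rw [abs_mul]
      calc _ ≤ 1 * K := mul_le_mul (WW_b1 x) p1 (abs_nonneg _) (by norm_num)
        _ = K := by ring
    have q2 : |WW x * (χ2 (x / r n) / r n ^ 2)| ≤ K := by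
      rw [abs_mul, abs_of_pos (WW_pos x)]
      calc _ ≤ 1 * K := mul_le_mul (WW_le x) p2 (abs_nonneg _) (by norm_num)
        _ = K := by ring
    have q3 : |c n * χ2 x| ≤ I / m * K := by
      rw [abs_mul, abs_of_nonneg (c0 n)]
      exact mul_le_mul (c1 n) (hχ.b2 x) (abs_nonneg _) (by positivity)
    have : 0 ≤ I / m := by positivity
    rw [abs_le] at q0 q1 q2 q3 ⊢
    constructor <;> linarith [q0.1, q0.2, q1.1, q1.2, q2.1, q2.2, q3.1, q3.2]

namespace Sol
variable {p : ℝ} {U : ℕ → ℝ → ℝ → ℝ} {F F1 F2 : ℝ → ℝ → ℝ} {a b C : ℝ}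

/-- local smoothing -/
theorem i_KW (H : Sol p U F F1 F2) (hab : a ≤ b) (hB : ∀ t ∈ Set.Icc a b, ff p U t ≤ C) :
    Integrable (fun z : ℝ × ℝ => KK U F F1 z.1 z.2 * WW z.2) (slab a b) := by
  obtain ⟨χ, ω, φ, φ1, φ2, φ3, c, L, D, cχ, nχ, zχ, hT, hs, e1, hc, cω, zω, nω, tω, b0, b3⟩ :=
    local_weight
  have iKω : ∀ n, Integrable (fun z : ℝ × ℝ => KK U F F1 z.1 z.2 * ω n z.2) (slab a b) := fun n =>
    integrable_slab_of_supp (L := L n) (g := fun t x => KK U F F1 t x * ω n x)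
      (H.cK.mul ((cω n).comp continuous_snd)) (fun t x hx => by simp [zω n x hx])
  have iKχ : Integrable (fun z : ℝ × ℝ => KK U F F1 z.1 z.2 * χ z.2) (slab a b) :=
    integrable_slab_of_supp (L := 2) (g := fun t x => KK U F F1 t x * χ x)
      (H.cK.mul (cχ.comp continuous_snd)) (fun t x hx => by simp [zχ x hx])
  have iE3 : ∀ n, Integrable (fun z : ℝ × ℝ => ee p U z.1 z.2 * φ3 n z.2) (slab a b) := fun n =>
    (H.i_e hB).mul_bdd (c := D) ((hT n).c3.comp continuous_snd).aestronglyMeasurable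
      (Eventually.of_forall fun z => b3 n z.2)
  have bQ : ∀ n t, |∫ x, ee p U t x * φ n x| ≤ ∫ x, |ee p U t x| * D := by
    intro n t
    rw [← Real.norm_eq_abs]
    refine norm_integral_le_of_norm_le ((H.re t).integrable.abs.mul_const D)
      (Eventually.of_forall fun x => ?_)
    rw [norm_mul]
    exact mul_le_mul_of_nonneg_left (b0 n x) (abs_nonneg _)
  have bE : ∀ n, |∫ z, ee p U z.1 z.2 * φ3 n z.2 ∂(slab a b)|
      ≤ ∫ z, |ee p U z.1 z.2| * D ∂(slab a b) := by
    intro n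
    rw [← Real.norm_eq_abs]
    refine norm_integral_le_of_norm_le ((H.i_e hB).abs.mul_const D)
      (Eventually.of_forall fun x => ?_)
    rw [norm_mul]
    exact mul_le_mul_of_nonneg_left (b3 n _) (abs_nonneg _)
  have iχ0 : 0 ≤ ∫ z, KK U F F1 z.1 z.2 * χ z.2 ∂(slab a b) :=
    integral_nonneg fun z => mul_nonneg (H.K_nn _ _) (nχ _)
  refine fatou_slab (N := (∫ x, |ee p U a x| * D) + (∫ x, |ee p U b x| * D)
      + (∫ z, |ee p U z.1 z.2| * D ∂(slab a b)) + D * ∫ z, KK U F F1 z.1 z.2 * χ z.2 ∂(slab a b))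
    (f := fun t x => KK U F F1 t x * WW x) (g := fun n t x => KK U F F1 t x * ω n x)
    (H.cK.mul (WW_c.comp continuous_snd)) (fun n => H.cK.mul ((cω n).comp continuous_snd)) iKω
    (fun n => ?_) (fun n t x => mul_nonneg (H.K_nn _ _) (nω _ _)) (fun t x => (tω x).const_mul _)
  have h := H.e_compact (hT n) hab (hs n)
  have e : ∫ z, (- KK U F F1 z.1 z.2 * φ1 n z.2 + ee p U z.1 z.2 * φ3 n z.2) ∂(slab a b)
      = (∫ z, ee p U z.1 z.2 * φ3 n z.2 ∂(slab a b)) - (∫ z, KK U F F1 z.1 z.2 * ω n z.2 ∂(slab a b))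
        + c n * ∫ z, KK U F F1 z.1 z.2 * χ z.2 ∂(slab a b) := by
    have h1 := integral_sub (iE3 n) (iKω n)
    have h2 := integral_add ((iE3 n).sub (iKω n)) (iKχ.const_mul (c n))
    rw [← h1, ← integral_const_mul]
    refine Eq.trans ?_ h2
    congr 1; funext z; simp only [e1, Pi.sub_apply]; ring
  rw [e] at h
  have h1 := abs_le.mp (bQ n a)
  have h2 := abs_le.mp (bQ n b)
  have h3 := abs_le.mp (bE n)
  have h4 := mul_le_mul_of_nonneg_right (hc n).2 iχ0
  linarith [h1.1, h1.2, h2.1, h2.2, h3.1, h3.2]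

theorem i_u2W (H : Sol p U F F1 F2) (hab : a ≤ b) (hB : ∀ t ∈ Set.Icc a b, ff p U t ≤ C) :
    Integrable (fun z : ℝ × ℝ => WW z.2 * U 2 z.1 z.2 ^ 2) (slab a b) := by
  refine slab_mono (f := fun t x => WW x * U 2 t x ^ 2) (g := fun t x => KK U F F1 t x * WW x)
    (H.i_KW hab hB) ((WW_c.comp continuous_snd).mul ((H.cU 2).pow 2)) (fun t _ x => ?_)
  have h1 := WW_pos x
  rw [abs_of_nonneg (by positivity), mul_comm]
  gcongr
  have := H.u1F1_nn t x
  unfold KK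
  nlinarith [sq_nonneg (U 2 t x), sq_nonneg (F t x)]

theorem i_F1w (H : Sol p U F F1 F2) (hab : a ≤ b) (hB : ∀ t ∈ Set.Icc a b, ff p U t ≤ C) :
    Integrable (fun z : ℝ × ℝ => (1 + z.2 ^ 2) * F1 z.1 z.2 ^ 2) (slab a b) := by
  obtain ⟨Λ, hΛ, _, hF1, _⟩ := H.exists_lam hB
  have cF1 := H.cF1
  refine slab_mono (f := fun t x => (1 + x ^ 2) * F1 t x ^ 2)
    (g := fun t x => Λ ^ 2 * (jj p U t x * (1 + x ^ 2)))
    ((H.i_jw hab hB).const_mul (Λ ^ 2)) (by fun_prop) (fun t ht x => ?_)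
  rw [abs_of_nonneg (by positivity)]
  have h1 : F1 t x ^ 2 ≤ Λ ^ 2 * jj p U t x := by
    have h := pow_le_pow_left₀ (abs_nonneg _) (hF1 t ht x) 2
    rw [mul_pow, sq_abs, sq_abs] at h
    refine h.trans ?_
    gcongr
    have h2 : 0 ≤ 2 * p / (p + 1) * bb p U t x := by
      have := H.hp1; have := H.b_nn t x; positivity
    unfold jj
    nlinarith [sq_nonneg (U 1 t x)]
  calc (1 + x ^ 2) * F1 t x ^ 2 ≤ (1 + x ^ 2) * (Λ ^ 2 * jj p U t x) := by gcongr
    _ = _ := by ring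

theorem i_u2F1 (H : Sol p U F F1 F2) (hab : a ≤ b) (hB : ∀ t ∈ Set.Icc a b, ff p U t ≤ C) :
    Integrable (fun z : ℝ × ℝ => U 2 z.1 z.2 * F1 z.1 z.2) (slab a b) := by
  refine slab_mono (f := fun t x => U 2 t x * F1 t x)
    (g := fun t x => WW x * U 2 t x ^ 2 + (1 + x ^ 2) * F1 t x ^ 2)
    ((H.i_u2W hab hB).add (H.i_F1w hab hB)) ((H.cU 2).mul H.cF1) (fun t ht x => ?_)
  have h1 := WW_pos x
  have h3 := WW_mul x
  set s := √(WW x) with hs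
  have hs2 : s ^ 2 = WW x := Real.sq_sqrt h1.le
  have hs0 : 0 < s := Real.sqrt_pos.mpr h1
  have e : 1 + x ^ 2 = (s⁻¹) ^ 2 := by
    rw [inv_pow, hs2]; unfold WW; rw [inv_inv]
  rw [e, ← hs2, abs_le]
  have e2 : U 2 t x * F1 t x = (s * U 2 t x) * (s⁻¹ * F1 t x) := by field_simp
  rw [e2, ← mul_pow, ← mul_pow]
  constructor <;> nlinarith [sq_nonneg (s * U 2 t x - s⁻¹ * F1 t x),
    sq_nonneg (s * U 2 t x + s⁻¹ * F1 t x), sq_nonneg (s * U 2 t x), sq_nonneg (s⁻¹ * F1 t x)]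

end Sol
end GKdV

open MeasureTheory Real

namespace GKdV
open Filter Topology

/-- generalized dominated convergence -/
lemma pratt {α : Type*} [MeasurableSpace α] {μ : Measure α} {f g : ℕ → α → ℝ} {f0 g0 : α → ℝ}
    (mf : ∀ n, AEStronglyMeasurable (f n) μ)
    (ig : ∀ n, Integrable (g n) μ) (ig0 : Integrable g0 μ)
    (hle : ∀ n, ∀ᵐ x ∂μ, |f n x| ≤ g n x)
    (tf : ∀ᵐ x ∂μ, Tendsto (fun n => f n x) atTop (𝓝 (f0 x)))
    (tg : ∀ᵐ x ∂μ, Tendsto (fun n => g n x) atTop (𝓝 (g0 x)))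
    (tI : Tendsto (fun n => ∫ x, g n x ∂μ) atTop (𝓝 (∫ x, g0 x ∂μ))) :
    Tendsto (fun n => ∫ x, f n x ∂μ) atTop (𝓝 (∫ x, f0 x ∂μ)) := by
  have hle' : ∀ᵐ x ∂μ, ∀ n, |f n x| ≤ g n x := ae_all_iff.mpr hle
  have hg0 : ∀ᵐ x ∂μ, |f0 x| ≤ g0 x := by
    filter_upwards [hle', tf, tg] with x h1 h2 h3
    exact le_of_tendsto_of_tendsto' h2.abs h3 h1
  have iff_ : ∀ n, Integrable (f n) μ := fun n => (ig n).mono' (mf n) (hle n)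
  -- first step
  have s1 : Tendsto (fun n => ∫ x, max (g0 x - g n x) 0 ∂μ) atTop (𝓝 0) := by
    have := tendsto_integral_of_dominated_convergence (μ := μ)
      (F := fun n x => max (g0 x - g n x) 0) (f := fun _ => (0:ℝ)) g0
      (fun n => ((ig0.sub (ig n)).pos_part).1) ig0 ?_ ?_
    · simpa using this
    · intro n
      filter_upwards [hle n, hg0] with x h1 h2
      have h3 := (abs_nonneg _).trans h1
      have h4 := (abs_nonneg _).trans h2
      rw [Real.norm_eq_abs, abs_of_nonneg (le_max_right _ _)]
      exact max_le (by linarith) h4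
    · filter_upwards [tg] with x hx
      have := (tendsto_const_nhds (x := g0 x)).sub hx
      simpa using this.max (tendsto_const_nhds (x := (0:ℝ)))
  have s2 : Tendsto (fun n => ∫ x, max (g n x - g0 x) 0 ∂μ) atTop (𝓝 0) := by
    have e : ∀ n, ∫ x, max (g n x - g0 x) 0 ∂μ
        = ((∫ x, g n x ∂μ) - ∫ x, g0 x ∂μ) + ∫ x, max (g0 x - g n x) 0 ∂μ := by
      intro n
      have h1 := integral_sub (ig n) ig0
      have h2 := integral_add ((ig n).sub ig0) ((ig0.sub (ig n)).pos_part)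
      rw [← h1]
      refine Eq.trans ?_ h2
      congr 1; funext x
      simp only [Pi.sub_apply]
      rcases le_total (g n x) (g0 x) with h | h
      · rw [max_eq_right (by linarith), max_eq_left (by linarith)]; ring
      · rw [max_eq_left (by linarith), max_eq_right (by linarith)]; ring
    rw [funext e]
    simpa using (tI.sub_const (∫ x, g0 x ∂μ)).add s1
  have mcl : ∀ n, AEStronglyMeasurable (fun x => max (-g0 x) (min (g0 x) (f n x))) μ := fun n =>
    (ig0.1.neg).sup (ig0.1.inf (mf n))
  have bcl : ∀ n, ∀ᵐ x ∂μ, ‖max (-g0 x) (min (g0 x) (f n x))‖ ≤ g0 x := by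
    intro n
    filter_upwards [hg0] with x h
    have := (abs_nonneg _).trans h
    rw [Real.norm_eq_abs, abs_le]
    exact ⟨le_max_left _ _, max_le (by linarith) (min_le_left _ _)⟩
  have s3 : Tendsto (fun n => ∫ x, max (-g0 x) (min (g0 x) (f n x)) ∂μ) atTop
      (𝓝 (∫ x, f0 x ∂μ)) := by
    refine tendsto_integral_of_dominated_convergence g0 mcl ig0 bcl ?_
    filter_upwards [hg0, tf] with x h h2
    have h3 := abs_le.mp h
    have := (tendsto_const_nhds (x := -g0 x)).max ((tendsto_const_nhds (x := g0 x)).min h2)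
    rwa [min_eq_right h3.2, max_eq_right h3.1] at this
  have s4 : Tendsto (fun n => (∫ x, f n x ∂μ) - ∫ x, max (-g0 x) (min (g0 x) (f n x)) ∂μ) atTop
      (𝓝 0) := by
    refine squeeze_zero_norm (fun n => ?_) s2
    have icl := ig0.mono' (mcl n) (bcl n)
    rw [← integral_sub (iff_ n) icl]
    refine norm_integral_le_of_norm_le ((ig n).sub ig0).pos_part ?_
    filter_upwards [hle n, hg0] with x h1 h2
    have h3 := abs_le.mp h1
    have h5 := (abs_nonneg _).trans h2
    rw [Real.norm_eq_abs]
    rcases le_total (g0 x) (f n x) with k | k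
    · rw [min_eq_left k, max_eq_right (by linarith), abs_of_nonneg (by linarith)]
      exact le_max_of_le_left (by linarith)
    · rw [min_eq_right k]
      rcases le_total (-g0 x) (f n x) with l | l
      · rw [max_eq_right l]; simp
      · rw [max_eq_left l, abs_of_nonpos (by linarith)]
        exact le_max_of_le_left (by linarith [h3.1])
  simpa using s4.add s3

/-- average in `x` -/
noncomputable def avg (h : ℝ) (k : ℝ → ℝ → ℝ) (t x : ℝ) : ℝ := ∫ s in (0:ℝ)..1, k t (x + h * s)

section avg
variable {k k1 : ℝ → ℝ → ℝ}

lemma avg_tendsto (ck : Continuous (fun q : ℝ × ℝ => k q.1 q.2)) {h : ℕ → ℝ}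
    (hh : Tendsto h atTop (𝓝 0)) (t x : ℝ) :
    Tendsto (fun n => avg (h n) k t x) atTop (𝓝 (k t x)) := by
  have hc : Continuous (fun r : ℝ => ∫ s in (0:ℝ)..1, k t (x + r * s)) := by
    apply intervalIntegral.continuous_parametric_intervalIntegral_of_continuous'
    exact ck.comp (by fun_prop : Continuous fun q : ℝ × ℝ => (t, x + q.1 * q.2))
  have h2 := (hc.tendsto 0).comp hh
  have e : (fun r : ℝ => ∫ s in (0:ℝ)..1, k t (x + r * s)) 0 = k t x := by simp
  rw [← e]
  exact h2

lemma avg_continuous (ck : Continuous (fun q : ℝ × ℝ => k q.1 q.2)) (h : ℝ) :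
    Continuous (fun q : ℝ × ℝ => avg h k q.1 q.2) := by
  apply intervalIntegral.continuous_parametric_intervalIntegral_of_continuous'
  exact ck.comp (by fun_prop : Continuous fun q : (ℝ × ℝ) × ℝ => (q.1.1, q.1.2 + h * q.2))

lemma avg_cs (ck : Continuous (fun q : ℝ × ℝ => k q.1 q.2)) (h t x : ℝ) :
    Continuous (fun s : ℝ => k t (x + h * s)) :=
  ck.comp (by fun_prop : Continuous fun s : ℝ => (t, x + h * s))

lemma dq_eq_avg (d : ∀ t x, HasDerivAt (fun y => k t y) (k1 t x) x)
    (ck : Continuous (fun q : ℝ × ℝ => k1 q.1 q.2)) {h : ℝ} (hh : h ≠ 0) (t x : ℝ) :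
    dq h k t x = avg h k1 t x := by
  have hd : ∀ s : ℝ, HasDerivAt (fun s : ℝ => k t (x + h * s) / h) (k1 t (x + h * s)) s := by
    intro s
    have h1 : HasDerivAt (fun s : ℝ => x + h * s) h s :=
      (((hasDerivAt_id s).const_mul h).const_add x).congr_deriv (by simp)
    exact (((d t (x + h * s)).comp s h1).div_const h).congr_deriv (by field_simp)
  have := intervalIntegral.integral_eq_sub_of_hasDerivAt (a := 0) (b := 1) (fun s _ => hd s)
    ((avg_cs ck h t x).intervalIntegrable _ _)
  rw [avg, this, dq]
  simp
  ring

lemma avg_sq_le (ck : Continuous (fun q : ℝ × ℝ => k q.1 q.2)) (h t x : ℝ) :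
    avg h k t x ^ 2 ≤ avg h (fun t x => k t x ^ 2) t x := by
  have cs := avg_cs ck h t x
  set m := avg h k t x with hm
  have h0 : 0 ≤ ∫ s in (0:ℝ)..1, (k t (x + h * s) - m) ^ 2 :=
    intervalIntegral.integral_nonneg (by norm_num) fun s _ => sq_nonneg _
  have e : ∫ s in (0:ℝ)..1, (k t (x + h * s) - m) ^ 2
      = (∫ s in (0:ℝ)..1, k t (x + h * s) ^ 2) - 2 * m * (∫ s in (0:ℝ)..1, k t (x + h * s))
        + m ^ 2 := by
    have e1 : ∀ s, (k t (x + h * s) - m) ^ 2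
      = k t (x + h * s) ^ 2 - 2 * m * k t (x + h * s) + m ^ 2 := fun s => by ring
    simp only [e1]
    rw [intervalIntegral.integral_add, intervalIntegral.integral_sub,
      intervalIntegral.integral_const_mul]
    · simp
    all_goals exact Continuous.intervalIntegrable (by fun_prop) _ _
  rw [e] at h0
  have : (∫ s in (0:ℝ)..1, k t (x + h * s)) = m := rfl
  rw [this] at h0
  change m ^ 2 ≤ ∫ s in (0:ℝ)..1, k t (x + h * s) ^ 2
  nlinarith

lemma avg_mono (ck : Continuous (fun q : ℝ × ℝ => k q.1 q.2))
    (ck1 : Continuous (fun q : ℝ × ℝ => k1 q.1 q.2)) {h t x t' x' : ℝ}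
    (hle : ∀ s ∈ Set.Icc (0:ℝ) 1, k t (x + h * s) ≤ k1 t' (x' + h * s)) :
    avg h k t x ≤ avg h k1 t' x' :=
  intervalIntegral.integral_mono_on (by norm_num) ((avg_cs ck h t x).intervalIntegrable _ _)
    ((avg_cs ck1 h t' x').intervalIntegrable _ _) hle

lemma avg_bound {B h t x : ℝ} (hb : ∀ s ∈ Set.Icc (0:ℝ) 1, |k t (x + h * s)| ≤ B) :
    |avg h k t x| ≤ B := by
  have := intervalIntegral.norm_integral_le_of_norm_le_const (a := 0) (b := 1)
    (f := fun s => k t (x + h * s)) (C := B) (fun s hs => hb s (by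
      rw [Set.uIoc_of_le (by norm_num)] at hs; exact ⟨hs.1.le, hs.2⟩))
  simpa [avg] using this

lemma shift_mp (a b s : ℝ) :
    MeasurePreserving (fun z : ℝ × ℝ => (z.1, z.2 + s)) (slab a b) (slab a b) :=
  (MeasurePreserving.id _).prod (measurePreserving_add_right volume s)

lemma slab_shift {a b : ℝ} (hk : Integrable (fun z : ℝ × ℝ => k z.1 z.2) (slab a b)) (s : ℝ) :
    Integrable (fun z : ℝ × ℝ => k z.1 (z.2 + s)) (slab a b) ∧
    ∫ z, k z.1 (z.2 + s) ∂(slab a b) = ∫ z, k z.1 z.2 ∂(slab a b) := by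
  have mp := shift_mp a b s
  refine ⟨mp.integrable_comp_of_integrable hk, ?_⟩
  have he : MeasurableEmbedding (fun z : ℝ × ℝ => (z.1, z.2 + s)) :=
    (MeasurableEquiv.prodCongr (MeasurableEquiv.refl ℝ)
      (MeasurableEquiv.addRight s)).measurableEmbedding
  exact mp.integral_comp he (fun z => k z.1 z.2)

lemma avg_slab {a b : ℝ} (ck : Continuous (fun q : ℝ × ℝ => k q.1 q.2)) 
    (nk : ∀ t x, 0 ≤ k t x)
    (hk : Integrable (fun z : ℝ × ℝ => k z.1 z.2) (slab a b)) (h : ℝ) :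
    Integrable (fun z : ℝ × ℝ => avg h k z.1 z.2) (slab a b) ∧
    ∫ z, avg h k z.1 z.2 ∂(slab a b) = ∫ z, k z.1 z.2 ∂(slab a b) := by
  haveI : SFinite (slab a b) := by unfold slab; infer_instance
  have hi : Integrable (fun q : (ℝ × ℝ) × ℝ => k q.1.1 (q.1.2 + h * q.2))
      ((slab a b).prod (volume.restrict (Set.Ioc (0:ℝ) 1))) := by
    rw [integrable_prod_iff']
    · refine ⟨Eventually.of_forall fun s => (slab_shift hk (h * s)).1, ?_⟩
      have : ∀ s : ℝ, ∫ z, ‖k z.1 (z.2 + h * s)‖ ∂(slab a b) = ∫ z, k z.1 z.2 ∂(slab a b) := by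
        intro s
        rw [← (slab_shift hk (h * s)).2]
        congr 1; funext z
        rw [Real.norm_eq_abs, abs_of_nonneg (nk _ _)]
      simp only [this]
      exact integrable_const _
    · exact (ck.comp (by fun_prop : Continuous fun q : (ℝ × ℝ) × ℝ =>
        (q.1.1, q.1.2 + h * q.2))).aestronglyMeasurable
  have e : ∀ z : ℝ × ℝ, avg h k z.1 z.2
      = ∫ s, k z.1 (z.2 + h * s) ∂(volume.restrict (Set.Ioc (0:ℝ) 1)) := fun z =>
    intervalIntegral.integral_of_le (by norm_num)
  simp only [e]
  refine ⟨hi.integral_prod_left, ?_⟩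
  have := integral_integral_swap (f := fun (z : ℝ × ℝ) (s : ℝ) => k z.1 (z.2 + h * s)) hi
  rw [this]
  have e2 : ∀ s : ℝ, ∫ z, k z.1 (z.2 + h * s) ∂(slab a b) = ∫ z, k z.1 z.2 ∂(slab a b) :=
    fun s => (slab_shift hk (h * s)).2
  simp only [e2]
  simp
end avg

end GKdV

open MeasureTheory Real

namespace GKdV
open Filter Topology

lemma dq_int {a b : ℝ} {g : ℝ → ℝ → ℝ} (cg : Continuous (fun q : ℝ × ℝ => g q.1 q.2))
    (hg : Integrable (fun z : ℝ × ℝ => g z.1 z.2 ^ 2) (slab a b)) (h : ℝ) :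
    Integrable (fun z : ℝ × ℝ => dq h g z.1 z.2 ^ 2) (slab a b) := by
  have h1 := (slab_shift (k := fun t x => g t x ^ 2) hg h).1
  refine slab_mono (g := fun t x => 2 / h ^ 2 * (g t (x + h) ^ 2 + g t x ^ 2))
    (f := fun t x => dq h g t x ^ 2) ((h1.add hg).const_mul _) ((continuous_dq cg h).pow 2) ?_
  intro t _ x
  rw [abs_of_nonneg (sq_nonneg _)]
  unfold dq
  rw [div_pow, div_mul_eq_mul_div]
  apply div_le_div_of_nonneg_right _ (sq_nonneg h)
  nlinarith [sq_nonneg (g t (x + h) + g t x)]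

lemma mul_int {a b : ℝ} {f g : ℝ → ℝ → ℝ} (cf : Continuous (fun q : ℝ × ℝ => f q.1 q.2))
    (cg : Continuous (fun q : ℝ × ℝ => g q.1 q.2))
    (hf : Integrable (fun z : ℝ × ℝ => f z.1 z.2 ^ 2) (slab a b))
    (hg : Integrable (fun z : ℝ × ℝ => g z.1 z.2 ^ 2) (slab a b)) :
    Integrable (fun z : ℝ × ℝ => f z.1 z.2 * g z.1 z.2) (slab a b) := by
  refine slab_mono (g := fun t x => f t x ^ 2 + g t x ^ 2)
    (f := fun t x => f t x * g t x) (hf.add hg) (cf.mul cg) ?_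
  intro t _ x
  rw [abs_le]
  constructor <;> nlinarith [sq_nonneg (f t x + g t x), sq_nonneg (f t x - g t x),
    sq_nonneg (f t x), sq_nonneg (g t x)]

lemma loc_bd {g : ℝ → ℝ → ℝ} (cg : Continuous (fun q : ℝ × ℝ => g q.1 q.2)) (a b L : ℝ) :
    ∃ B, 0 ≤ B ∧ ∀ t ∈ Set.Icc a b, ∀ x, |x| ≤ L → ∀ h ∈ Set.Icc (0:ℝ) 1, |avg h g t x| ≤ B := by
  have hK : IsCompact (Set.Icc a b ×ˢ Set.Icc (-L - 1) (L + 1)) := isCompact_Icc.prod isCompact_Icc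
  obtain ⟨B, hB⟩ := hK.exists_bound_of_continuousOn cg.continuousOn
  refine ⟨max B 0, le_max_right _ _, fun t ht x hx h hh => avg_bound fun s hs => ?_⟩
  refine le_trans ?_ (le_max_left _ _)
  have hx' := abs_le.mp hx
  have h1 : 0 ≤ h * s := mul_nonneg hh.1 hs.1
  have h2 : h * s ≤ 1 := mul_le_one₀ hh.2 hs.1 hs.2
  exact hB (t, x + h * s) ⟨ht, by constructor <;> simp only <;> linarith [hx'.1, hx'.2]⟩

lemma wt_cmp {x y : ℝ} (h0 : 0 ≤ y) (h1 : y ≤ 1) : 1 + x ^ 2 ≤ 3 * (1 + (x + y) ^ 2) := by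
  nlinarith [sq_nonneg (2 * x + 3 * y / 2), sq_nonneg (x+ 3 * y / 2)]

lemma WW_cmp {x y : ℝ} (h0 : 0 ≤ y) (h1 : y ≤ 1) : WW (x + y) ≤ 3 * WW x := by
  have : 1 + x ^ 2 ≤ 3 * (1 + (x + y) ^ 2) := wt_cmp h0 h1
  unfold WW
  rw [← div_eq_mul_inv, inv_eq_one_div, div_le_div_iff₀ (by positivity) (by positivity)]
  linarith

lemma WW_cmp' {x y : ℝ} (h0 : 0 ≤ y) (h1 : y ≤ 1) : WW x ≤ 3 * WW (x + y) := by
  have : 1 + (x + y) ^ 2 ≤ 3 * (1 + x ^ 2) := by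
    nlinarith [sq_nonneg (x - y / 2), sq_nonneg (2 * x - y)]
  unfold WW
  rw [← div_eq_mul_inv, inv_eq_one_div, div_le_div_iff₀ (by positivity) (by positivity)]
  linarith

lemma avg_const_mul (h c : ℝ) (k : ℝ → ℝ → ℝ) (t x : ℝ) :
    avg h (fun t y => c * k t y) t x = c * avg h k t x := by
  unfold avg; simp

lemma integral_lin3 {α : Type*} [MeasurableSpace α] {μ : Measure α} {f g k : α → ℝ} {c d : ℝ}
    (hf : Integrable f μ) (hg : Integrable g μ) (hk : Integrable k μ) :
    ∫ z, (f z + c * g z + d * k z) ∂μ = (∫ z, f z ∂μ) + c * (∫ z, g z ∂μ) + d * ∫ z, k z ∂μ := by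
  have h1 := hg.const_mul c
  have h2 := hk.const_mul d
  have h3 : Integrable (fun z => f z + c * g z) μ := hf.add h1
  rw [integral_add h3 h2, integral_add hf h1, integral_const_mul, integral_const_mul]

/-- the step sequence -/
noncomputable def hs (n : ℕ) : ℝ := 1 / ((n : ℝ) + 1)

lemma hs_pos (n : ℕ) : 0 < hs n := by unfold hs; positivity
lemma hs_le (n : ℕ) : hs n ≤ 1 := by
  unfold hs; rw [div_le_one (by positivity)]; linarith [(Nat.cast_nonneg n : (0:ℝ) ≤ n)]
lemma hs_lim : Tendsto hs atTop (𝓝 0) := tendsto_one_div_add_atTop_nhds_zero_nat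

lemma slice_lim {v v1 : ℝ → ℝ → ℝ} {φ : ℝ → ℝ} {C : ℝ} (t : ℝ)
    (c0 : Continuous (fun q : ℝ × ℝ => v q.1 q.2))
    (c1 : Continuous (fun q : ℝ × ℝ => v1 q.1 q.2))
    (d : ∀ t x, HasDerivAt (fun y => v t y) (v1 t x) x)
    (r : Rapid (fun x => v1 t x)) (cφ : Continuous φ) (b0 : ∀ x, |φ x| ≤ C) :
    Tendsto (fun n => ∫ x, dq (hs n) v t x ^ 2 * φ x) atTop (𝓝 (∫ x, v1 t x ^ 2 * φ x)) := by
  obtain ⟨C0, h0⟩ := r.d 0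
  obtain ⟨C2, h2⟩ := r.d 2
  have hb : ∀ y, |v1 t y| ≤ (C0 + C2) * WW y := by
    intro y
    have e := h0 y; have e' := h2 y
    simp only [pow_zero, one_mul, sq_abs] at e e'
    unfold WW
    rw [← div_eq_mul_inv, le_div_iff₀ (by positivity)]
    nlinarith
  have hC : 0 ≤ C0 + C2 := by
    have := (abs_nonneg _).trans (hb 0)
    exact nonneg_of_mul_nonneg_left this (WW_pos 0)
  have hC' : 0 ≤ C := (abs_nonneg _).trans (b0 0)
  refine tendsto_integral_of_dominated_convergence
    (fun x => (9 * (C0 + C2) ^ 2 * C) * (1 + x ^ 2)⁻¹) (fun n => ?_) ?_ (fun n => ?_) ?_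
  · exact (((continuous_slice (continuous_dq c0 _) t).pow 2).mul cφ).aestronglyMeasurable
  · exact integrable_inv_one_add_sq.const_mul _
  · refine Eventually.of_forall fun x => ?_
    rw [dq_eq_avg d c1 (hs_pos n).ne']
    have : |avg (hs n) v1 t x| ≤ 3 * (C0 + C2) * WW x := by
      refine avg_bound fun s hs' => (hb _).trans ?_
      have := WW_cmp (x := x) (mul_nonneg (hs_pos n).le hs'.1)
        (mul_le_one₀ (hs_le n) hs'.1 hs'.2)
      nlinarith
    have h3 : avg (hs n) v1 t x ^ 2 ≤ 9 * (C0 + C2) ^ 2 * WW x := by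
      rw [← sq_abs]
      calc |avg (hs n) v1 t x| ^ 2 ≤ (3 * (C0 + C2) * WW x) ^ 2 := by gcongr
        _ = 9 * (C0 + C2) ^ 2 * (WW x * WW x) := by ring
        _ ≤ 9 * (C0 + C2) ^ 2 * (WW x * 1) := by
            gcongr
            · exact (WW_pos x).le
            · exact WW_le x
        _ = _ := by ring
    rw [Real.norm_eq_abs, abs_mul, abs_of_nonneg (sq_nonneg _)]
    calc _ ≤ 9 * (C0 + C2) ^ 2 * WW x * C := by
          apply mul_le_mul h3 (b0 x) (abs_nonneg _)
          have := (WW_pos x).le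
          positivity
      _ = _ := by unfold WW; ring
  · refine Eventually.of_forall fun x => ?_
    have : Tendsto (fun n => dq (hs n) v t x) atTop (𝓝 (v1 t x)) := by
      have := avg_tendsto c1 hs_lim t x
      refine this.congr fun n => ?_
      rw [dq_eq_avg d c1 (hs_pos n).ne']
    exact (this.pow 2).mul_const _

namespace Sol
variable {p : ℝ} {U : ℕ → ℝ → ℝ → ℝ} {F F1 F2 : ℝ → ℝ → ℝ} {a b C : ℝ}

lemma i_F (H : Sol p U F F1 F2) (hB : ∀ t ∈ Set.Icc a b, ff p U t ≤ C) :
    Integrable (fun z : ℝ × ℝ => F z.1 z.2 ^ 2) (slab a b) := by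
  obtain ⟨Λ, h0, h1, -, -⟩ := H.exists_lam hB
  refine slab_mono (g := fun t x => Λ ^ 2 * U 0 t x ^ 2) (f := fun t x => F t x ^ 2)
    ((H.i_rho hB).const_mul _) (H.cF.pow 2) fun t ht x => ?_
  rw [abs_of_nonneg (sq_nonneg _), ← sq_abs, ← sq_abs (U 0 t x), ← mul_pow]
  have := h1 t ht x
  gcongr

lemma i_u1F1 (H : Sol p U F F1 F2) (hB : ∀ t ∈ Set.Icc a b, ff p U t ≤ C) :
    Integrable (fun z : ℝ × ℝ => U 1 z.1 z.2 * F1 z.1 z.2) (slab a b) := by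
  obtain ⟨Λ, h0, -, h1, -⟩ := H.exists_lam hB
  refine slab_mono (g := fun t x => Λ * U 1 t x ^ 2) (f := fun t x => U 1 t x * F1 t x)
    ((H.i_u1 hB).const_mul _) ((H.cU 1).mul H.cF1) fun t ht x => ?_
  rw [abs_mul, ← sq_abs (U 1 t x)]
  have := h1 t ht x
  nlinarith [abs_nonneg (U 1 t x)]

theorem a_glob (H : Sol p U F F1 F2) (hab : a ≤ b) (hB : ∀ t ∈ Set.Icc a b, ff p U t ≤ C)
    {φ φ1 φ2 φ3 : ℝ → ℝ} {L : ℝ} (h : T3 φ φ1 φ2 φ3) (hsp : ∀ x, L < |x| → φ1 x = 0)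
    (hb : ∃ C, ∀ x, |φ x| ≤ C) :
    (∫ x, U 1 b x ^ 2 * φ x) - ∫ x, U 1 a x ^ 2 * φ x
      = ∫ z, (-3 * U 2 z.1 z.2 ^ 2 * φ1 z.2 + U 1 z.1 z.2 ^ 2 * φ3 z.2
          - 2 * (U 2 z.1 z.2 * F1 z.1 z.2) * φ z.2
          - 2 * (U 1 z.1 z.2 * F1 z.1 z.2) * φ1 z.2) ∂(slab a b) := by
  obtain ⟨D, b0, b1, b2, b3⟩ := bdd_all h hsp hb
  have hsp3 : ∀ x, L < |x| → φ3 x = 0 := deriv_supp h.d2 (deriv_supp h.d1 hsp)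
  have hD : 0 ≤ D := (abs_nonneg _).trans (b0 0)
  have iF := H.i_F hB
  have P := H.pair0
  have key : ∀ n, (∫ x, dq (hs n) (U 0) b x ^ 2 * φ x) - ∫ x, dq (hs n) (U 0) a x ^ 2 * φ x
      = ∫ z, (-3 * dq (hs n) (U 1) z.1 z.2 ^ 2 * φ1 z.2 + dq (hs n) (U 0) z.1 z.2 ^ 2 * φ3 z.2
          - 2 * (dq (hs n) (U 1) z.1 z.2 * dq (hs n) F z.1 z.2) * φ z.2
          - 2 * (dq (hs n) (U 0) z.1 z.2 * dq (hs n) F z.1 z.2) * φ1 z.2) ∂(slab a b) := by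
    intro n
    have hr : ∀ t, Integrable (fun x => dq (hs n) (U 0) t x ^ 2) := by
      intro t
      have := (((H.rU 0 t).shift (hs n)).sub (H.rU 0 t)).const_mul (1 / hs n) |>.sq.integrable
      refine this.congr (Eventually.of_forall fun x => ?_)
      simp only [GKdV.dq]; ring
    have j0 := dq_int (H.cU 0) (H.i_rho hB) (hs n)
    have j1 := dq_int (H.cU 1) (H.i_u1 hB) (hs n)
    have jF := dq_int H.cF iF (hs n)
    exact (P.dq (hs n)).glob h hab b0 b1 b2 b3 (hr a) (hr b) j0 j1
      (mul_int (continuous_dq (H.cU 1) _) (continuous_dq H.cF _) j1 jF)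
      (mul_int (continuous_dq (H.cU 0) _) (continuous_dq H.cF _) j0 jF)
  have lhs := (slice_lim b (H.cU 0) (H.cU 1) (H.dU 0) (H.rU 1 b) h.c0 b0).sub
    (slice_lim a (H.cU 0) (H.cU 1) (H.dU 0) (H.rU 1 a) h.c0 b0)
  refine tendsto_nhds_unique lhs ?_
  simp only [key]
  have e0 : ∀ n t x, dq (hs n) (U 0) t x = avg (hs n) (U 1) t x :=
    fun n => dq_eq_avg (H.dU 0) (H.cU 1) (hs_pos n).ne'
  have e1 : ∀ n t x, dq (hs n) (U 1) t x = avg (hs n) (U 2) t x :=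
    fun n => dq_eq_avg (H.dU 1) (H.cU 2) (hs_pos n).ne'
  have eF : ∀ n t x, dq (hs n) F t x = avg (hs n) F1 t x :=
    fun n => dq_eq_avg H.dF H.cF1 (hs_pos n).ne'
  simp only [e0, e1, eF]
  obtain ⟨B1, B1n, hB1⟩ := loc_bd (H.cU 1) a b L
  obtain ⟨B2, B2n, hB2⟩ := loc_bd (H.cU 2) a b L
  obtain ⟨B3, B3n, hB3⟩ := loc_bd H.cF1 a b L
  set k1 : ℝ → ℝ → ℝ := fun t x => WW x * U 2 t x ^ 2 with hk1
  set k2 : ℝ → ℝ → ℝ := fun t x => (1 + x ^ 2) * F1 t x ^ 2 with hk2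
  have ck1 : Continuous (fun q : ℝ × ℝ => k1 q.1 q.2) :=
    (WW_c.comp continuous_snd).mul ((H.cU 2).pow 2)
  have ck2 : Continuous (fun q : ℝ × ℝ => k2 q.1 q.2) :=
    (by fun_prop : Continuous fun q : ℝ × ℝ => 1 + q.2 ^ 2).mul (H.cF1.pow 2)
  have nk1 : ∀ t x, 0 ≤ k1 t x := fun t x => mul_nonneg (WW_pos x).le (sq_nonneg _)
  have nk2 : ∀ t x, 0 ≤ k2 t x := fun t x => by simp only [hk2]; positivity
  have ik1 : Integrable (fun z : ℝ × ℝ => k1 z.1 z.2) (slab a b) := H.i_u2W hab hB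
  have ik2 : Integrable (fun z : ℝ × ℝ => k2 z.1 z.2) (slab a b) := H.i_F1w hab hB
  set N : ℝ → ℝ → ℝ := fun _ x => 3 * B2 ^ 2 * |φ1 x| + B1 ^ 2 * |φ3 x| + 2 * (B1 * B3) * |φ1 x|
    with hN
  have cN : Continuous (fun q : ℝ × ℝ => N q.1 q.2) := by
    have := h.c1
    have := h.c3
    simp only [hN]
    fun_prop
  have iN : Integrable (fun z : ℝ × ℝ => N z.1 z.2) (slab a b) :=
    integrable_slab_of_supp (L := L) cN fun t x hx => by simp [hN, hsp x hx, hsp3 x hx]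
  have cav1 := fun n => avg_continuous (H.cU 1) (hs n)
  have cav2 := fun n => avg_continuous (H.cU 2) (hs n)
  have cav3 := fun n => avg_continuous H.cF1 (hs n)
  have cf0 := h.c0.comp (continuous_snd (X := ℝ) (Y := ℝ))
  have cf1 := h.c1.comp (continuous_snd (X := ℝ) (Y := ℝ))
  have cf3 := h.c3.comp (continuous_snd (X := ℝ) (Y := ℝ))
  refine pratt (g := fun n z => N z.1 z.2 + (3 * D) * avg (hs n) k1 z.1 z.2
      + (3 * D) * avg (hs n) k2 z.1 z.2)
    (g0 := fun z => N z.1 z.2 + (3 * D) * k1 z.1 z.2 + (3 * D) * k2 z.1 z.2)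
    (fun n => ?_) (fun n => ?_) ?_ (fun n => ?_) ?_ ?_ ?_
  · apply Continuous.aestronglyMeasurable
    exact ((((continuous_const.mul ((cav2 n).pow 2)).mul cf1).add (((cav1 n).pow 2).mul cf3)).sub
      ((continuous_const.mul ((cav2 n).mul (cav3 n))).mul cf0)).sub
      ((continuous_const.mul ((cav1 n).mul (cav3 n))).mul cf1)
  · exact (iN.add ((avg_slab ck1 nk1 ik1 (hs n)).1.const_mul _)).add
      ((avg_slab ck2 nk2 ik2 (hs n)).1.const_mul _)
  · exact (iN.add (ik1.const_mul _)).add (ik2.const_mul _)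
  · filter_upwards [ae_slab a b] with z hz
    obtain ⟨t, x⟩ := z
    simp only at hz ⊢
    have hh : hs n ∈ Set.Icc (0:ℝ) 1 := ⟨(hs_pos n).le, hs_le n⟩
    have k1b : WW x * avg (hs n) (U 2) t x ^ 2 ≤ 3 * avg (hs n) k1 t x := by
      calc _ ≤ WW x * avg (hs n) (fun t x => U 2 t x ^ 2) t x :=
            mul_le_mul_of_nonneg_left (avg_sq_le (H.cU 2) _ _ _) (WW_pos x).le
        _ = avg (hs n) (fun t y => WW x * U 2 t y ^ 2) t x :=
            (avg_const_mul _ _ (fun t x => U 2 t x ^ 2) _ _).symm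
        _ ≤ avg (hs n) (fun t y => 3 * k1 t y) t x := by
            refine avg_mono (continuous_const.mul ((H.cU 2).pow 2)) (continuous_const.mul ck1) ?_
            intro s hs'
            have := WW_cmp' (x := x) (mul_nonneg hh.1 hs'.1) (mul_le_one₀ hh.2 hs'.1 hs'.2)
            simp only [hk1]
            nlinarith [sq_nonneg (U 2 t (x + hs n * s))]
        _ = _ := avg_const_mul _ _ _ _ _
    have k2b : (1 + x ^ 2) * avg (hs n) F1 t x ^ 2 ≤ 3 * avg (hs n) k2 t x := by
      calc _ ≤ (1 + x ^ 2) * avg (hs n) (fun t x => F1 t x ^ 2) t x :=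
            mul_le_mul_of_nonneg_left (avg_sq_le H.cF1 _ _ _) (by positivity)
        _ = avg (hs n) (fun t y => (1 + x ^ 2) * F1 t y ^ 2) t x :=
            (avg_const_mul _ _ (fun t x => F1 t x ^ 2) _ _).symm
        _ ≤ avg (hs n) (fun t y => 3 * k2 t y) t x := by
            refine avg_mono (continuous_const.mul (H.cF1.pow 2)) (continuous_const.mul ck2) ?_
            intro s hs'
            have := wt_cmp (x := x) (mul_nonneg hh.1 hs'.1) (mul_le_one₀ hh.2 hs'.1 hs'.2)
            simp only [hk2]
            nlinarith [sq_nonneg (F1 t (x + hs n * s))]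
        _ = _ := avg_const_mul _ _ _ _ _
    have cross : |2 * (avg (hs n) (U 2) t x * avg (hs n) F1 t x)|
        ≤ WW x * avg (hs n) (U 2) t x ^ 2 + (1 + x ^ 2) * avg (hs n) F1 t x ^ 2 := by
      have hw := WW_mul x
      have hp := WW_pos x
      generalize avg (hs n) (U 2) t x = A
      generalize avg (hs n) F1 t x = G
      have e1 : WW x * A ^ 2 + (1 + x ^ 2) * G ^ 2 - 2 * (A * G)
          = WW x * (A - (1 + x ^ 2) * G) ^ 2 := by
        linear_combination (2 * A * G - (1 + x ^ 2) * G ^ 2) * hw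
      have e2 : WW x * A ^ 2 + (1 + x ^ 2) * G ^ 2 + 2 * (A * G)
          = WW x * (A + (1 + x ^ 2) * G) ^ 2 := by
        linear_combination (-2 * A * G - (1 + x ^ 2) * G ^ 2) * hw
      have p1 : 0 ≤ WW x * (A - (1 + x ^ 2) * G) ^ 2 := by positivity
      have p2 : 0 ≤ WW x * (A + (1 + x ^ 2) * G) ^ 2 := by positivity
      rw [abs_le]; constructor <;> linarith
    have third : |2 * (avg (hs n) (U 2) t x * avg (hs n) F1 t x) * φ x|
        ≤ 3 * D * avg (hs n) k1 t x + 3 * D * avg (hs n) k2 t x := by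
      rw [abs_mul]
      calc _ ≤ (WW x * avg (hs n) (U 2) t x ^ 2 + (1 + x ^ 2) * avg (hs n) F1 t x ^ 2) * D := by
            apply mul_le_mul cross (b0 x) (abs_nonneg _) ((abs_nonneg _).trans cross)
        _ ≤ (3 * avg (hs n) k1 t x + 3 * avg (hs n) k2 t x) * D := by gcongr
        _ = _ := by ring
    have first : |-3 * avg (hs n) (U 2) t x ^ 2 * φ1 x + avg (hs n) (U 1) t x ^ 2 * φ3 x
        - 2 * (avg (hs n) (U 1) t x * avg (hs n) F1 t x) * φ1 x| ≤ N t x := by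
      by_cases hx : L < |x|
      · simp [hN, hsp x hx, hsp3 x hx]
      · push Not at hx
        have q1 := hB1 t hz x hx _ hh
        have q2 := hB2 t hz x hx _ hh
        have q3 := hB3 t hz x hx _ hh
        have r1 : |-3 * avg (hs n) (U 2) t x ^ 2 * φ1 x| ≤ 3 * B2 ^ 2 * |φ1 x| := by
          rw [abs_mul, abs_mul, abs_pow, show |(-3:ℝ)| = 3 by norm_num]; gcongr
        have r2 : |avg (hs n) (U 1) t x ^ 2 * φ3 x| ≤ B1 ^ 2 * |φ3 x| := by
          rw [abs_mul, abs_pow]; gcongr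
        have r3 : |2 * (avg (hs n) (U 1) t x * avg (hs n) F1 t x) * φ1 x|
            ≤ 2 * (B1 * B3) * |φ1 x| := by
          rw [abs_mul, abs_mul, abs_mul, show |(2:ℝ)| = 2 by norm_num]; gcongr
        refine (abs_sub _ _).trans ?_
        have := abs_add_le (-3 * avg (hs n) (U 2) t x ^ 2 * φ1 x)
          (avg (hs n) (U 1) t x ^ 2 * φ3 x)
        simp only [hN]; linarith
    have f1 := abs_le.mp first
    have f3 := abs_le.mp third
    rw [abs_le]; constructor <;> linarith [f1.1, f1.2, f3.1, f3.2]
  · refine Eventually.of_forall fun z => ?_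
    have l1 := avg_tendsto (H.cU 1) hs_lim z.1 z.2
    have l2 := avg_tendsto (H.cU 2) hs_lim z.1 z.2
    have l3 := avg_tendsto H.cF1 hs_lim z.1 z.2
    exact (((((l2.pow 2).const_mul (-3)).mul_const _).add ((l1.pow 2).mul_const _)).sub
      (((l2.mul l3).const_mul 2).mul_const _)).sub (((l1.mul l3).const_mul 2).mul_const _)
  · refine Eventually.of_forall fun z => ?_
    exact (tendsto_const_nhds.add ((avg_tendsto ck1 hs_lim z.1 z.2).const_mul _)).add
      ((avg_tendsto ck2 hs_lim z.1 z.2).const_mul _)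
  · have : ∀ n, ∫ z, (N z.1 z.2 + (3 * D) * avg (hs n) k1 z.1 z.2
      + (3 * D) * avg (hs n) k2 z.1 z.2) ∂(slab a b)
        = ∫ z, (N z.1 z.2 + (3 * D) * k1 z.1 z.2 + (3 * D) * k2 z.1 z.2) ∂(slab a b) := by
      intro n
      obtain ⟨m1, m1'⟩ := avg_slab ck1 nk1 ik1 (hs n)
      obtain ⟨m2, m2'⟩ := avg_slab ck2 nk2 ik2 (hs n)
      rw [integral_lin3 iN m1 m2, integral_lin3 iN ik1 ik2, m1', m2']
    simp only [this]
    exact tendsto_const_nhds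

end Sol
end GKdV

open MeasureTheory Real

namespace GKdV
open Filter Topology

namespace Sol
variable {p : ℝ} {U : ℕ → ℝ → ℝ → ℝ} {F F1 F2 : ℝ → ℝ → ℝ} {a b C : ℝ}

theorem b_glob (H : Sol p U F F1 F2) (hab : a ≤ b) (hB : ∀ t ∈ Set.Icc a b, ff p U t ≤ C)
    {φ φ1 φ2 φ3 : ℝ → ℝ} {L : ℝ} (h : T3 φ φ1 φ2 φ3) (hsp : ∀ x, L < |x| → φ1 x = 0)
    (hb : ∃ C, ∀ x, |φ x| ≤ C) :
    (∫ x, bb p U b x / (p + 1) * φ x) - ∫ x, bb p U a x / (p + 1) * φ x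
      = ∫ z, ((U 2 z.1 z.2 * F1 z.1 z.2) * φ z.2
          + (- (U 1 z.1 z.2 * F1 z.1 z.2) - 1 / 2 * F z.1 z.2 ^ 2) * φ1 z.2
          + bb p U z.1 z.2 / (p + 1) * φ3 z.2) ∂(slab a b) := by
  obtain ⟨D, b0, b1, b2, b3⟩ := bdd_all h hsp hb
  refine glob_of_compact (Q := fun t x => bb p U t x / (p + 1))
    (f0 := fun t x => U 2 t x * F1 t x)
    (f1 := fun t x => - (U 1 t x * F1 t x) - 1 / 2 * F t x ^ 2)
    (f3 := fun t x => bb p U t x / (p + 1)) (H.cb.div_const _) ((H.rb a).integrable.div_const _)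
    ((H.rb b).integrable.div_const _) (H.i_u2F1 hab hB)
    ((H.i_u1F1 hB).neg.sub ((H.i_F hB).const_mul _)) ((H.i_b hB).div_const _) ?_ h b0 b1 b2 b3
  intro ψ ψ1 ψ2 ψ3 L hψ hL
  rw [H.b_compact hψ hab hL]
  congr 1; funext z; ring

theorem e_flux (H : Sol p U F F1 F2) (hab : a ≤ b) (hB : ∀ t ∈ Set.Icc a b, ff p U t ≤ C) :
    FluxId (ee p U) (KK U F F1) (ee p U) a b := by
  intro φ φ1 φ2 φ3 L h hsp hb
  have h1 := H.a_glob hab hB h hsp hb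
  have h2 := H.b_glob hab hB h hsp hb
  obtain ⟨D, hD⟩ := hb
  have hsp3 := deriv_supp h.d2 (deriv_supp h.d1 hsp)
  have iu : ∀ t, Integrable (fun x => U 1 t x ^ 2 * φ x) := fun t =>
    ((H.rU 1 t).sq.mulBdd' h.c0 hD).integrable
  have ib : ∀ t, Integrable (fun x => bb p U t x / (p + 1) * φ x) := fun t => by
    have := (((H.rb t).mulBdd' h.c0 hD).const_mul (p + 1)⁻¹).integrable
    refine this.congr (Eventually.of_forall fun x => ?_)
    simp only; ring
  have e : ∀ t, ∫ x, ee p U t x * φ x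
      = 1 / 2 * (∫ x, U 1 t x ^ 2 * φ x) + ∫ x, bb p U t x / (p + 1) * φ x := by
    intro t
    rw [← integral_const_mul, ← integral_add ((iu t).const_mul _) (ib t)]
    congr 1; funext x; unfold ee; ring
  rw [e, e]
  have h3 : 1 / 2 * (∫ x, U 1 b x ^ 2 * φ x) + (∫ x, bb p U b x / (p + 1) * φ x)
      - (1 / 2 * (∫ x, U 1 a x ^ 2 * φ x) + ∫ x, bb p U a x / (p + 1) * φ x)
      = 1 / 2 * ((∫ x, U 1 b x ^ 2 * φ x) - ∫ x, U 1 a x ^ 2 * φ x)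
       + ((∫ x, bb p U b x / (p + 1) * φ x) - ∫ x, bb p U a x / (p + 1) * φ x) := by ring
  have i0 : Integrable (fun z : ℝ × ℝ => U 2 z.1 z.2 * F1 z.1 z.2 * φ z.2) (slab a b) := by
    refine slab_mono (g := fun t x => D * |U 2 t x * F1 t x|)
      (f := fun t x => U 2 t x * F1 t x * φ x) ((H.i_u2F1 hab hB).abs.const_mul D)
      (((H.cU 2).mul H.cF1).mul (h.c0.comp continuous_snd)) fun t _ x => ?_
    rw [abs_mul, mul_comm]
    exact mul_le_mul_of_nonneg_right (hD x) (abs_nonneg _)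
  have := H.cU 1; have := H.cU 2; have := H.cF1; have := H.cF; have := H.cb
  have := h.c1; have := h.c3
  have i1 : Integrable (fun z : ℝ × ℝ => -3 / 2 * U 2 z.1 z.2 ^ 2 * φ1 z.2
      + 1 / 2 * U 1 z.1 z.2 ^ 2 * φ3 z.2 - (U 1 z.1 z.2 * F1 z.1 z.2) * φ1 z.2) (slab a b) :=
    integrable_slab_of_supp (L := L) (g := fun t x => -3 / 2 * U 2 t x ^ 2 * φ1 x
      + 1 / 2 * U 1 t x ^ 2 * φ3 x - (U 1 t x * F1 t x) * φ1 x)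
      (by fun_prop) (fun t x hx => by simp [hsp x hx, hsp3 x hx])
  have i2 : Integrable (fun z : ℝ × ℝ => (- (U 1 z.1 z.2 * F1 z.1 z.2) - 1 / 2 * F z.1 z.2 ^ 2)
      * φ1 z.2 + bb p U z.1 z.2 / (p + 1) * φ3 z.2) (slab a b) :=
    integrable_slab_of_supp (L := L) (g := fun t x => (- (U 1 t x * F1 t x) - 1 / 2 * F t x ^ 2)
      * φ1 x + bb p U t x / (p + 1) * φ3 x)
      (by fun_prop) (fun t x hx => by simp [hsp x hx, hsp3 x hx])
  rw [h3, h1, h2, ← integral_const_mul, ← integral_add]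
  · congr 1; funext z; unfold KK ee; ring
  · refine (i1.sub i0).congr (Eventually.of_forall fun z => ?_)
    simp only [Pi.sub_apply]; ring
  · refine (i0.add i2).congr (Eventually.of_forall fun z => ?_)
    simp only [Pi.add_apply]; ring

lemma flux_cons {Q J E : ℝ → ℝ → ℝ} (h : FluxId Q J E a b) : ∫ x, Q b x = ∫ x, Q a x := by
  have := h (fun _ => 1) (fun _ => 0) (fun _ => 0) (fun _ => 0) 0
    ⟨fun x => hasDerivAt_const _ _, fun x => hasDerivAt_const _ _, fun x => hasDerivAt_const _ _,
      continuous_const⟩ (fun _ _ => rfl) ⟨1, by simp⟩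
  simp only [mul_one, mul_zero, add_zero, integral_zero] at this
  linarith

lemma ff_eq (H : Sol p U F F1 F2) (t : ℝ) : ff p U t = (∫ x, U 0 t x ^ 2) + ∫ x, ee p U t x :=
  integral_add (H.rU 0 t).sq.integrable (H.re t).integrable

lemma ff_cons (H : Sol p U F F1 F2) (hab : a ≤ b) (hB : ∀ t ∈ Set.Icc a b, ff p U t ≤ C) :
    ff p U b = ff p U a := by
  rw [H.ff_eq, H.ff_eq, flux_cons (H.e_flux hab hB),
    flux_cons (Q := fun t x => U 0 t x ^ 2) (H.m_flux hab hB)]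

lemma ff_closed (H : Sol p U F F1 F2) (c : ℝ) : IsClosed {t | ff p U t ≤ c} := by
  have cg : Continuous (fun q : ℝ × ℝ => U 0 q.1 q.2 ^ 2 + ee p U q.1 q.2) :=
    ((H.cU 0).pow 2).add H.ce
  have nn : ∀ t x, 0 ≤ U 0 t x ^ 2 + ee p U t x := fun t x => add_nonneg (sq_nonneg _) (H.e_nn t x)
  have e : {t | ff p U t ≤ c}
      = ⋂ n : ℕ, {t | ∫ x in (-(n:ℝ))..n, (U 0 t x ^ 2 + ee p U t x) ≤ c} := by
    ext t
    simp only [Set.mem_setOf_eq, Set.mem_iInter]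
    have hi := (H.rff t).integrable
    constructor
    · intro h n
      rw [intervalIntegral.integral_of_le (by linarith [(Nat.cast_nonneg n : (0:ℝ) ≤ n)])]
      exact (setIntegral_le_integral hi (Eventually.of_forall (nn t))).trans h
    · intro h
      refine le_of_tendsto (intervalIntegral_tendsto_integral hi
        (tendsto_neg_atTop_atBot.comp tendsto_natCast_atTop_atTop) tendsto_natCast_atTop_atTop)
        (Eventually.of_forall h)
  rw [e]
  refine isClosed_iInter fun n => isClosed_le ?_ continuous_const
  exact intervalIntegral.continuous_parametric_intervalIntegral_of_continuous'
    (f := fun t x => U 0 t x ^ 2 + ee p U t x) cg _ _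

end Sol

/-- a lower semicontinuous function which is constant on intervals where it is bounded is
locally bounded. -/
theorem baire_bdd {f : ℝ → ℝ} (hc : ∀ c, IsClosed {t | f t ≤ c})
    (hk : ∀ a b C, a ≤ b → (∀ t ∈ Set.Icc a b, f t ≤ C) → f b = f a) (a b : ℝ) :
    f a = f b := by
  -- the set of good points
  set G : Set ℝ := {t | ∃ C, ∀ᶠ s in 𝓝 t, f s ≤ C} with hG
  have oG : IsOpen G := by
    rw [isOpen_iff_mem_nhds]
    rintro t ⟨C, h⟩
    filter_upwards [eventually_eventually_nhds.mpr h] with s hs using ⟨C, hs⟩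
  -- on an interval inside `G`, `f` is bounded
  have bG : ∀ a b, Set.Icc a b ⊆ G → ∃ C, ∀ t ∈ Set.Icc a b, f t ≤ C := by
    intro a b hab
    refine isCompact_Icc.induction_on (p := fun s => ∃ C, ∀ t ∈ s, f t ≤ C) ⟨0, by simp⟩ ?_ ?_ ?_
    · rintro s t hst ⟨C, h⟩; exact ⟨C, fun x hx => h x (hst hx)⟩
    · rintro s t ⟨C, h⟩ ⟨C', h'⟩
      refine ⟨max C C', ?_⟩
      rintro x (hx | hx)
      · exact (h x hx).trans (le_max_left _ _)
      · exact (h' x hx).trans (le_max_right _ _)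
    · intro x hx
      obtain ⟨C, h⟩ := hab hx
      exact ⟨_, mem_nhdsWithin_of_mem_nhds h, C, fun t ht => ht⟩
  have cG : ∀ a b, Set.uIcc a b ⊆ G → f a = f b := by
    intro a b hab
    obtain ⟨C, hC⟩ := bG _ _ hab
    rcases le_total a b with h | h
    · rw [min_eq_left h, max_eq_right h] at hC
      exact (hk a b C h hC).symm
    · rw [min_eq_right h, max_eq_left h] at hC
      exact hk b a C h hC
  -- half-open version
  have cH : ∀ s t, s < t → Set.Ioc s t ⊆ G → f t = f s := by
    intro s t hst hG'
    have h1 : ∀ r ∈ Set.Ioc s t, f r = f t := by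
      intro r hr
      apply cG
      rw [Set.uIcc_of_le hr.2]
      exact fun x hx => hG' ⟨hr.1.trans_le hx.1, hx.2⟩
    refine hk s t (max (f t) (f s)) hst.le fun r hr => ?_
    rcases hr.1.eq_or_lt with h | h
    · rw [← h]; exact le_max_right _ _
    · rw [h1 r ⟨h, hr.2⟩]; exact le_max_left _ _
  have cH' : ∀ s t, t < s → Set.Ico t s ⊆ G → f t = f s := by
    intro s t hst hG'
    have h1 : ∀ r ∈ Set.Ico t s, f r = f t := by
      intro r hr
      symm
      apply cG
      rw [Set.uIcc_of_le hr.1]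
      exact fun x hx => hG' ⟨hx.1, hx.2.trans_lt hr.2⟩
    refine (hk t s (max (f t) (f s)) hst.le fun r hr => ?_).symm
    rcases hr.2.eq_or_lt with h | h
    · rw [h]; exact le_max_right _ _
    · rw [h1 r ⟨hr.1, h⟩]; exact le_max_left _ _
  by_cases hne : (Gᶜ).Nonempty
  · exfalso
    have clG : IsClosed Gᶜ := oG.isClosed_compl
    have : Nonempty (Gᶜ : Set ℝ) := hne.to_subtype
    have : CompleteSpace (Gᶜ : Set ℝ) := clG.completeSpace_coe
    obtain ⟨n, ⟨t0, ht0⟩, hi⟩ := nonempty_interior_of_iUnion_of_closed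
      (f := fun n : ℕ => {t : (Gᶜ : Set ℝ) | f t ≤ n})
      (fun n => (hc n).preimage continuous_subtype_val) (by
        ext t
        simp only [Set.mem_iUnion, Set.mem_setOf_eq, Set.mem_univ, iff_true]
        exact exists_nat_ge _)
    rw [mem_interior_iff_mem_nhds, nhds_subtype_eq_comap, mem_comap] at hi
    obtain ⟨V, hV, hV2⟩ := hi
    obtain ⟨ε, hε, hb⟩ := Metric.mem_nhds_iff.mp hV
    have hn : ∀ s ∈ Gᶜ, |s - t0| < ε → f s ≤ n := by
      intro s hs hd
      exact @hV2 ⟨s, hs⟩ (hb (by rwa [Metric.mem_ball, Real.dist_eq]))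
    apply ht0
    refine ⟨n, ?_⟩
    filter_upwards [Metric.ball_mem_nhds t0 hε] with t ht
    rw [Metric.mem_ball, Real.dist_eq] at ht
    by_cases htG : t ∈ G
    · rcases lt_trichotomy t t0 with h | h | h
      · -- smallest bad point above `t`
        set S := Gᶜ ∩ Set.Icc t t0
        have Sne : S.Nonempty := ⟨t0, ht0, h.le, le_rfl⟩
        have Sbb : BddBelow S := ⟨t, fun x hx => hx.2.1⟩
        have hm : sInf S ∈ S := (clG.inter isClosed_Icc).csInf_mem Sne Sbb
        have hlt : t < sInf S := lt_of_le_of_ne hm.2.1 (fun e => hm.1 (e ▸ htG))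
        rw [cH' (sInf S) t hlt ?_]
        · refine hn _ hm.1 ?_
          rw [abs_lt] at ht ⊢
          constructor <;> linarith [hm.2.2, ht.1]
        · intro x hx
          by_contra hxG
          exact absurd (csInf_le Sbb ⟨hxG, hx.1, hx.2.le.trans hm.2.2⟩) (not_le.mpr hx.2)
      · exact absurd (h ▸ htG) ht0
      · set S := Gᶜ ∩ Set.Icc t0 t
        have Sne : S.Nonempty := ⟨t0, ht0, le_rfl, h.le⟩
        have Sbb : BddAbove S := ⟨t, fun x hx => hx.2.2⟩
        have hm : sSup S ∈ S := (clG.inter isClosed_Icc).csSup_mem Sne Sbb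
        have hlt : sSup S < t := lt_of_le_of_ne hm.2.2 (fun e => hm.1 (e ▸ htG))
        rw [cH (sSup S) t hlt ?_]
        · refine hn _ hm.1 ?_
          rw [abs_lt] at ht ⊢
          constructor <;> linarith [hm.2.1, ht.2]
        · intro x hx
          by_contra hxG
          exact absurd (le_csSup Sbb ⟨hxG, hm.2.1.trans hx.1.le, hx.2⟩) (not_le.mpr hx.1)
    · exact hn t htG ht
  · apply cG
    intro x _
    by_contra h
    exact hne ⟨x, h⟩

namespace Sol
variable {p : ℝ} {U : ℕ → ℝ → ℝ → ℝ} {F F1 F2 : ℝ → ℝ → ℝ} {a b : ℝ}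

theorem ff_const (H : Sol p U F F1 F2) (t : ℝ) : ff p U t = ff p U 0 :=
  baire_bdd H.ff_closed (fun _ _ _ hab hB => H.ff_cons hab hB) t 0

lemma ff_le (H : Sol p U F F1 F2) (a b : ℝ) : ∀ t ∈ Set.Icc a b, ff p U t ≤ ff p U 0 :=
  fun t _ => (H.ff_const t).le

theorem mass_const (H : Sol p U F F1 F2) (t : ℝ) : ∫ x, U 0 t x ^ 2 = ∫ x, U 0 0 x ^ 2 := by
  rcases le_total 0 t with h | h
  · exact flux_cons (Q := fun t x => U 0 t x ^ 2) (H.m_flux h (H.ff_le _ _))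
  · exact (flux_cons (Q := fun t x => U 0 t x ^ 2) (H.m_flux h (H.ff_le _ _))).symm

theorem energy_const (H : Sol p U F F1 F2) (t : ℝ) : ∫ x, ee p U t x = ∫ x, ee p U 0 x := by
  rcases le_total 0 t with h | h
  · exact flux_cons (H.e_flux h (H.ff_le _ _))
  · exact (flux_cons (H.e_flux h (H.ff_le _ _))).symm

end Sol
end GKdV

open MeasureTheory Real

namespace GKdV
open Filter Topology

lemma slab_fubini {a b : ℝ} (hab : a ≤ b) {g : ℝ → ℝ → ℝ}
    (hg : Integrable (fun z : ℝ × ℝ => g z.1 z.2) (slab a b)) :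
    IntervalIntegrable (fun t => ∫ x, g t x) volume a b ∧
    ∫ z, g z.1 z.2 ∂(slab a b) = ∫ t in a..b, ∫ x, g t x := by
  unfold slab at hg ⊢
  constructor
  · rw [intervalIntegrable_iff_integrableOn_Icc_of_le hab]
    exact hg.integral_prod_left
  · rw [integral_prod _ hg, intervalIntegral.integral_of_le hab, integral_Icc_eq_integral_Ioc]

namespace Sol
variable {p : ℝ} {U : ℕ → ℝ → ℝ → ℝ} {F F1 F2 : ℝ → ℝ → ℝ} {a b : ℝ}

lemma lam_glob (H : Sol p U F F1 F2) : ∃ Λ, 0 ≤ Λ ∧ ∀ t x, bb p U t x ≤ Λ * U 0 t x ^ 2 := by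
  have hp := H.hp1
  refine ⟨(√(2 * ff p U 0)) ^ (p - 1), by positivity, fun t x => ?_⟩
  have h1 : |U 0 t x| ≤ √(2 * ff p U 0) := by
    apply Real.abs_le_sqrt
    refine ((H.rU 0 t).sq_le (H.rU 1 t) (H.dU 0 t) x).trans ?_
    calc ∫ y, (U 0 t y ^ 2 + U 1 t y ^ 2) ≤ ∫ y, 2 * (U 0 t y ^ 2 + ee p U t y) := by
          refine integral_mono ((H.rU 0 t).sq.add (H.rU 1 t).sq).integrable
            ((H.rff t).const_mul 2).integrable fun y => ?_
          have h1 : 0 ≤ bb p U t y / (p + 1) := div_nonneg (H.b_nn t y) (by linarith)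
          simp only [ee]
          nlinarith [sq_nonneg (U 0 t y)]
      _ = 2 * ff p U t := by rw [integral_const_mul]; rfl
      _ = _ := by rw [H.ff_const t]
  have h2 : |U 0 t x| ^ (p - 1) ≤ (√(2 * ff p U 0)) ^ (p - 1) :=
    Real.rpow_le_rpow (abs_nonneg _) h1 (by linarith)
  rw [← H.uF, H.eF]
  nlinarith [sq_nonneg (U 0 t x)]

lemma E_eq (H : Sol p U F F1 F2) (t : ℝ) :
    ∫ x, ee p U t x = 1 / 2 * (∫ x, U 1 t x ^ 2) + (∫ x, bb p U t x) / (p + 1) := by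
  rw [← integral_const_mul, ← integral_div, ← integral_add ((H.rU 1 t).sq.integrable.const_mul _)
    ((H.rb t).integrable.div_const _)]
  rfl

lemma J_eq (H : Sol p U F F1 F2) (t : ℝ) :
    ∫ x, jj p U t x = 3 * (∫ x, U 1 t x ^ 2) + 2 * p / (p + 1) * (∫ x, bb p U t x) := by
  rw [← integral_const_mul, ← integral_const_mul,
    ← integral_add ((H.rU 1 t).sq.integrable.const_mul _) ((H.rb t).integrable.const_mul _)]
  rfl

lemma K_eq (H : Sol p U F F1 F2) (t : ℝ) :
    ∫ x, KK U F F1 t x = 3 / 2 * (∫ x, U 2 t x ^ 2) + 2 * (∫ x, U 1 t x * F1 t x)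
      + 1 / 2 * ∫ x, F t x ^ 2 := by
  have h1 := (H.rU 2 t).sq.integrable.const_mul (3 / 2)
  exact integral_lin3 (f := fun x => 3 / 2 * U 2 t x ^ 2) h1 ((H.rU 1 t).mul (H.rF1 t)).integrable
    (H.rF t).sq.integrable |>.trans (by rw [integral_const_mul])

/-- the key quadratic inequality -/
theorem key_ineq (H : Sol p U F F1 F2) (t : ℝ) :
    (p - 1) ^ 2 / (2 * (p + 1) ^ 2) * (∫ x, bb p U t x) ^ 2
      ≤ (∫ x, U 0 t x ^ 2) * (∫ x, KK U F F1 t x) - (∫ x, ee p U t x) * ∫ x, jj p U t x := by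
  have hp := H.hp1
  have hp3 := H.hp
  rw [H.E_eq, H.J_eq, H.K_eq]
  have r0 := H.rU 0 t; have r1 := H.rU 1 t; have r2 := H.rU 2 t
  have rF := H.rF t; have rF1 := H.rF1 t
  have hA0 : 0 ≤ ∫ x, U 1 t x ^ 2 := integral_nonneg fun x => sq_nonneg _
  have hB0 : 0 ≤ ∫ x, bb p U t x := integral_nonneg fun x => H.b_nn t x
  have hM0 : 0 ≤ ∫ x, U 0 t x ^ 2 := integral_nonneg fun x => sq_nonneg _
  have hG0 : 0 ≤ ∫ x, U 1 t x * F1 t x := integral_nonneg fun x => H.u1F1_nn t x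
  -- integrations by parts
  have i1 : ∫ x, U 0 t x * U 2 t x = - ∫ x, U 1 t x ^ 2 := by
    have := (r0.mul r1).integral_deriv_zero (r1.sq.add (r0.mul r2)) (fun x => by
      have := (H.dU 0 t x).mul (H.dU 1 t x)
      exact this.congr_deriv (by simp; ring))
    rw [integral_add r1.sq.integrable (r0.mul r2).integrable] at this
    linarith
  have i2 : ∫ x, U 2 t x * F t x = - ∫ x, U 1 t x * F1 t x := by
    have := (r1.mul rF).integral_deriv_zero ((r2.mul rF).add (r1.mul rF1)) (fun x => by
      have := (H.dU 1 t x).mul (H.dF t x)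
      exact this.congr_deriv (by simp))
    rw [integral_add (r2.mul rF).integrable (r1.mul rF1).integrable] at this
    linarith
  have i3 : ∫ x, U 0 t x * F t x = ∫ x, bb p U t x := by
    congr 1; funext x; exact H.uF t x
  set A := ∫ x, U 1 t x ^ 2
  set B := ∫ x, bb p U t x
  set M := ∫ x, U 0 t x ^ 2
  set G := ∫ x, U 1 t x * F1 t x
  set V := ∫ x, U 2 t x ^ 2
  set W := ∫ x, F t x ^ 2
  have s3 : √3 ^ 2 = 3 := Real.sq_sqrt (by norm_num)
  have s3p : 0 < √3 := by positivity
  have quad : ∀ α : ℝ, 0 ≤ M * (α * α) + (2 * (√3 * A + B)) * α + (3 * V + W + 2 * √3 * G) := by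
    intro α
    have h1 : 0 ≤ ∫ x, (√3 * (- U 2 t x) + F t x + α * U 0 t x) ^ 2 :=
      integral_nonneg fun x => sq_nonneg _
    have e1 : ∫ x, (√3 * (- U 2 t x) + F t x + α * U 0 t x) ^ 2
        = ∫ x, (((3 * U 2 t x ^ 2 + 1 * F t x ^ 2 + α ^ 2 * U 0 t x ^ 2)
          + (-2 * √3) * (U 2 t x * F t x) + (-2 * √3 * α) * (U 0 t x * U 2 t x))
          + (2 * α) * (U 0 t x * F t x) + 0 * U 0 t x) := by
      congr 1; funext x
      linear_combination (U 2 t x ^ 2) * s3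
    have k1 : Integrable (fun x => 3 * U 2 t x ^ 2) := r2.sq.integrable.const_mul 3
    have k2 : Integrable (fun x => 3 * U 2 t x ^ 2 + 1 * F t x ^ 2 + α ^ 2 * U 0 t x ^ 2) :=
      (k1.add (rF.sq.integrable.const_mul 1)).add (r0.sq.integrable.const_mul _)
    have k3 : Integrable (fun x => (3 * U 2 t x ^ 2 + 1 * F t x ^ 2 + α ^ 2 * U 0 t x ^ 2)
          + (-2 * √3) * (U 2 t x * F t x) + (-2 * √3 * α) * (U 0 t x * U 2 t x)) :=
      (k2.add ((r2.mul rF).integrable.const_mul _)).add ((r0.mul r2).integrable.const_mul _)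
    rw [e1, integral_lin3 k3 (r0.mul rF).integrable r0.integrable,
      integral_lin3 k2 (r2.mul rF).integrable (r0.mul r2).integrable,
      integral_lin3 k1 rF.sq.integrable r0.sq.integrable, integral_const_mul, i1, i2, i3] at h1
    linarith
  have disc := discrim_le_zero quad
  unfold discrim at disc
  have hq : (√3 * A + B) ^ 2 ≤ M * (3 * V + W + 2 * √3 * G) := by nlinarith
  have hc : 0 ≤ √3 - (p + 3) / (p + 1) := by
    rw [sub_nonneg, div_le_iff₀ (by linarith)]
    have s1 : 1 < √3 := by rw [Real.lt_sqrt] <;> norm_num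
    nlinarith [mul_nonneg (sub_nonneg.mpr s1.le) (sub_nonneg.mpr hp3)]
  have h2 : √3 ≤ 2 := by
    rw [show (2:ℝ) = √4 by rw [show (4:ℝ) = 2 ^ 2 by norm_num]; simp]
    exact Real.sqrt_le_sqrt (by norm_num)
  have e2 : M * (3 / 2 * V + 2 * G + 1 / 2 * W)
      - (1 / 2 * A + B / (p + 1)) * (3 * A + 2 * p / (p + 1) * B)
      = 1 / 2 * (M * (3 * V + W + 2 * √3 * G) - (√3 * A + B) ^ 2)
        + (√3 - (p + 3) / (p + 1)) * (A * B) + (2 - √3) * (M * G)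
        + (p - 1) ^ 2 / (2 * (p + 1) ^ 2) * B ^ 2 := by
    have : p + 1 ≠ 0 := by linarith
    field_simp
    linear_combination (A ^ 2 * (p + 1) ^ 2) * s3
  rw [e2]
  have q1 := mul_nonneg hc (mul_nonneg hA0 hB0)
  have q2 := mul_nonneg (sub_nonneg.mpr h2) (mul_nonneg hM0 hG0)
  linarith

/-- lower bound for the potential energy from mass concentration -/
lemma b_lower (H : Sol p U F F1 F2) {M C : ℝ} (hM : 0 < M) (hC : 0 ≤ C) :
    ∃ δ > 0, ∀ t x0 : ℝ, (∫ x, U 0 t x ^ 2) = M → (∫ x, (x - x0) ^ 2 * U 0 t x ^ 2) ≤ C →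
      δ ≤ ∫ x, bb p U t x := by
  have hp := H.hp1
  set r := √(4 * C / M + 1) with hr
  have r2 : r ^ 2 = 4 * C / M + 1 := Real.sq_sqrt (by positivity)
  have rp : 0 < r := by positivity
  set η := √(M / (8 * r)) with hη
  have η2 : η ^ 2 = M / (8 * r) := Real.sq_sqrt (by positivity)
  have ηp : 0 < η := by positivity
  set c := (η ^ (p - 1))⁻¹ with hc
  have cp : 0 < c := by positivity
  refine ⟨M / (2 * c), by positivity, fun t x0 hMt hCt => ?_⟩
  have pt : ∀ x, U 0 t x ^ 2 ≤ (Set.Icc (x0 - r) (x0 + r)).indicator (fun _ => η ^ 2) x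
      + (1 / r ^ 2) * ((x - x0) ^ 2 * U 0 t x ^ 2) + c * bb p U t x := by
    intro x
    have hb := H.b_nn t x
    have h3 : 0 ≤ (1 / r ^ 2) * ((x - x0) ^ 2 * U 0 t x ^ 2) := by positivity
    have h4 : 0 ≤ c * bb p U t x := by positivity
    by_cases hx : x ∈ Set.Icc (x0 - r) (x0 + r)
    · rw [Set.indicator_of_mem hx]
      by_cases hu : |U 0 t x| ≤ η
      · have : U 0 t x ^ 2 ≤ η ^ 2 := by rw [← sq_abs]; gcongr
        linarith
      · push Not at hu
        have h5 : η ^ (p - 1) ≤ |U 0 t x| ^ (p - 1) :=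
          Real.rpow_le_rpow ηp.le hu.le (by linarith)
        have h6 : U 0 t x ^ 2 ≤ c * bb p U t x := by
          rw [← H.uF, H.eF, hc, inv_mul_eq_div, le_div_iff₀ (by positivity)]
          nlinarith [sq_nonneg (U 0 t x)]
        nlinarith [sq_nonneg η]
    · rw [Set.indicator_of_notMem hx]
      have h5 : r ^ 2 ≤ (x - x0) ^ 2 := by
        rw [Set.mem_Icc, not_and_or, not_le, not_le] at hx
        rcases hx with h | h <;> nlinarith
      have : U 0 t x ^ 2 ≤ (1 / r ^ 2) * ((x - x0) ^ 2 * U 0 t x ^ 2) := by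
        rw [one_div, inv_mul_eq_div, le_div_iff₀ (by positivity)]
        nlinarith [sq_nonneg (U 0 t x)]
      linarith
  have iI : Integrable ((Set.Icc (x0 - r) (x0 + r)).indicator (fun _ : ℝ => η ^ 2)) := by
    rw [integrable_indicator_iff measurableSet_Icc]
    exact integrableOn_const (by simp)
  have r0 := (H.rU 0 t).sq
  have i2 : Integrable (fun x => (x - x0) ^ 2 * U 0 t x ^ 2) := by
    refine ((r0.mulX.mulX.add ((r0.mulX).const_mul (-2 * x0))).add
      (r0.const_mul (x0 ^ 2))).integrable.congr (Eventually.of_forall fun x => ?_)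
    simp only; ring
  have ib := (H.rb t).integrable
  have hI : ∫ x, (Set.Icc (x0 - r) (x0 + r)).indicator (fun _ : ℝ => η ^ 2) x = 2 * r * η ^ 2 := by
    rw [integral_indicator measurableSet_Icc, setIntegral_const]
    simp only [Measure.real, Real.volume_Icc, smul_eq_mul]
    rw [ENNReal.toReal_ofReal (by linarith)]; ring
  have tot := integral_mono r0.integrable ((iI.add (i2.const_mul (1 / r ^ 2))).add
    (ib.const_mul c)) pt
  have e := integral_lin3 (c := 1 / r ^ 2) (d := c) iI i2 ib
  simp only [Pi.add_apply] at tot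
  rw [e, hI, hMt] at tot
  have t1 : 2 * r * η ^ 2 = M / 4 := by rw [η2]; field_simp; norm_num
  have t2 : 1 / r ^ 2 * (∫ x, (x - x0) ^ 2 * U 0 t x ^ 2) ≤ M / 4 := by
    rw [one_div, inv_mul_eq_div, div_le_iff₀ (by positivity), r2]
    have : M / 4 * (4 * C / M + 1) = C + M / 4 := by field_simp
    rw [this]; linarith
  rw [div_le_iff₀ (by positivity)]
  nlinarith

end Sol
end GKdV

open MeasureTheory Real

namespace GKdV
open Filter Topology

section mom
variable (p : ℝ) (U : ℕ → ℝ → ℝ → ℝ)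
/-- first moment of the mass -/
noncomputable def PP (t : ℝ) : ℝ := ∫ x, U 0 t x ^ 2 * x
/-- second moment of the mass -/
noncomputable def SS (t : ℝ) : ℝ := ∫ x, U 0 t x ^ 2 * x ^ 2
/-- first moment of the energy -/
noncomputable def QQ (t : ℝ) : ℝ := ∫ x, ee p U t x * x
end mom

lemma prim_one (x : ℝ) : ∫ _ in (0:ℝ)..x, (1:ℝ) = x := by simp
lemma prim_two (x : ℝ) : ∫ y in (0:ℝ)..x, 2 * y = x ^ 2 := by
  rw [intervalIntegral.integral_const_mul, integral_id]; ring

lemma weight_one {Q J E : ℝ → ℝ → ℝ} {a b : ℝ} (hab : a ≤ b) (H : FluxId Q J E a b)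
    (cJ : Continuous (fun q : ℝ × ℝ => J q.1 q.2)) (nJ : ∀ t x, 0 ≤ J t x)
    (iE : Integrable (fun z : ℝ × ℝ => E z.1 z.2) (slab a b))
    (ra : Rapid (fun x => Q a x)) (rb : Rapid (fun x => Q b x)) :
    IntervalIntegrable (fun t => ∫ x, J t x) volume a b ∧
    (∫ x, Q b x * x) - (∫ x, Q a x * x) = - ∫ t in a..b, ∫ x, J t x := by
  have d0 : ∀ x : ℝ, HasDerivAt (fun _ : ℝ => (1:ℝ)) ((fun _ => 0) x) x :=
    fun x => hasDerivAt_const _ _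
  have d1 : ∀ x : ℝ, HasDerivAt (fun _ : ℝ => (0:ℝ)) ((fun _ => 0) x) x :=
    fun x => hasDerivAt_const _ _
  have B0 : ∀ x : ℝ, |(fun _ : ℝ => (1:ℝ)) x| ≤ 1 * (1 + x ^ 2) := fun x => by
    simp; positivity
  have B1 : ∀ x : ℝ, |(fun _ : ℝ => (0:ℝ)) x| ≤ 1 * (1 + |x|) := fun x => by
    simp; positivity
  have B2 : ∀ x : ℝ, |(fun _ : ℝ => (0:ℝ)) x| ≤ 1 := fun x => by simp
  have iJ := H.fatou cJ nJ iE ra rb d0 d1 continuous_const zero_le_one B0 B1 B2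
    (fun _ => zero_le_one)
  have h := H.weight cJ iE ra rb d0 d1 continuous_const zero_le_one B0 B1 B2 iJ
  simp only [mul_one, mul_zero, add_zero, integral_neg] at h iJ
  simp only [prim_one] at h
  obtain ⟨f1, f2⟩ := slab_fubini hab iJ
  exact ⟨f1, by rw [h, f2]⟩

namespace Sol
variable {p : ℝ} {U : ℕ → ℝ → ℝ → ℝ} {F F1 F2 : ℝ → ℝ → ℝ} {a b : ℝ}

lemma P_ev (H : Sol p U F F1 F2) (hab : a ≤ b) :
    IntervalIntegrable (fun t => ∫ x, jj p U t x) volume a b ∧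
    PP U b - PP U a = - ∫ t in a..b, ∫ x, jj p U t x :=
  weight_one hab (H.m_flux hab (H.ff_le a b)) H.cj H.j_nn (H.i_rho (H.ff_le a b))
    (H.rU 0 a).sq (H.rU 0 b).sq

lemma Q_ev (H : Sol p U F F1 F2) (hab : a ≤ b) :
    IntervalIntegrable (fun t => ∫ x, KK U F F1 t x) volume a b ∧
    QQ p U b - QQ p U a = - ∫ t in a..b, ∫ x, KK U F F1 t x :=
  weight_one hab (H.e_flux hab (H.ff_le a b)) H.cK H.K_nn (H.i_e (H.ff_le a b))
    (H.re a) (H.re b)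

lemma S_ev (H : Sol p U F F1 F2) (hab : a ≤ b) :
    IntervalIntegrable (fun t => ∫ x, jj p U t x * (2 * x)) volume a b ∧
    SS U b - SS U a = - ∫ t in a..b, ∫ x, jj p U t x * (2 * x) := by
  have hB := H.ff_le a b
  have d1 : ∀ x : ℝ, HasDerivAt (fun x : ℝ => 2 * x) ((fun _ => (2:ℝ)) x) x := one_weight.2
  have iJ : Integrable (fun z : ℝ × ℝ => jj p U z.1 z.2 * (2 * z.2)) (slab a b) := by
    refine slab_mono (g := fun t x => jj p U t x * (1 + x ^ 2))
      (f := fun t x => jj p U t x * (2 * x)) (H.i_jw hab hB)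
      (H.cj.mul (by fun_prop)) fun t _ x => ?_
    rw [abs_mul, abs_of_nonneg (H.j_nn t x)]
    refine mul_le_mul_of_nonneg_left ?_ (H.j_nn t x)
    rw [abs_le]; constructor <;> nlinarith [sq_nonneg (x - 1), sq_nonneg (x + 1)]
  have h := (H.m_flux hab hB).weight (w := fun x => 2 * x) (w1 := fun _ => 2) (w2 := fun _ => 0)
    (D := 2) H.cj (H.i_rho hB) (H.rU 0 a).sq (H.rU 0 b).sq d1
    (fun x => hasDerivAt_const _ _) continuous_const (by norm_num)
    (fun x => by
      rw [abs_le]; constructor <;> nlinarith [sq_nonneg (x - 1), sq_nonneg (x + 1), sq_nonneg x])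
    (fun x => by simp)
    (fun x => by simp) iJ
  simp only [mul_zero, add_zero, neg_mul, integral_neg, prim_two] at h
  obtain ⟨f1, f2⟩ := slab_fubini hab (g := fun t x => jj p U t x * (2 * x)) iJ
  refine ⟨f1, ?_⟩
  unfold SS
  rw [h, f2]

/-- the quadratic moment expansion -/
lemma mom_exp (H : Sol p U F F1 F2) (t c d : ℝ) :
    ∫ x, (c * x - d) ^ 2 * U 0 t x ^ 2
      = c ^ 2 * SS U t - 2 * c * d * PP U t + d ^ 2 * ∫ x, U 0 t x ^ 2 := by
  have r0 := (H.rU 0 t).sq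
  have i1 : Integrable (fun x => U 0 t x ^ 2 * x) :=
    r0.mulX.integrable.congr (Eventually.of_forall fun x => by simp only; ring)
  have i2 : Integrable (fun x => U 0 t x ^ 2 * x ^ 2) :=
    r0.mulX.mulX.integrable.congr (Eventually.of_forall fun x => by simp only; ring)
  unfold SS PP
  have := integral_lin3 (f := fun x => c ^ 2 * (U 0 t x ^ 2 * x ^ 2)) (c := - (2 * c * d))
    (d := d ^ 2) (i2.const_mul (c ^ 2)) i1 r0.integrable
  rw [integral_const_mul] at this
  rw [sub_eq_add_neg, ← neg_mul, ← this]
  congr 1; funext x; ring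

set_option maxHeartbeats 1000000 in
theorem final (H : Sol p U F F1 F2) (hM : 0 < ∫ x, U 0 0 x ^ 2) (x0 : ℝ → ℝ) (C : ℝ)
    (hC : ∀ t, ∫ x, (x - x0 t) ^ 2 * U 0 t x ^ 2 ≤ C) : False := by
  have hp := H.hp1
  have hC0 : 0 ≤ C := le_trans (integral_nonneg fun x => by positivity) (hC 0)
  have hMc := H.mass_const
  have hEc := H.energy_const
  set M := ∫ x, U 0 0 x ^ 2 with hMdef
  set E := ∫ x, ee p U 0 x with hEdef
  have hE0 : 0 ≤ E := integral_nonneg fun x => H.e_nn 0 x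
  obtain ⟨δ, hδ, hBδ⟩ := H.b_lower hM hC0
  obtain ⟨Λ, hΛ, hbΛ⟩ := H.lam_glob
  have hBt : ∀ t, δ ≤ ∫ x, bb p U t x := fun t => hBδ t (x0 t) (hMc t) (hC t)
  -- variance bounds
  have V0 : ∀ t, 0 ≤ M * SS U t - PP U t ^ 2 := by
    intro t
    have h := H.mom_exp t M (PP U t)
    have h0 : 0 ≤ ∫ x, (M * x - PP U t) ^ 2 * U 0 t x ^ 2 :=
      integral_nonneg fun x => by positivity
    rw [h, hMc t] at h0
    have : 0 ≤ M * (M * SS U t - PP U t ^ 2) := by linarith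
    exact nonneg_of_mul_nonneg_right this hM
  have V1 : ∀ t, M * SS U t - PP U t ^ 2 ≤ M * C := by
    intro t
    have h := H.mom_exp t 1 (x0 t)
    have h1 := hC t
    simp only [one_mul] at h
    rw [h, hMc t] at h1
    nlinarith [sq_nonneg (PP U t - x0 t * M)]
  -- growth of the difference of centers
  set δ' := (p - 1) ^ 2 / (2 * (p + 1) ^ 2) * δ ^ 2 with hδ'
  have hδ'p : 0 < δ' := by
    have : 0 < p - 1 := by linarith
    have : 0 < p + 1 := by linarith
    positivity
  set Dd : ℝ → ℝ := fun t => PP U t * E - M * QQ p U t with hDd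
  have growth : ∀ T, 0 ≤ T → Dd 0 + δ' * T ≤ Dd T := by
    intro T hT
    obtain ⟨iP, eP⟩ := H.P_ev hT
    obtain ⟨iQ, eQ⟩ := H.Q_ev hT
    have e1 : Dd T - Dd 0
        = ∫ t in (0:ℝ)..T, (M * (∫ x, KK U F F1 t x) - E * ∫ x, jj p U t x) := by
      rw [intervalIntegral.integral_sub (iQ.const_mul _) (iP.const_mul _),
        intervalIntegral.integral_const_mul, intervalIntegral.integral_const_mul]
      simp only [hDd]
      linear_combination E * eP - M * eQ
    have e2 : ∫ _ in (0:ℝ)..T, δ'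
        ≤ ∫ t in (0:ℝ)..T, (M * (∫ x, KK U F F1 t x) - E * ∫ x, jj p U t x) := by
      refine intervalIntegral.integral_mono_on hT intervalIntegrable_const
        ((iQ.const_mul _).sub (iP.const_mul _)) fun t _ => ?_
      have h := H.key_ineq t
      rw [hMc t, hEc t] at h
      refine le_trans ?_ h
      simp only [hδ']
      have := hBt t
      gcongr
    rw [intervalIntegral.integral_const, smul_eq_mul] at e2
    linarith
  -- bound on the mass flux
  set Jm := (6 + 2 * p) * E with hJm
  have hJm0 : 0 ≤ Jm := by have : 0 < 6 + 2 * p := by linarith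
                           positivity
  have hJ : ∀ t, ∫ x, jj p U t x ≤ Jm := by
    intro t
    rw [H.J_eq, hJm, ← hEc t, H.E_eq]
    have hA0 : 0 ≤ ∫ x, U 1 t x ^ 2 := integral_nonneg fun x => sq_nonneg _
    have hB0 : 0 ≤ ∫ x, bb p U t x := integral_nonneg fun x => H.b_nn t x
    have hq : 0 ≤ (∫ x, bb p U t x) / (p + 1) := div_nonneg hB0 (by linarith)
    have : 2 * p / (p + 1) * (∫ x, bb p U t x) = 2 * p * ((∫ x, bb p U t x) / (p + 1)) := by ring
    rw [this]
    nlinarith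
  have hJ0 : ∀ t, 0 ≤ ∫ x, jj p U t x := fun t => integral_nonneg fun x => H.j_nn t x
  have lip : ∀ s t, s ≤ t → 0 ≤ PP U s - PP U t ∧ PP U s - PP U t ≤ Jm * (t - s) := by
    intro s t hst
    obtain ⟨iP, eP⟩ := H.P_ev hst
    have : PP U s - PP U t = ∫ r in s..t, ∫ x, jj p U r x := by linarith
    rw [this]
    refine ⟨intervalIntegral.integral_nonneg hst fun r _ => hJ0 r, ?_⟩
    have := intervalIntegral.integral_mono_on hst iP intervalIntegrable_const fun r _ => hJ r
    rw [intervalIntegral.integral_const, smul_eq_mul] at this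
    linarith
  -- pointwise-in-time lower bound
  set c := (2 * p - 6) / (p + 1) with hc
  set R := 2 * |c| * (Λ / 2 * (M + M * (M * C))) with hR
  have ptw : ∀ t, 12 * Dd t - R
      ≤ - M * (∫ x, jj p U t x * (2 * x)) + 2 * PP U t * ∫ x, jj p U t x := by
    intro t
    have rr := (H.rU 0 t).sq
    have ie : Integrable (fun x => ee p U t x * x) :=
      (H.re t).mulX.integrable.congr (Eventually.of_forall fun x => by simp only; ring)
    have ib : Integrable (fun x => bb p U t x * x) :=
      (H.rb t).mulX.integrable.congr (Eventually.of_forall fun x => by simp only; ring)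
    have pj : ∀ x, jj p U t x = 6 * ee p U t x + c * bb p U t x := by
      intro x
      have : p + 1 ≠ 0 := by linarith
      simp only [jj, ee, hc]; field_simp; ring
    have xj : ∫ x, jj p U t x * (2 * x) = 12 * QQ p U t + 2 * c * ∫ x, bb p U t x * x := by
      unfold QQ
      rw [← integral_const_mul, ← integral_const_mul,
        ← integral_add (ie.const_mul _) (ib.const_mul _)]
      congr 1; funext x; rw [pj]; ring
    have J' : ∫ x, jj p U t x = 6 * E + c * ∫ x, bb p U t x := by
      rw [← hEc t, ← integral_const_mul, ← integral_const_mul,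
        ← integral_add ((H.re t).integrable.const_mul _) ((H.rb t).integrable.const_mul _)]
      congr 1; funext x; rw [pj]
    have err : |PP U t * (∫ x, bb p U t x) - M * ∫ x, bb p U t x * x|
        ≤ Λ / 2 * (M + M * (M * C)) := by
      rw [← integral_const_mul, ← integral_const_mul,
        ← integral_sub ((H.rb t).integrable.const_mul _) (ib.const_mul _)]
      have iq : Integrable (fun x => (M * x - PP U t) ^ 2 * U 0 t x ^ 2) := by
        refine (((rr.mulX.mulX.const_mul (M ^ 2)).add ((rr.mulX).const_mul (-2 * M * PP U t))).add
          (rr.const_mul (PP U t ^ 2))).integrable.congr (Eventually.of_forall fun x => ?_)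
        simp only; ring
      have h1 : ‖∫ x, (PP U t * bb p U t x - M * (bb p U t x * x))‖
          ≤ ∫ x, Λ / 2 * (U 0 t x ^ 2 + (M * x - PP U t) ^ 2 * U 0 t x ^ 2) := by
        refine norm_integral_le_of_norm_le ((rr.integrable.add iq).const_mul _)
          (Eventually.of_forall fun x => ?_)
        have hb := hbΛ t x
        have hb0 := H.b_nn t x
        have e : PP U t * bb p U t x - M * (bb p U t x * x)
            = (PP U t - M * x) * bb p U t x := by ring
        rw [Real.norm_eq_abs, e, abs_mul, abs_of_nonneg hb0]
        have ha : |PP U t - M * x| ≤ 1 / 2 * (1 + (M * x - PP U t) ^ 2) := by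
          rw [abs_le]; constructor <;>
            nlinarith [sq_nonneg (M * x - PP U t - 1), sq_nonneg (M * x - PP U t + 1)]
        calc _ ≤ 1 / 2 * (1 + (M * x - PP U t) ^ 2) * (Λ * U 0 t x ^ 2) := by gcongr
          _ = _ := by ring
      rw [Real.norm_eq_abs] at h1
      refine h1.trans ?_
      rw [integral_const_mul, integral_add rr.integrable iq, H.mom_exp, hMc t]
      have := V1 t
      gcongr
      nlinarith
    have e3 : - M * (∫ x, jj p U t x * (2 * x)) + 2 * PP U t * ∫ x, jj p U t x
        = 12 * Dd t + 2 * c * (PP U t * (∫ x, bb p U t x) - M * ∫ x, bb p U t x * x) := by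
      rw [xj, J']; simp only [hDd]; ring
    rw [e3]
    have h2 : |2 * c * (PP U t * (∫ x, bb p U t x) - M * ∫ x, bb p U t x * x)| ≤ R := by
      rw [abs_mul, abs_mul, show |(2:ℝ)| = 2 by norm_num, hR]
      gcongr
    linarith [(abs_le.mp h2).1]
  -- conclusion on a far unit interval
  have step : ∀ s, 0 ≤ s → 12 * (Dd 0 + δ' * s) - R - 2 * Jm ^ 2 ≤ M * C := by
    intro s hs
    have h01 : s ≤ s + 1 := by linarith
    obtain ⟨iP, eP⟩ := H.P_ev h01
    obtain ⟨iS, eS⟩ := H.S_ev h01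
    have e : (M * SS U (s + 1) - PP U (s + 1) ^ 2) - (M * SS U s - PP U s ^ 2)
        = ∫ t in s..(s+1), (- M * (∫ x, jj p U t x * (2 * x))
          + (PP U (s + 1) + PP U s) * ∫ x, jj p U t x) := by
      rw [intervalIntegral.integral_add (iS.const_mul _) (iP.const_mul _),
        intervalIntegral.integral_const_mul, intervalIntegral.integral_const_mul]
      linear_combination M * eS - (PP U (s + 1) + PP U s) * eP
    have hpt : ∀ t ∈ Set.Icc s (s + 1), 12 * (Dd 0 + δ' * s) - R - 2 * Jm ^ 2
        ≤ - M * (∫ x, jj p U t x * (2 * x))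
          + (PP U (s + 1) + PP U s) * ∫ x, jj p U t x := by
      intro t ht
      have g := growth t (hs.trans ht.1)
      have q := ptw t
      have l1 := lip s t ht.1
      have l2 := lip t (s + 1) ht.2
      have j0 := hJ0 t
      have j1 := hJ t
      have dm : δ' * s ≤ δ' * t := mul_le_mul_of_nonneg_left ht.1 hδ'p.le
      have b0 : Jm * (s + 1 - t) ≤ Jm * 1 :=
        mul_le_mul_of_nonneg_left (by linarith [ht.1]) hJm0
      have b1 : PP U t - PP U (s + 1) ≤ Jm := l2.2.trans (by linarith)
      generalize (∫ x, jj p U t x) = J at q j0 j1 ⊢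
      generalize (∫ x, jj p U t x * (2 * x)) = X at q ⊢
      have b3 : (2 * PP U t - PP U (s + 1) - PP U s) * J ≤ Jm * Jm := by
        calc _ ≤ Jm * J := by
              apply mul_le_mul_of_nonneg_right _ j0
              linarith [l1.1]
          _ ≤ Jm * Jm := mul_le_mul_of_nonneg_left j1 hJm0
      have b4 : (PP U (s + 1) + PP U s) * J
          = 2 * PP U t * J - (2 * PP U t - PP U (s + 1) - PP U s) * J := by ring
      have b5 : Jm * Jm = Jm ^ 2 := by ring
      have b6 := sq_nonneg Jm
      rw [b4]
      linarith
    have m := intervalIntegral.integral_mono_on h01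
      (intervalIntegrable_const (c := 12 * (Dd 0 + δ' * s) - R - 2 * Jm ^ 2) (μ := volume))
      ((iS.const_mul (-M)).add (iP.const_mul (PP U (s + 1) + PP U s))) hpt
    rw [intervalIntegral.integral_const, smul_eq_mul] at m
    have v1 := V1 (s + 1)
    have v0 := V0 s
    rw [← e] at m
    linarith
  set s := |(M * C + R + 2 * Jm ^ 2 - 12 * Dd 0 + 1)| / (12 * δ') with hs
  have hs0 : 0 ≤ s := by positivity
  have h := step s hs0
  have h2 : 12 * (δ' * s) = |(M * C + R + 2 * Jm ^ 2 - 12 * Dd 0 + 1)| := by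
    rw [hs]; field_simp
  have h3 := le_abs_self (M * C + R + 2 * Jm ^ 2 - 12 * Dd 0 + 1)
  linarith

end Sol
end GKdV

theorem second_moment_dispersion
    (p : ℝ) (hp : Real.sqrt 3 ≤ p)
    (u : ℝ → ℝ → ℝ)
    (hsmooth : ContDiff ℝ (⊤ : ℕ∞) (fun q : ℝ × ℝ => u q.1 q.2))
    (hschwartz : ∀ t : ℝ, ∃ f : SchwartzMap ℝ ℝ, ∀ x : ℝ, u t x = f x)
    (hpde : ∀ t x : ℝ,
      deriv (fun s => u s x) t + iteratedDeriv 3 (fun y => u t y) x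
        = deriv (fun y => |u t y| ^ (p - 1) * u t y) x)
    (hnz : u ≠ 0)
    (x₀ : ℝ → ℝ) :
    ∀ C : ℝ, ∃ t : ℝ, C < ∫ x : ℝ, (x - x₀ t) ^ 2 * (u t x) ^ 2 := by
  obtain ⟨U, F, F1, F2, hU, H⟩ := GKdV.exists_sol p hp u hsmooth hschwartz hpde
  intro C
  by_contra hcon
  push Not at hcon
  rw [← hU] at hcon hnz
  refine H.final ?_ x₀ C hcon
  obtain ⟨t, ht⟩ := Function.ne_iff.mp hnz
  obtain ⟨x, hx⟩ := Function.ne_iff.mp ht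
  rw [← H.mass_const t]
  refine (integral_pos_iff_support_of_nonneg (fun y => sq_nonneg _)
    (H.rU 0 t).sq.integrable).mpr ?_
  apply IsOpen.measure_pos
  · exact (((H.rU 0 t).sq.c).isOpen_preimage _ isOpen_compl_singleton)
  · exact ⟨x, pow_ne_zero 2 hx⟩
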